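/- arXiv:1102.5072 — 2 statements merged into one kernel-verified Lean document; each statement's English description precedes it below -/
import Mathlib

section
/- Let C be a rational plane curve of even degree d = 2c over an algebraically closed field, parameterized birationally and without base points by three forms of degree d. If p is a point on C and q is a singularity of multiplicity c infinitely near to p, then the multiplicity of C at p is also equal to c; moreover in this situation both column degrees d₁, d₂ of the homogeneous Hilbert–Burch matrix equal c. -/
set_option maxHeartbeats 1000000
set_option synthInstance.maxHeartbeats 1000000

open MvPolynomial

/-- The height of an ideal: the infimum of the heights of the primes containing it. -/
noncomputable def idealHeight {R : Type*} [CommRing R] (I : Ideal R) : ℕ∞ :=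
  ⨅ (P : PrimeSpectrum R) (_ : I ≤ P.asIdeal), Order.height P

/-- `e` is the Hilbert–Samuel multiplicity of the ideal `J` on the (one-dimensional) ring `R`,
characterized as the limit of `λ(R/Jⁿ)/n`; lengths are expressed as Krull dimensions of
submodule lattices. -/
def IsHSMultOfDimOne (R : Type*) [CommRing R] (J : Ideal R) (e : ℕ) : Prop :=
  ∃ len : ℕ → ℕ,
    (∀ n : ℕ, Order.krullDim (Submodule R (R ⧸ J ^ n)) = ((len n : ℕ∞) : WithBot ℕ∞)) ∧
    Filter.Tendsto (fun n : ℕ => (len n : ℝ) / (n : ℝ)) Filter.atTop (nhds (e : ℝ))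

/-- The ideal of nonunits of a subring (the maximal ideal, when the subring is local). -/
def nuIdeal {K : Type*} [CommRing K] (O : Subring K) : Ideal O :=
  Ideal.span {x : O | ¬IsUnit x}

/-- The set `m/f = {x ∈ K : f·x ∈ m}` used to form the blow-up ring `O[m/f]`. -/
def blowSet {K : Type*} [CommRing K] (O : Subring K) (f : O) : Set K :=
  {x : K | ∃ m : O, m ∈ nuIdeal O ∧ (f : K) * x = (m : K)}

/-- The blow-up ring `O[m/f]`. -/
def blowRing {K : Type*} [CommRing K] (O : Subring K) (f : O) : Subring K :=
  Subring.closure ((O : Set K) ∪ blowSet O f)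

/-- The localization of `O'` at `N`, as a subset of the ambient total quotient ring. -/
def locSet {K : Type*} [CommRing K] (O' : Subring K) (N : Ideal O') : Set K :=
  {x : K | ∃ a s : O', s ∉ N ∧ (s : K) * x = (a : K)}

/-- `O'` is one of the (local rings of the) points in the first neighborhood of the point with
local ring `O`: it is a localization, at a maximal ideal, of `O[m/f]` where `f ∈ m` satisfies
`m^{r+1} = f·m^r` for some `r ≥ 0`. -/
def IsFirstNbhdOf {K : Type*} [CommRing K] (O O' : Subring K) : Prop :=
  ∃ f : O, ¬IsUnit f ∧
    (∃ r : ℕ, nuIdeal O ^ (r + 1) = Ideal.span {f} * nuIdeal O ^ r) ∧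
    ∃ N : Ideal (blowRing O f), N.IsMaximal ∧
      O' = Subring.closure (locSet (blowRing O f) N)

/-- `O'` is (the local ring of) a point infinitely near to the point with local ring `O`:
it is obtained from `O` by finitely many (at least one) blow-up steps. -/
def IsInfinitelyNearTo {K : Type*} [CommRing K] (O O' : Subring K) : Prop :=
  Relation.TransGen IsFirstNbhdOf O O'

/-- The homogeneous coordinate ring `k[g₁,g₂,g₃]` of the parameterized plane curve. -/
noncomputable def coneRing {k : Type*} [Field k] (g : Fin 3 → MvPolynomial (Fin 2) k) :
    Subalgebra k (MvPolynomial (Fin 2) k) :=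
  Algebra.adjoin k (Set.range g)

/-- The generators `g i`, as elements of `k[g₁,g₂,g₃]`. -/
noncomputable def coneGen {k : Type*} [Field k] (g : Fin 3 → MvPolynomial (Fin 2) k)
    (i : Fin 3) : coneRing g :=
  ⟨g i, Algebra.subset_adjoin ⟨i, rfl⟩⟩

/-- The homogeneous prime of `k[g₁,g₂,g₃]` corresponding to the point `p = [a₁:a₂:a₃]` of the
curve. -/
noncomputable def pointIdeal {k : Type*} [Field k] (g : Fin 3 → MvPolynomial (Fin 2) k)
    (a : Fin 3 → k) : Ideal (coneRing g) :=
  Ideal.span {x : coneRing g | ∃ i j : Fin 3, x = a i • coneGen g j - a j • coneGen g i}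

/-- The local ring `O_{C,p}` of the curve `C` at the point `p = [a₁:a₂:a₃]`, realized as the
subring of the total quotient ring of `k[g₁,g₂,g₃]` consisting of fractions `f/s` with `f`, `s`
homogeneous of the same degree and `s ∉ 𝔭`. -/
noncomputable def curveLocalRing {k : Type*} [Field k] (g : Fin 3 → MvPolynomial (Fin 2) k)
    (a : Fin 3 → k) : Subring (FractionRing (coneRing g)) :=
  Subring.closure
    {x : FractionRing (coneRing g) |
      ∃ f s : coneRing g, ∃ e : ℕ,
        ((f : MvPolynomial (Fin 2) k).IsHomogeneous e) ∧
        ((s : MvPolynomial (Fin 2) k).IsHomogeneous e) ∧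
        s ∉ pointIdeal g a ∧
        algebraMap (coneRing g) (FractionRing (coneRing g)) s * x =
          algebraMap (coneRing g) (FractionRing (coneRing g)) f}

/-- `[a₁:a₂:a₃]` lies on the curve parameterized by `g₁, g₂, g₃`. -/
def onCurve {k : Type*} [Field k] (g : Fin 3 → MvPolynomial (Fin 2) k) (a : Fin 3 → k) : Prop :=
  ∃ q : Fin 2 → k, q ≠ 0 ∧ ∃ t : k, t ≠ 0 ∧ ∀ i, a i = t * eval q (g i)

/-!
The forms vanishing at `p` are spanned by the entries of the syzygy `a × g`. In an affine chart of
the projective line write `a × g = H w` with the entries of `w` coprime. All local rings involved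
are orders `O` in the field `k(τ)` with `O[τ]` finite over `O`, so an element of `O` has the same
colength in `O` as in `O[τ]`, where colengths are degrees of polynomials. Hence `deg H` is the
multiplicity `m` of `C` at `p`, the multiplicity `c` of an infinitely near point is at most `m`, and
a line through `p` in its tangent direction, cut out by `b ⬝ (a × g) = H (b ⬝ w)`, shows
`c + m ≤ d`; for `d = 2c` this forces `m = c`. Finally, `w` is homogenized to a syzygy of `g` of
degree `d - m` without common zeros. If `m > d₁`, then `d - m < d₂`, so this syzygy is a multiple of
the first column of `φ`, and coprimality gives `m = d₂`.
-/

/-! ### Lengths and orders of vanishing -/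

section RelativeOrder

open Pointwise

/-- The order of vanishing of `x : S` measured in `R`-length: the length of `S ⧸ xS` as an
`R`-module. For `S = R` this is `Ring.ord R x`. -/
noncomputable def relativeOrd (R : Type*) {S : Type*} [CommRing R] [CommRing S] [Algebra R S]
    (x : S) : ℕ∞ :=
  Module.length R (S ⧸ Ideal.span {x})

variable {R S : Type*} [CommRing R] [CommRing S] [Algebra R S]

lemma relativeOrd_of_isUnit {x : S} (hx : IsUnit x) : relativeOrd R x = 0 := by
  rw [relativeOrd, Module.length_eq_zero_iff, Ideal.span_singleton_eq_top.2 hx]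
  infer_instance

lemma relativeOrd_le_of_dvd {x y : S} (h : x ∣ y) : relativeOrd R x ≤ relativeOrd R y :=
  have hle := Ideal.span_singleton_le_span_singleton.2 h
  Module.length_le_of_surjective (Ideal.Quotient.factorₐ R hle).toLinearMap
    (Ideal.Quotient.factor_surjective hle)

lemma relativeOrd_mul (x : S) {y : S} (hy : y ∈ nonZeroDivisors S) :
    relativeOrd R (x * y) = relativeOrd R x + relativeOrd R y := by
  have hspan : y • Ideal.span {x} = Ideal.span {x * y} := by
    rw [Ideal.span, Submodule.smul_span, Set.smul_set_singleton, smul_eq_mul, mul_comm]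
  rw [relativeOrd, ← hspan]
  exact Module.length_eq_add_of_exact
    ((Ideal.mulQuot y (Ideal.span {x})).restrictScalars R)
    ((Ideal.quotOfMul y (Ideal.span {x})).restrictScalars R) (Ideal.mulQuot_injective _ hy)
    (Ideal.quotOfMul_surjective _) (Ideal.exact_mulQuot_quotOfMul _)

lemma relativeOrd_le_restrictScalars (k : Type*) [CommRing k] [Algebra k R] [Algebra k S]
    [IsScalarTower k R S] (x : S) : relativeOrd R x ≤ relativeOrd k x := by
  have h := Submodule.length_le_length_restrictScalars k (⊤ : Submodule R (S ⧸ Ideal.span {x}))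
  rwa [Submodule.restrictScalars_top, Module.length_top, Module.length_top] at h

lemma ord_le_relativeOrd (x : S) : Ring.ord S x ≤ relativeOrd R x :=
  relativeOrd_le_restrictScalars R x

lemma length_quotient_span_eq_ord_add [FaithfulSMul R S] (x : R) :
    Module.length R (S ⧸ Submodule.span R {algebraMap R S x}) =
      Ring.ord R x + Module.length R (S ⧸ (1 : Submodule R S)) := by
  have hle : Submodule.span R {algebraMap R S x} ≤ 1 := by
    rw [Submodule.span_singleton_le_iff_mem]
    exact Submodule.algebraMap_mem x
  have hcomap : Submodule.comap (Algebra.linearMap R S) (Submodule.span R {algebraMap R S x}) =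
      Ideal.span {x} := by
    ext a
    simp only [Submodule.mem_comap, Algebra.linearMap_apply, Ideal.mem_span_singleton',
      Submodule.mem_span_singleton, ← algebraMap_smul S (_ : R) (algebraMap R S x), smul_eq_mul,
      ← map_mul, (FaithfulSMul.algebraMap_injective R S).eq_iff]
  refine Module.length_eq_add_of_exact
    (Submodule.mapQ (Ideal.span {x}) _ (Algebra.linearMap R S) hcomap.ge)
    (Submodule.factor hle) ?_ (Submodule.factor_surjective hle) ?_
  · rw [← LinearMap.ker_eq_bot, Submodule.ker_mapQ, hcomap, Submodule.mkQ_map_self]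
  · rw [LinearMap.exact_iff, Submodule.factor, Submodule.ker_mapQ, Submodule.range_mapQ,
      Submodule.comap_id, Submodule.one_eq_range]

lemma length_quotient_span_eq_relativeOrd_add {x : S} (hx : x ∈ nonZeroDivisors S) :
    Module.length R (S ⧸ Submodule.span R {x}) =
      Module.length R (S ⧸ (1 : Submodule R S)) + relativeOrd R x := by
  have hle : Submodule.span R {x} ≤ (Ideal.span {x}).restrictScalars R := by
    rw [Submodule.span_singleton_le_iff_mem]
    exact Ideal.mem_span_singleton_self x
  have hcomap : Submodule.comap (LinearMap.mulRight R x) (Submodule.span R {x}) = 1 := by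
    ext a
    simp only [Submodule.mem_comap, LinearMap.mulRight_apply, Submodule.mem_span_singleton,
      Algebra.smul_def, mul_cancel_right_mem_nonZeroDivisors hx, Submodule.mem_one]
  refine Module.length_eq_add_of_exact
    (Submodule.mapQ 1 (Submodule.span R {x}) (LinearMap.mulRight R x) hcomap.ge)
    ((Submodule.Quotient.restrictScalarsEquiv R (Ideal.span {x})).toLinearMap ∘ₗ
      Submodule.factor hle) ?_ ?_ ?_
  · rw [← LinearMap.ker_eq_bot, Submodule.ker_mapQ, hcomap, Submodule.mkQ_map_self]
  · exact (Submodule.Quotient.restrictScalarsEquiv R (Ideal.span {x})).surjective.comp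
      (Submodule.factor_surjective hle)
  · have hrange : LinearMap.range (LinearMap.mulRight R x) =
        (Ideal.span {x}).restrictScalars R := by
      ext a
      simp [Ideal.mem_span_singleton']
    rw [LinearMap.exact_iff, LinearMap.ker_comp, LinearEquiv.ker, ← LinearMap.ker,
      Submodule.factor, Submodule.ker_mapQ, Submodule.range_mapQ, Submodule.comap_id, hrange]

/-- Both `R ⧸ xR` and `S ⧸ xS` are complementary to `S ⧸ R` in `S ⧸ xR`. -/
lemma ord_eq_relativeOrd [FaithfulSMul R S] (hfin : Module.length R (S ⧸ (1 : Submodule R S)) ≠ ⊤)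
    {x : R} (hx : algebraMap R S x ∈ nonZeroDivisors S) :
    Ring.ord R x = relativeOrd R (algebraMap R S x) := by
  have h := length_quotient_span_eq_ord_add (S := S) x
  rw [length_quotient_span_eq_relativeOrd_add hx, add_comm] at h
  exact (ENat.add_left_injective_of_ne_top hfin h).symm

end RelativeOrder

section RationalOver

open scoped Polynomial

variable {k S : Type*} [Field k] [CommRing S] [Algebra k S]

/-- Every element of the `k`-algebra `S` is a rational function of `τ`. -/
def IsRationalOver (k : Type*) {S : Type*} [Field k] [CommRing S] [Algebra k S] (τ : S) : Prop :=
  ∀ s : S, ∃ P Q : k[X], Polynomial.aeval τ Q ≠ 0 ∧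
    Polynomial.aeval τ Q * s = Polynomial.aeval τ P

lemma sub_algebraMap_dvd_aeval_sub (τ : S) (P : k[X]) (α : k) :
    τ - algebraMap k S α ∣ Polynomial.aeval τ P - algebraMap k S (P.eval α) := by
  have h := map_dvd (Polynomial.aeval τ) (Polynomial.X_sub_C_dvd_sub_C_eval (a := α) (p := P))
  simpa only [map_sub, Polynomial.aeval_X, Polynomial.aeval_C] using h

lemma sub_algebraMap_dvd_aeval (τ : S) {P : k[X]} {α : k} (h : P.eval α = 0) :
    τ - algebraMap k S α ∣ Polynomial.aeval τ P := by
  simpa only [h, map_zero, sub_zero] using sub_algebraMap_dvd_aeval_sub τ P α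

lemma associated_prod_roots_aeval [IsAlgClosed k] (τ : S) {P : k[X]} (hP : P ≠ 0) :
    Associated (P.roots.map fun α => τ - algebraMap k S α).prod (Polynomial.aeval τ P) := by
  have hsplit := congrArg (Polynomial.aeval τ) (IsAlgClosed.splits P).eq_prod_roots
  rw [map_mul, Polynomial.aeval_C, map_multiset_prod, Multiset.map_map] at hsplit
  have hunit := ((Polynomial.leadingCoeff_ne_zero.2 hP).isUnit).map (algebraMap k S)
  rw [hsplit, associated_isUnit_mul_right_iff hunit]
  simp only [Function.comp_def, map_sub, Polynomial.aeval_X, Polynomial.aeval_C, Associated.refl]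

lemma sub_algebraMap_ne_zero_of_aeval_ne_zero {τ : S} {P : k[X]}
    (hP : Polynomial.aeval τ P ≠ 0) {α : k} (hα : α ∈ P.roots) : τ - algebraMap k S α ≠ 0 := by
  intro h
  have hdvd := sub_algebraMap_dvd_aeval τ (Polynomial.isRoot_of_mem_roots hα)
  exact hP (zero_dvd_iff.1 (h ▸ hdvd))

variable [IsDomain S]

lemma relativeOrd_prod_le {R : Type*} [CommRing R] [Algebra R S] (s : Multiset S)
    (h0 : ∀ x ∈ s, x ≠ 0) (h1 : ∀ x ∈ s, relativeOrd R x ≤ 1) :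
    relativeOrd R s.prod ≤ s.card := by
  induction s using Multiset.induction_on with
  | empty => simp [relativeOrd_of_isUnit isUnit_one]
  | cons x s ih =>
    have hs0 : s.prod ≠ 0 :=
      Multiset.prod_ne_zero fun h => h0 0 (Multiset.mem_cons_of_mem h) rfl
    rw [Multiset.prod_cons, relativeOrd_mul x (mem_nonZeroDivisors_of_ne_zero hs0),
      Multiset.card_cons, Nat.cast_succ, add_comm]
    exact add_le_add (ih (fun y hy => h0 y (Multiset.mem_cons_of_mem hy))
      fun y hy => h1 y (Multiset.mem_cons_of_mem hy)) (h1 x (Multiset.mem_cons_self x s))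

lemma card_le_ord_prod (s : Multiset S) (h0 : ∀ x ∈ s, x ≠ 0) (hu : ∀ x ∈ s, ¬IsUnit x) :
    s.card ≤ Ring.ord S s.prod := by
  induction s using Multiset.induction_on with
  | empty => simp
  | cons x s ih =>
    have hx : 1 ≤ Ring.ord S x := by
      have : Nontrivial (S ⧸ Ideal.span {x}) := Ideal.Quotient.nontrivial_iff.2
        (Ideal.span_singleton_eq_top.not.2 (hu x (Multiset.mem_cons_self x s)))
      exact Order.one_le_iff_pos.2 Module.length_pos
    have hs0 : s.prod ≠ 0 :=
      Multiset.prod_ne_zero fun h => h0 0 (Multiset.mem_cons_of_mem h) rfl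
    rw [Multiset.prod_cons, Ring.ord_mul S (mem_nonZeroDivisors_of_ne_zero hs0),
      Multiset.card_cons, Nat.cast_succ, add_comm]
    exact add_le_add hx (ih (fun y hy => h0 y (Multiset.mem_cons_of_mem hy))
      fun y hy => hu y (Multiset.mem_cons_of_mem hy))

variable {τ : S}

lemma natDegree_le_ord_aeval [IsAlgClosed k] {P : k[X]} (hP : Polynomial.aeval τ P ≠ 0)
    (hroots : ∀ α, P.eval α = 0 → ¬IsUnit (τ - algebraMap k S α)) :
    P.natDegree ≤ Ring.ord S (Polynomial.aeval τ P) := by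
  have hP0 : P ≠ 0 := fun h => hP (by rw [h, map_zero])
  rw [← Ring.ord_eq_of_associated (associated_prod_roots_aeval τ hP0),
    (IsAlgClosed.splits P).natDegree_eq_card_roots,
    ← Multiset.card_map fun α => τ - algebraMap k S α]
  refine card_le_ord_prod _ ?_ ?_ <;>
    rw [Multiset.forall_mem_map_iff]
  · exact fun α hα => sub_algebraMap_ne_zero_of_aeval_ne_zero hP hα
  · exact fun α hα => hroots α (Polynomial.isRoot_of_mem_roots hα)

namespace IsRationalOver

/-- In lowest terms, by Bézout, the denominator becomes invertible. -/
lemma exists_isUnit_mul_eq (h : IsRationalOver k τ) (s : S) :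
    ∃ P Q : k[X], IsUnit (Polynomial.aeval τ Q) ∧
      Polynomial.aeval τ Q * s = Polynomial.aeval τ P := by
  obtain ⟨P, Q, hQ, hs⟩ := h s
  have hQ0 : Q ≠ 0 := fun h0 => hQ (by rw [h0, map_zero])
  obtain ⟨Q', P', G, hrel, rfl, rfl⟩ :=
    UniqueFactorizationMonoid.exists_reduced_factors Q hQ0 P
  rw [map_mul] at hQ
  have hs' : Polynomial.aeval τ Q' * s = Polynomial.aeval τ P' := by
    refine mul_left_cancel₀ (left_ne_zero_of_mul hQ) ?_
    rw [← mul_assoc, ← map_mul, hs, map_mul]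
  obtain ⟨A, B, hAB⟩ := hrel.isCoprime
  refine ⟨P', Q', IsUnit.of_mul_eq_one (Polynomial.aeval τ A + Polynomial.aeval τ B * s) ?_, hs'⟩
  have hAB' := congrArg (Polynomial.aeval τ) hAB
  simp only [map_add, map_mul, map_one] at hAB'
  linear_combination hAB' + Polynomial.aeval τ B * hs'

lemma exists_associated_aeval (h : IsRationalOver k τ) (s : S) :
    ∃ P : k[X], Associated s (Polynomial.aeval τ P) := by
  obtain ⟨P, Q, hQ, hs⟩ := h.exists_isUnit_mul_eq s
  exact ⟨P, hs ▸ (associated_isUnit_mul_right_iff hQ).2 (Associated.refl s)⟩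

lemma relativeOrd_sub_algebraMap_le_one (h : IsRationalOver k τ) (α : k) :
    relativeOrd k (τ - algebraMap k S α) ≤ 1 := by
  let π := Ideal.Quotient.mk (Ideal.span {τ - algebraMap k S α})
  have heval (F : k[X]) : π (Polynomial.aeval τ F) = algebraMap k _ (F.eval α) :=
    Ideal.Quotient.eq.2 (Ideal.mem_span_singleton.2 (sub_algebraMap_dvd_aeval_sub τ F α))
  have hsurj : Function.Surjective
      (Algebra.linearMap k (S ⧸ Ideal.span {τ - algebraMap k S α})) := by
    intro s
    obtain ⟨s, rfl⟩ := Ideal.Quotient.mk_surjective s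
    obtain ⟨P, Q, hQ, hs⟩ := h.exists_isUnit_mul_eq s
    have hunit := hQ.map π
    have hs' := congrArg π hs
    rw [map_mul] at hs'
    rw [heval] at hunit hs'
    rw [heval] at hs'
    refine ⟨P.eval α / Q.eval α, hunit.mul_left_cancel ?_⟩
    rcases eq_or_ne (Q.eval α) 0 with hQ0 | hQ0
    · rw [hQ0, map_zero, isUnit_zero_iff] at hunit
      exact (subsingleton_of_zero_eq_one hunit).elim _ _
    · rw [hs', Algebra.linearMap_apply, ← map_mul, mul_div_cancel₀ _ hQ0]
  calc relativeOrd k (τ - algebraMap k S α) ≤ Module.length k k :=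
        Module.length_le_of_surjective _ hsurj
    _ = 1 := Module.length_eq_one k k

lemma relativeOrd_aeval_le [IsAlgClosed k] (h : IsRationalOver k τ) {P : k[X]}
    (hP : Polynomial.aeval τ P ≠ 0) : relativeOrd k (Polynomial.aeval τ P) ≤ P.natDegree := by
  have hP0 : P ≠ 0 := fun h => hP (by rw [h, map_zero])
  refine (relativeOrd_le_of_dvd (associated_prod_roots_aeval τ hP0).dvd').trans ?_
  rw [(IsAlgClosed.splits P).natDegree_eq_card_roots,
    ← Multiset.card_map fun α => τ - algebraMap k S α]
  refine relativeOrd_prod_le _ ?_ ?_ <;>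
    rw [Multiset.forall_mem_map_iff]
  · exact fun α hα => sub_algebraMap_ne_zero_of_aeval_ne_zero hP hα
  · exact fun α _ => h.relativeOrd_sub_algebraMap_le_one α

lemma relativeOrd_ne_top [IsAlgClosed k] (h : IsRationalOver k τ) {s : S} (hs : s ≠ 0) :
    relativeOrd k s ≠ ⊤ := by
  obtain ⟨P, hP⟩ := h.exists_associated_aeval s
  exact ne_top_of_le_ne_top (ENat.natCast_ne_top _)
    ((relativeOrd_le_of_dvd hP.dvd).trans (h.relativeOrd_aeval_le (hP.ne_zero_iff.1 hs)))

lemma exists_sub_algebraMap_mem [IsAlgClosed k] (h : IsRationalOver k τ)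
    {M : Ideal S} [M.IsPrime] (hM : M ≠ ⊥) : ∃ α, τ - algebraMap k S α ∈ M := by
  obtain ⟨s, hsM, hs0⟩ := Submodule.exists_mem_ne_zero_of_ne_bot hM
  obtain ⟨P, hP⟩ := h.exists_associated_aeval s
  have hP0 : P ≠ 0 := by
    rintro rfl
    exact hP.ne_zero_iff.1 hs0 (map_zero _)
  have hmem := M.mem_of_dvd (hP.trans (associated_prod_roots_aeval τ hP0).symm).dvd hsM
  obtain ⟨x, hx, hxM⟩ := (Ideal.IsPrime.multiset_prod_mem_iff_exists_mem ‹_› _).1 hmem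
  obtain ⟨α, -, rfl⟩ := Multiset.mem_map.1 hx
  exact ⟨α, hxM⟩

end IsRationalOver

end RationalOver

/-! ### Hilbert–Samuel multiplicity -/

section HilbertSamuel

variable {R : Type*} [CommRing R]

lemma length_quotient_le_length_quotient {I J : Ideal R} (h : I ≤ J) :
    Module.length R (R ⧸ J) ≤ Module.length R (R ⧸ I) :=
  Module.length_le_of_surjective (Submodule.factor h) (Submodule.factor_surjective h)

variable {J : Ideal R} {x : R} {c : ℕ}

lemma length_quotient_pow_le (hx : x ∈ J) (hx0 : x ∈ nonZeroDivisors R) (n : ℕ) :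
    Module.length R (R ⧸ J ^ n) ≤ n * Ring.ord R x := by
  calc Module.length R (R ⧸ J ^ n) ≤ Ring.ord R (x ^ n) :=
        length_quotient_le_length_quotient
          ((Ideal.span_singleton_le_iff_mem _).2 (Ideal.pow_mem_pow hx n))
    _ = n * Ring.ord R x := by rw [Ring.ord_pow hx0, nsmul_eq_mul]

lemma pow_add_eq_span_pow_mul {r : ℕ} (hred : J ^ (r + 1) = Ideal.span {x} * J ^ r) (n : ℕ) :
    J ^ (r + n) = Ideal.span {x ^ n} * J ^ r := by
  induction n with
  | zero => simp
  | succ n ih =>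
    rw [← add_assoc, pow_succ, ih, mul_assoc, ← pow_succ, hred, ← mul_assoc,
      Ideal.span_singleton_mul_span_singleton, pow_succ]

lemma mul_ord_le_length_quotient_pow (hx0 : x ∈ nonZeroDivisors R) {r : ℕ}
    (hred : J ^ (r + 1) = Ideal.span {x} * J ^ r) (n : ℕ) :
    n * Ring.ord R x ≤ Module.length R (R ⧸ J ^ (r + n)) := by
  calc n * Ring.ord R x = Ring.ord R (x ^ n) := by rw [Ring.ord_pow hx0, nsmul_eq_mul]
    _ ≤ Module.length R (R ⧸ J ^ (r + n)) :=
        length_quotient_le_length_quotient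
          (pow_add_eq_span_pow_mul hred n ▸ Ideal.mul_le_inf.trans inf_le_left)

lemma IsHSMultOfDimOne.le_of_ord_le (h : IsHSMultOfDimOne R J c) (hx : x ∈ J)
    (hx0 : x ∈ nonZeroDivisors R) {N : ℕ} (hN : Ring.ord R x ≤ N) : c ≤ N := by
  obtain ⟨len, hlen, hlim⟩ := h
  have hle (n : ℕ) : len n ≤ n * N := by
    have hlen' : Module.length R (R ⧸ J ^ n) = len n :=
      WithBot.coe_injective (by rw [Module.coe_length, hlen])
    exact_mod_cast hlen' ▸ (length_quotient_pow_le hx hx0 n).trans (mul_le_mul_right hN _)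
  refine Nat.cast_le.1 (le_of_tendsto hlim ?_)
  filter_upwards [Filter.eventually_gt_atTop 0] with n hn
  rw [div_le_iff₀ (Nat.cast_pos.2 hn), mul_comm]
  exact_mod_cast hle n

lemma tendsto_div_of_mul_le {u : ℕ → ℕ} {r : ℕ} (hup : ∀ n, u n ≤ n * c)
    (hlow : ∀ n, n * c ≤ u (r + n)) :
    Filter.Tendsto (fun n => (u n : ℝ) / n) Filter.atTop (nhds c) := by
  have hlim := (tendsto_const_div_atTop_nhds_zero_nat (r * c : ℝ)).const_sub (c : ℝ)
  rw [sub_zero] at hlim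
  refine tendsto_of_tendsto_of_tendsto_of_le_of_le' hlim tendsto_const_nhds ?_ ?_
  · filter_upwards [Filter.eventually_gt_atTop r] with n hn
    obtain ⟨m, rfl⟩ := Nat.exists_eq_add_of_le hn.le
    have hpos : (0 : ℝ) < (r + m : ℕ) := Nat.cast_pos.2 (by omega)
    have hm : ((m * c : ℕ) : ℝ) ≤ u (r + m) := Nat.cast_le.2 (hlow m)
    rw [le_div_iff₀ hpos, sub_mul, div_mul_cancel₀ _ hpos.ne']
    push_cast at hm ⊢
    linarith
  · filter_upwards [Filter.eventually_gt_atTop 0] with n hn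
    rw [div_le_iff₀ (Nat.cast_pos.2 hn), mul_comm]
    exact_mod_cast hup n

lemma IsHSMultOfDimOne.of_reduction (hx : x ∈ J) (hx0 : x ∈ nonZeroDivisors R) {r : ℕ}
    (hred : J ^ (r + 1) = Ideal.span {x} * J ^ r) (hc : Ring.ord R x = c) :
    IsHSMultOfDimOne R J c := by
  have hle (n : ℕ) : Module.length R (R ⧸ J ^ n) ≤ (n * c : ℕ) := by
    rw [Nat.cast_mul, ← hc]
    exact length_quotient_pow_le hx hx0 n
  have hcast (n : ℕ) : ((Module.length R (R ⧸ J ^ n)).toNat : ℕ∞) = Module.length R (R ⧸ J ^ n) :=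
    ENat.natCast_toNat (ne_top_of_le_ne_top (ENat.natCast_ne_top _) (hle n))
  refine ⟨fun n => (Module.length R (R ⧸ J ^ n)).toNat, fun n => ?_,
    tendsto_div_of_mul_le (r := r) (fun n => ENat.toNat_le_of_le_natCast (hle n)) fun n => ?_⟩
  · rw [hcast, Module.coe_length]
  · rw [← Nat.cast_le (α := ℕ∞), hcast, Nat.cast_mul, ← hc]
    exact mul_ord_le_length_quotient_pow hx0 hred n

end HilbertSamuel

/-! ### Blow-up rings -/

section BlowUp

variable {K : Type*} [Field K]

lemma nuIdeal_eq_maximalIdeal (O : Subring K) [IsLocalRing O] :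
    nuIdeal O = IsLocalRing.maximalIdeal O :=
  le_antisymm (Ideal.span_le.2 fun _ hx => hx) fun _ hx => Ideal.subset_span hx

lemma closure_locSet_eq (B : Subring K) (N : Ideal B) [hN : N.IsPrime] :
    Subring.closure (locSet B N) = (LocalSubring.ofPrime B N).toSubring := by
  refine le_antisymm (Subring.closure_le.2 ?_) fun x hx => Subring.subset_closure ?_
  · rintro x ⟨a, s, hs, hx⟩
    obtain ⟨u, hu⟩ := (IsLocalization.AtPrime.isUnit_to_map_iff
      (LocalSubring.ofPrime B N).toSubring N s).2 hs
    have hinv : (s : K) * (↑u⁻¹ : (LocalSubring.ofPrime B N).toSubring) = 1 := by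
      have := congrArg Subtype.val u.mul_inv
      rwa [hu] at this
    have hxu : x = a * (↑u⁻¹ : (LocalSubring.ofPrime B N).toSubring) := by
      linear_combination (-x) * hinv + (↑u⁻¹ : (LocalSubring.ofPrime B N).toSubring) * hx
    rw [hxu]
    exact mul_mem (LocalSubring.le_ofPrime B N a.2) (Subtype.prop _)
  · obtain ⟨⟨a, s⟩, h⟩ := IsLocalization.surj N.primeCompl
      (⟨x, hx⟩ : (LocalSubring.ofPrime B N).toSubring)
    exact ⟨a, s, s.2, (mul_comm _ _).trans (congrArg Subtype.val h)⟩

lemma le_blowRing (O : Subring K) (f : O) : O ≤ blowRing O f := fun _ hx =>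
  Subring.subset_closure (Or.inl hx)

lemma blowRing_le {O S : Subring K} {f : O} (hO : O ≤ S) (hS : blowSet O f ⊆ S) :
    blowRing O f ≤ S :=
  Subring.closure_le.2 (Set.union_subset hO hS)

lemma mem_blowRing {O : Subring K} {f : O} {x : K} (hx : x ∈ blowSet O f) : x ∈ blowRing O f :=
  Subring.subset_closure (Or.inr hx)

variable {O : Subring K} {f : O} {r : ℕ}

lemma ne_zero_of_reduction [IsLocalRing O] (hO : ¬IsField O)
    (hred : nuIdeal O ^ (r + 1) = Ideal.span {f} * nuIdeal O ^ r) : f ≠ 0 := by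
  rintro rfl
  rw [Ideal.span_singleton_zero, Ideal.bot_mul, nuIdeal_eq_maximalIdeal] at hred
  exact hO (IsLocalRing.isField_iff_maximalIdeal_eq.2 (pow_eq_zero_iff r.succ_ne_zero |>.1 hred))

/-- An element `z / f` of the blow-up ring maps the faithful module `m ^ r` into itself. -/
lemma isIntegral_of_mem_blowRing (hfg : (nuIdeal O).FG) (hf : ¬IsUnit f) (hf0 : f ≠ 0)
    (hred : nuIdeal O ^ (r + 1) = Ideal.span {f} * nuIdeal O ^ r) {x : K}
    (hx : x ∈ blowRing O f) : IsIntegral O x := by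
  refine blowRing_le (S := (integralClosure O K).toSubring)
    (fun y hy => isIntegral_algebraMap (x := (⟨y, hy⟩ : O))) ?_ hx
  rintro y ⟨z, hz, hfy⟩
  have hf0' : (f : K) ≠ 0 := by exact_mod_cast hf0
  refine isIntegral_of_smul_mem_submodule (Submodule.map (Algebra.linearMap O K) (nuIdeal O ^ r))
    ((Submodule.ne_bot_iff _).2
      ⟨_, Submodule.mem_map_of_mem (Ideal.pow_mem_pow (Ideal.subset_span hf) r), ?_⟩)
    ((Submodule.FG.pow hfg r).map _) y ?_
  · simpa using pow_ne_zero r hf0'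
  · rintro _ ⟨w, hw, rfl⟩
    have hzw : z * w ∈ Ideal.span {f} * nuIdeal O ^ r :=
      hred ▸ pow_succ' (nuIdeal O) r ▸ Ideal.mul_mem_mul hz hw
    obtain ⟨v, hv, hfv⟩ := Ideal.mem_span_singleton_mul.1 hzw
    have hfv' : (f : K) * v = z * w := congrArg Subtype.val hfv
    refine Submodule.mem_map.2 ⟨v, hv, mul_left_cancel₀ hf0' ?_⟩
    change (f : K) * v = f * (y * w)
    rw [hfv', ← hfy, mul_assoc]

lemma inclusion_mem_of_not_isUnit [IsLocalRing O]
    (hint : ∀ x ∈ blowRing O f, IsIntegral O x)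
    (N : Ideal (blowRing O f)) [N.IsMaximal] {x : O} (hx : ¬IsUnit x) :
    Subring.inclusion (le_blowRing O f) x ∈ N := by
  have hi : (Subring.inclusion (le_blowRing O f)).IsIntegral := by
    intro b
    obtain ⟨p, hp, hpb⟩ := hint b b.2
    refine ⟨p, hp, (blowRing O f).subtype_injective ?_⟩
    rw [map_zero, Polynomial.hom_eval₂]
    exact hpb
  have hmax := Ideal.isMaximal_comap_of_isIntegral_of_isMaximal' _ hi N
  have hx' : x ∈ N.comap (Subring.inclusion (le_blowRing O f)) := by
    rwa [IsLocalRing.eq_maximalIdeal hmax]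
  exact hx'

lemma not_isField_of_le {A B : LocalSubring K} (hAB : A ≤ B) (hA : ¬IsField A.toSubring) :
    ¬IsField B.toSubring := by
  rw [IsLocalRing.isField_iff_maximalIdeal_eq] at hA
  obtain ⟨x, hx, hx0⟩ := Submodule.exists_mem_ne_zero_of_ne_bot hA
  obtain ⟨hle, hlocal⟩ := hAB
  intro hB
  obtain ⟨y, hy⟩ := hB.mul_inv_cancel ((map_ne_zero_iff _ (Subring.inclusion_injective hle)).2 hx0)
  exact hx (hlocal.map_nonunit x (IsUnit.of_mul_eq_one y hy))

lemma le_ofPrime_blowRing {A : LocalSubring K} {f : A.toSubring}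
    (hint : ∀ x ∈ blowRing A.toSubring f, IsIntegral A.toSubring x)
    (N : Ideal (blowRing A.toSubring f)) [N.IsMaximal] :
    A ≤ LocalSubring.ofPrime (blowRing A.toSubring f) N := by
  refine ⟨(le_blowRing _ f).trans (LocalSubring.le_ofPrime _ N), ⟨fun x hx => ?_⟩⟩
  by_contra hxu
  exact (IsLocalization.AtPrime.isUnit_to_map_iff (LocalSubring.ofPrime _ N).toSubring N
    (Subring.inclusion (le_blowRing _ f) x)).1 hx (inclusion_mem_of_not_isUnit hint N hxu)

lemma ofPrime_blowRing_le_subfield {O : Subring K} {f : O} (hf0 : f ≠ 0)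
    (N : Ideal (blowRing O f)) [N.IsPrime] {F : Subfield K} (hF : O ≤ F.toSubring) :
    (LocalSubring.ofPrime (blowRing O f) N).toSubring ≤ F.toSubring := by
  have hf0' : (f : K) ≠ 0 := by exact_mod_cast hf0
  have hB : blowRing O f ≤ F.toSubring := by
    refine blowRing_le hF ?_
    rintro x ⟨z, -, hx⟩
    rw [(eq_div_of_mul_eq hf0' ((mul_comm _ _).trans hx) : x = z / f)]
    exact F.div_mem (hF z.2) (hF f.2)
  rw [← closure_locSet_eq, Subring.closure_le]
  rintro x ⟨z, s, hs, hx⟩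
  have hs0 : (s : K) ≠ 0 := by
    intro h
    exact hs ((Subtype.ext h : s = 0) ▸ N.zero_mem)
  rw [(eq_div_of_mul_eq hs0 ((mul_comm _ _).trans hx) : x = z / s)]
  exact F.div_mem (hB z.2) (hB s.2)

end BlowUp

/-! ### Orders in a rational function field -/

section RationalOrder

open scoped Polynomial

variable {k K : Type*} [Field k] [Field K] [Algebra k K]

lemma mem_adjoin_of_le {K : Type*} [Field K] {O O' : Subring K} (hle : O ≤ O') {s : Set K} {v : K}
    (hv : v ∈ Algebra.adjoin O s) : v ∈ Algebra.adjoin O' s := by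
  induction hv using Algebra.adjoin_induction with
  | mem x hx => exact Algebra.subset_adjoin hx
  | algebraMap x => exact Subalgebra.algebraMap_mem _ (Subring.inclusion hle x)
  | add x y _ _ hx hy => exact add_mem hx hy
  | mul x y _ _ hx hy => exact mul_mem hx hy

lemma aeval_mem_adjoin {O : Subring K}
    (hO : ∀ c : k, algebraMap k K c ∈ O) (τ : K) (P : k[X]) :
    Polynomial.aeval τ P ∈ Algebra.adjoin O {τ} := by
  rw [Polynomial.aeval_eq_sum_range]
  refine sum_mem fun n _ => ?_
  rw [Algebra.smul_def]
  exact mul_mem (Subalgebra.algebraMap_mem _ (⟨_, hO _⟩ : O))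
    (pow_mem (Algebra.self_mem_adjoin_singleton O τ) n)

/-- `O` is a `k`-subalgebra of the rational function field `k(τ)` over which `τ` is integral and
whose field of fractions contains `τ`; then `O[τ]` is a finite birational extension of `O`. -/
structure IsRationalOrder (k : Type*) {K : Type*} [Field k] [Field K] [Algebra k K] (τ : K)
    (O : Subring K) : Prop where
  algebraMap_mem (c : k) : algebraMap k K c ∈ O
  le_adjoin : O ≤ (IntermediateField.adjoin k {τ}).toSubfield.toSubring
  isIntegral : IsIntegral O τ
  exists_mul_mem : ∃ b : O, b ≠ 0 ∧ (b : K) * τ ∈ O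

namespace IsRationalOrder

variable {τ : K} {O : Subring K}

lemma of_le {O' : Subring K} (h : IsRationalOrder k τ O) (hle : O ≤ O')
    (hO' : O' ≤ (IntermediateField.adjoin k {τ}).toSubfield.toSubring) :
    IsRationalOrder k τ O' where
  algebraMap_mem c := hle (h.algebraMap_mem c)
  le_adjoin := hO'
  isIntegral := h.isIntegral.map_of_comp_eq (Subring.inclusion hle) (RingHom.id K) rfl
  exists_mul_mem := by
    obtain ⟨b, hb, hbτ⟩ := h.exists_mul_mem
    exact ⟨Subring.inclusion hle b,
      (map_ne_zero_iff _ (Subring.inclusion_injective hle)).2 hb, hle hbτ⟩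

/-- The `k`-algebra structure on `O` induced by that of the ambient field. -/
abbrev algebra (h : IsRationalOrder k τ O) : Algebra k O :=
  ((algebraMap k K).codRestrict O h.algebraMap_mem).toAlgebra

lemma isScalarTower (h : IsRationalOrder k τ O) :
    letI := h.algebra
    IsScalarTower k O K :=
  letI := h.algebra
  IsScalarTower.of_algebraMap_eq fun _ => rfl

/-- `τ` as an element of `O[τ]`. -/
def gen (τ : K) (O : Subring K) : Algebra.adjoin O {τ} :=
  ⟨τ, Algebra.self_mem_adjoin_singleton O τ⟩

lemma isRationalOver [Algebra k O] [IsScalarTower k O K] (h : IsRationalOrder k τ O) :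
    IsRationalOver k (gen τ O) := by
  have hcoe (P : k[X]) :
      (Polynomial.aeval (gen τ O) P : K) = Polynomial.aeval τ P :=
    (Polynomial.aeval_algebraMap_apply K (gen τ O) P).symm
  have hmem {s : K} (hs : s ∈ Algebra.adjoin O {τ}) : s ∈ IntermediateField.adjoin k {τ} := by
    induction hs using Algebra.adjoin_induction with
    | mem x hx => exact IntermediateField.subset_adjoin k {τ} hx
    | algebraMap x => exact h.le_adjoin x.2
    | add x y _ _ hx hy => exact add_mem hx hy
    | mul x y _ _ hx hy => exact mul_mem hx hy
  intro s
  obtain ⟨P, Q, hs⟩ := (IntermediateField.mem_adjoin_simple_iff k _).1 (hmem s.2)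
  rcases eq_or_ne (Polynomial.aeval τ Q) 0 with hQ | hQ
  · have hs0 : s = 0 := Subtype.ext (by rw [hs, hQ, div_zero]; rfl)
    exact ⟨0, 1, by simp, by simp [hs0]⟩
  · refine ⟨P, Q, fun h0 => hQ (by rw [← hcoe, h0]; rfl), Subtype.ext ?_⟩
    push_cast
    rw [hcoe, hcoe, hs, mul_div_cancel₀ _ hQ]

lemma exists_smul_adjoin_le_one (h : IsRationalOrder k τ O) :
    ∃ y : O, y ≠ 0 ∧ ∀ s ∈ Algebra.adjoin O {τ}, (y : K) * s ∈ O := by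
  obtain ⟨b, hb, hbτ⟩ := h.exists_mul_mem
  obtain ⟨p, hp, hpτ⟩ := h.isIntegral
  refine ⟨b ^ p.natDegree, pow_ne_zero _ hb, fun s hs => ?_⟩
  classical
  rw [← Subalgebra.mem_toSubmodule, ← Submodule.span_range_natDegree_eq_adjoin hp hpτ] at hs
  induction hs using Submodule.span_induction with
  | mem s hs =>
    obtain ⟨i, hi, rfl⟩ := Finset.mem_image.1 hs
    obtain ⟨j, hj⟩ := Nat.exists_eq_add_of_lt (Finset.mem_range.1 hi)
    have hsplit : ((b ^ p.natDegree : O) : K) * τ ^ i = (b : K) ^ (j + 1) * (b * τ) ^ i := by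
      rw [hj]; push_cast; ring
    rw [hsplit]
    exact mul_mem (pow_mem b.2 _) (pow_mem hbτ _)
  | zero => rw [mul_zero]; exact O.zero_mem
  | add x y _ _ hx hy => rw [mul_add]; exact add_mem hx hy
  | smul c x _ hx =>
    rw [Algebra.smul_def, mul_left_comm]
    exact mul_mem c.2 hx

lemma length_adjoin_quotient_one_ne_top [IsAlgClosed k] (h : IsRationalOrder k τ O) :
    Module.length O (Algebra.adjoin O {τ} ⧸ (1 : Submodule O (Algebra.adjoin O {τ}))) ≠ ⊤ := by
  let _ := h.algebra
  have := h.isScalarTower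
  obtain ⟨y, hy0, hy⟩ := h.exists_smul_adjoin_le_one
  let y' := algebraMap O (Algebra.adjoin O {τ}) y
  have hy0' : y' ≠ 0 := (map_ne_zero_iff _ (FaithfulSMul.algebraMap_injective _ _)).2 hy0
  have hle : (Ideal.span {y'}).restrictScalars O ≤ 1 := by
    intro s hs
    obtain ⟨v, rfl⟩ := Ideal.mem_span_singleton.1 hs
    exact Submodule.mem_one.2 ⟨⟨_, hy v v.2⟩, Subtype.ext rfl⟩
  refine ne_top_of_le_ne_top (h.isRationalOver.relativeOrd_ne_top hy0')
    (le_trans ?_ (relativeOrd_le_restrictScalars (R := O) k y'))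
  rw [relativeOrd, ← (Submodule.Quotient.restrictScalarsEquiv O (Ideal.span {y'})).length_eq]
  exact Module.length_le_of_surjective (Submodule.factor hle) (Submodule.factor_surjective hle)

lemma ord_eq_relativeOrd_adjoin [IsAlgClosed k] (h : IsRationalOrder k τ O) {x : O} (hx : x ≠ 0) :
    Ring.ord O x = relativeOrd O (algebraMap O (Algebra.adjoin O {τ}) x) :=
  ord_eq_relativeOrd h.length_adjoin_quotient_one_ne_top (mem_nonZeroDivisors_of_ne_zero
    ((map_ne_zero_iff _ (FaithfulSMul.algebraMap_injective _ _)).2 hx))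

lemma ord_le_natDegree [IsAlgClosed k] (h : IsRationalOrder k τ O) {x : O} {P : k[X]}
    (hP : Polynomial.aeval τ P ≠ 0) {v : K} (hv : v ∈ Algebra.adjoin O {τ})
    (hxv : x * v = Polynomial.aeval τ P) : Ring.ord O x ≤ P.natDegree := by
  let _ := h.algebra
  have := h.isScalarTower
  have hcoe : algebraMap O (Algebra.adjoin O {τ}) x * ⟨v, hv⟩ =
      Polynomial.aeval (gen τ O) P :=
    Subtype.ext (hxv.trans (Polynomial.aeval_algebraMap_apply K (gen τ O) P))
  have hx0 : x ≠ 0 := by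
    rintro rfl
    exact hP (by rw [← hxv, ZeroMemClass.coe_zero, zero_mul])
  have hP' : Polynomial.aeval (gen τ O) P ≠ 0 := fun h0 => hP (by
    rw [← hxv]
    exact congrArg Subtype.val (hcoe.trans h0))
  calc Ring.ord O x = relativeOrd O (algebraMap O (Algebra.adjoin O {τ}) x) :=
        h.ord_eq_relativeOrd_adjoin hx0
    _ ≤ relativeOrd O (Polynomial.aeval (gen τ O) P) :=
        relativeOrd_le_of_dvd ⟨_, hcoe.symm⟩
    _ ≤ relativeOrd k (Polynomial.aeval (gen τ O) P) := relativeOrd_le_restrictScalars k _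
    _ ≤ P.natDegree := h.isRationalOver.relativeOrd_aeval_le hP'

lemma ord_ne_top [IsAlgClosed k] (h : IsRationalOrder k τ O) {x : O} (hx : x ≠ 0) :
    Ring.ord O x ≠ ⊤ := by
  let _ := h.algebra
  have := h.isScalarTower
  rw [h.ord_eq_relativeOrd_adjoin hx]
  exact ne_top_of_le_ne_top (h.isRationalOver.relativeOrd_ne_top
    ((map_ne_zero_iff _ (FaithfulSMul.algebraMap_injective _ _)).2 hx))
    (relativeOrd_le_restrictScalars k _)

lemma isNoetherianRing [IsAlgClosed k] (h : IsRationalOrder k τ O) : IsNoetherianRing O := by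
  refine (isNoetherianRing_iff_ideal_fg O).2 fun I => ?_
  rcases eq_or_ne I ⊥ with rfl | hI
  · exact Submodule.fg_bot
  obtain ⟨x, hxI, hx⟩ := Submodule.exists_mem_ne_zero_of_ne_bot hI
  have : IsNoetherian O (O ⧸ Ideal.span {x}) :=
    (isFiniteLength_iff_isNoetherian_isArtinian.1
      (Module.length_ne_top_iff.1 (h.ord_ne_top hx))).1
  refine Submodule.fg_of_fg_map_of_fg_inf_ker (Ideal.span {x}).mkQ (IsNoetherian.noetherian _) ?_
  rw [Submodule.ker_mkQ, inf_eq_right.2 ((Ideal.span_singleton_le_iff_mem _).2 hxI)]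
  exact Submodule.fg_span_singleton x

lemma exists_localSubring_of_isFirstNbhdOf [IsAlgClosed k] {A : LocalSubring K}
    (h : IsRationalOrder k τ A.toSubring) (hA : ¬IsField A.toSubring) {O' : Subring K}
    (hO' : IsFirstNbhdOf A.toSubring O') :
    ∃ B : LocalSubring K, B.toSubring = O' ∧ A ≤ B ∧ IsRationalOrder k τ B.toSubring := by
  obtain ⟨f, hf, ⟨r, hred⟩, N, hN, rfl⟩ := hO'
  have := hN.isPrime
  have := h.isNoetherianRing
  have hf0 := ne_zero_of_reduction hA hred
  have hle := le_ofPrime_blowRing (fun _ =>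
    isIntegral_of_mem_blowRing (IsNoetherian.noetherian _) hf hf0 hred) N
  exact ⟨_, (closure_locSet_eq _ N).symm, hle,
    h.of_le hle.1 (ofPrime_blowRing_le_subfield hf0 N h.le_adjoin)⟩

lemma exists_localSubring_of_chain [IsAlgClosed k] {A : LocalSubring K}
    (h : IsRationalOrder k τ A.toSubring) (hA : ¬IsField A.toSubring) {O' : Subring K}
    (hO' : Relation.ReflTransGen IsFirstNbhdOf A.toSubring O') :
    ∃ B : LocalSubring K, B.toSubring = O' ∧ A ≤ B ∧ IsRationalOrder k τ B.toSubring := by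
  induction hO' with
  | refl => exact ⟨A, rfl, le_rfl, h⟩
  | tail _ hstep ih =>
    obtain ⟨B, rfl, hAB, hB⟩ := ih
    obtain ⟨C, hC, hBC, hC'⟩ :=
      hB.exists_localSubring_of_isFirstNbhdOf (not_isField_of_le hAB hA) hstep
    exact ⟨C, hC, hAB.trans hBC, hC'⟩

/-- `x` stays a nonunit along the chain. -/
theorem le_natDegree_of_chain [IsAlgClosed k] {A : LocalSubring K}
    (h : IsRationalOrder k τ A.toSubring) {O' : Subring K}
    (hO' : Relation.ReflTransGen IsFirstNbhdOf A.toSubring O') {c : ℕ}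
    (hc : IsHSMultOfDimOne O' (nuIdeal O') c) {x : A.toSubring} (hx : ¬IsUnit x) {P : k[X]}
    (hP : Polynomial.aeval τ P ≠ 0) {v : K} (hv : v ∈ Algebra.adjoin A.toSubring {τ})
    (hxv : x * v = Polynomial.aeval τ P) : c ≤ P.natDegree := by
  have hx0 : x ≠ 0 := by
    rintro rfl
    exact hP (by rw [← hxv, ZeroMemClass.coe_zero, zero_mul])
  have hfield : ¬IsField A.toSubring := fun hA =>
    let ⟨y, hy⟩ := hA.mul_inv_cancel hx0
    hx (IsUnit.of_mul_eq_one y hy)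
  obtain ⟨B, rfl, hAB, hB⟩ := h.exists_localSubring_of_chain hfield hO'
  obtain ⟨hle, hlocal⟩ := hAB
  refine hc.le_of_ord_le (x := Subring.inclusion hle x)
    (Ideal.subset_span fun hu => hx (hlocal.map_nonunit x hu))
    (mem_nonZeroDivisors_of_ne_zero
      ((map_ne_zero_iff _ (Subring.inclusion_injective hle)).2 hx0))
    (hB.ord_le_natDegree hP (mem_adjoin_of_le hle hv) hxv)

end IsRationalOrder

end RationalOrder

section LocalParametrization

open scoped Polynomial

lemma map_eq_span_singleton {ι R S : Type*} [Finite ι] [CommRing R] [CommRing S] (φ : R →+* S)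
    {x : ι → R} {w : ι → S} {u η : S} (hu : IsUnit u) (hx : ∀ l, φ (x l) * u = η * w l)
    (hw : Ideal.span (Set.range w) = ⊤) :
    (Ideal.span (Set.range x)).map φ = Ideal.span {η} := by
  have := Fintype.ofFinite ι
  refine le_antisymm (Ideal.map_le_iff_le_comap.2 (Ideal.span_le.2 ?_)) ?_
  · rintro _ ⟨l, rfl⟩
    exact Ideal.mem_span_singleton.2 ((hu.dvd_mul_right).1 ⟨w l, hx l⟩)
  · obtain ⟨b, hb⟩ := Ideal.mem_span_range_iff_exists_fun.1 ((Ideal.eq_top_iff_one _).1 hw)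
    have hη : η = ∑ l, φ (x l) * (u * b l) := by
      rw [← mul_one η, ← hb, Finset.mul_sum]
      exact Finset.sum_congr rfl fun l _ => by linear_combination -b l * hx l
    rw [Ideal.span_singleton_le_iff_mem, hη]
    exact sum_mem fun l _ => Ideal.mul_mem_right _ _
      (Ideal.mem_map_of_mem φ (Ideal.subset_span ⟨l, rfl⟩))

lemma associated_of_reduction {R S : Type*} [CommRing R] [CommRing S] [IsDomain S] (φ : R →+* S)
    {m : Ideal R} {f : R} {n : ℕ} {η : S} (hη : η ≠ 0) (hm : m.map φ = Ideal.span {η})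
    (hred : m ^ (n + 1) = Ideal.span {f} * m ^ n) : Associated (φ f) η := by
  have hmap := congrArg (Ideal.map φ) hred
  rw [Ideal.map_pow, Ideal.map_mul, Ideal.map_pow, hm, Ideal.map_span, Set.image_singleton,
    Ideal.span_singleton_pow, Ideal.span_singleton_pow, Ideal.span_singleton_mul_span_singleton,
    pow_succ', Ideal.span_singleton_eq_span_singleton] at hmap
  exact (hmap.of_mul_right (Associated.refl _) (pow_ne_zero n hη)).symm

/-- A local order `A` together with a common parametrization, by the coordinate `τ`, of generators
`x` of its maximal ideal: up to the factor `G τ`, which is a unit of `A[τ]`, the generators are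
`(H * w l) τ`, where the `w l` have no common zero. Thus the zeros of `H` are the points lying
over `A`. -/
structure IsLocalParametrization (k : Type*) {K : Type*} [Field k] [Field K] [Algebra k K] (τ : K)
    (A : LocalSubring K) (x : Fin 3 → A.toSubring) (G H : k[X]) (w : Fin 3 → k[X]) : Prop extends
    IsRationalOrder k τ A.toSubring where
  aeval_ne_zero {P : k[X]} (hP : P ≠ 0) : Polynomial.aeval τ P ≠ 0
  ne_zero : H ≠ 0
  nuIdeal_eq_span : nuIdeal A.toSubring = Ideal.span (Set.range x)
  span_eq_top : Ideal.span (Set.range w) = ⊤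
  mul_aeval (l : Fin 3) : x l * Polynomial.aeval τ G = Polynomial.aeval τ (H * w l)
  exists_aeval_mul_eq_one : ∃ v ∈ Algebra.adjoin A.toSubring {τ}, Polynomial.aeval τ G * v = 1
  exists_mul_aeval_eq {α : k} (hα : H.eval α = 0) (y : A.toSubring) :
    ∃ F D : k[X], D.eval α ≠ 0 ∧ y * Polynomial.aeval τ D = Polynomial.aeval τ F

namespace IsLocalParametrization

variable {k K : Type*} [Field k] [Field K] [Algebra k K] {τ : K} {A : LocalSubring K}
  {x : Fin 3 → A.toSubring} {G H : k[X]} {w : Fin 3 → k[X]}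

/-- The value of `P` at `τ`, in `A[τ]`. -/
noncomputable def adjoinAeval (h : IsLocalParametrization k τ A x G H w) (P : k[X]) :
    Algebra.adjoin A.toSubring {τ} :=
  ⟨Polynomial.aeval τ P, aeval_mem_adjoin h.algebraMap_mem τ P⟩

lemma isUnit_adjoinAeval (h : IsLocalParametrization k τ A x G H w) :
    IsUnit (h.adjoinAeval G) := by
  obtain ⟨v, hv, hGv⟩ := h.exists_aeval_mul_eq_one
  exact IsUnit.of_mul_eq_one ⟨v, hv⟩ (Subtype.ext hGv)

lemma map_nuIdeal_eq_span (h : IsLocalParametrization k τ A x G H w) :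
    (nuIdeal A.toSubring).map (algebraMap _ (Algebra.adjoin A.toSubring {τ})) =
      Ideal.span {h.adjoinAeval H} := by
  rw [h.nuIdeal_eq_span]
  refine map_eq_span_singleton _ (w := fun l => h.adjoinAeval (w l)) h.isUnit_adjoinAeval
    (fun l => Subtype.ext ((h.mul_aeval l).trans (map_mul _ _ _))) ?_
  obtain ⟨b, hb⟩ :=
    Ideal.mem_span_range_iff_exists_fun.1 ((Ideal.eq_top_iff_one _).1 h.span_eq_top)
  refine (Ideal.eq_top_iff_one _).2 (Ideal.mem_span_range_iff_exists_fun.2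
    ⟨fun l => h.adjoinAeval (b l), Subtype.ext ?_⟩)
  rw [AddSubmonoidClass.coe_finsetSum]
  change ∑ l, Polynomial.aeval τ (b l) * Polynomial.aeval τ (w l) = 1
  rw [← map_one (Polynomial.aeval (R := k) τ), ← hb, map_sum]
  exact Finset.sum_congr rfl fun l _ => (map_mul _ _ _).symm

variable {f : A.toSubring} {n : ℕ}

lemma associated_adjoinAeval (h : IsLocalParametrization k τ A x G H w)
    (hred : nuIdeal A.toSubring ^ (n + 1) = Ideal.span {f} * nuIdeal A.toSubring ^ n) :
    Associated (algebraMap _ _ f) (h.adjoinAeval H) :=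
  associated_of_reduction _ (fun h0 => h.aeval_ne_zero h.ne_zero (congrArg Subtype.val h0))
    h.map_nuIdeal_eq_span hred

lemma exists_mul_eq_aeval (h : IsLocalParametrization k τ A x G H w)
    (hred : nuIdeal A.toSubring ^ (n + 1) = Ideal.span {f} * nuIdeal A.toSubring ^ n) :
    ∃ u ∈ Algebra.adjoin A.toSubring {τ}, f * u = Polynomial.aeval τ H :=
  let ⟨u, hu⟩ := (h.associated_adjoinAeval hred).dvd
  ⟨u, u.2, congrArg Subtype.val hu.symm⟩

lemma exists_aeval_mul_eq (h : IsLocalParametrization k τ A x G H w)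
    (hred : nuIdeal A.toSubring ^ (n + 1) = Ideal.span {f} * nuIdeal A.toSubring ^ n) :
    ∃ u ∈ Algebra.adjoin A.toSubring {τ}, Polynomial.aeval τ H * u = f :=
  let ⟨u, hu⟩ := (h.associated_adjoinAeval hred).dvd'
  ⟨u, u.2, congrArg Subtype.val hu.symm⟩

lemma ne_zero_of_reduction (h : IsLocalParametrization k τ A x G H w)
    (hred : nuIdeal A.toSubring ^ (n + 1) = Ideal.span {f} * nuIdeal A.toSubring ^ n) : f ≠ 0 := by
  rintro rfl
  obtain ⟨u, -, hu⟩ := h.exists_mul_eq_aeval hred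
  exact h.aeval_ne_zero h.ne_zero (by rw [← hu, ZeroMemClass.coe_zero, zero_mul])

lemma sub_mul_ne_one (h : IsLocalParametrization k τ A x G H w) {α : k} (hα : H.eval α = 0) {v : K}
    (hv : v ∈ Algebra.adjoin A.toSubring {τ}) : (τ - algebraMap k K α) * v ≠ 1 := by
  obtain ⟨F, D, hD, hvD⟩ :
      ∃ F D : k[X], D.eval α ≠ 0 ∧ v * Polynomial.aeval τ D = Polynomial.aeval τ F := by
    induction hv using Algebra.adjoin_induction with
    | mem y hy => exact ⟨Polynomial.X, 1, by simp, by simp_all⟩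
    | algebraMap y => exact h.exists_mul_aeval_eq hα y
    | add y z _ _ hy hz =>
      obtain ⟨F, D, hD, hy⟩ := hy
      obtain ⟨F', D', hD', hz⟩ := hz
      refine ⟨F * D' + F' * D, D * D', by simp [hD, hD'], ?_⟩
      simp only [map_add, map_mul, ← hy, ← hz]
      ring
    | mul y z _ _ hy hz =>
      obtain ⟨F, D, hD, hy⟩ := hy
      obtain ⟨F', D', hD', hz⟩ := hz
      refine ⟨F * F', D * D', by simp [hD, hD'], ?_⟩
      simp only [map_mul, ← hy, ← hz]
      ring
  intro hone
  have hDF : D = (Polynomial.X - Polynomial.C α) * F := by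
    by_contra hne
    refine h.aeval_ne_zero (sub_ne_zero.2 hne) ?_
    rw [map_sub, map_mul, map_sub, Polynomial.aeval_X, Polynomial.aeval_C, ← hvD, ← mul_assoc,
      hone, one_mul, sub_self]
  exact hD (by simp [hDF])

theorem isHSMultOfDimOne [IsAlgClosed k] (h : IsLocalParametrization k τ A x G H w)
    (hf : ¬IsUnit f)
    (hred : nuIdeal A.toSubring ^ (n + 1) = Ideal.span {f} * nuIdeal A.toSubring ^ n) :
    IsHSMultOfDimOne A.toSubring (nuIdeal A.toSubring) H.natDegree := by
  have hf0 := h.ne_zero_of_reduction hred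
  refine IsHSMultOfDimOne.of_reduction (Ideal.subset_span hf)
    (mem_nonZeroDivisors_of_ne_zero hf0) hred (le_antisymm ?_ ?_)
  · obtain ⟨u, hu, hfu⟩ := h.exists_mul_eq_aeval hred
    exact h.ord_le_natDegree (h.aeval_ne_zero h.ne_zero) hu hfu
  · let _ := h.algebra
    have := h.isScalarTower
    have hcoe : Polynomial.aeval (IsRationalOrder.gen τ A.toSubring) H = h.adjoinAeval H :=
      Subtype.ext (Polynomial.aeval_algebraMap_apply K (IsRationalOrder.gen τ A.toSubring) H).symm
    have hH : Polynomial.aeval (IsRationalOrder.gen τ A.toSubring) H ≠ 0 := fun h0 =>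
      h.aeval_ne_zero h.ne_zero (congrArg Subtype.val (hcoe.symm.trans h0))
    have hroots (α : k) (hα : H.eval α = 0) :
        ¬IsUnit (IsRationalOrder.gen τ A.toSubring - algebraMap k _ α) := fun hu =>
      let ⟨v, hv⟩ := hu.exists_right_inv
      h.sub_mul_ne_one hα v.2 (congrArg Subtype.val hv)
    calc (H.natDegree : ℕ∞)
        ≤ Ring.ord _ (Polynomial.aeval (IsRationalOrder.gen τ A.toSubring) H) :=
          natDegree_le_ord_aeval hH hroots
      _ ≤ relativeOrd A.toSubring (h.adjoinAeval H) := hcoe ▸ ord_le_relativeOrd _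
      _ ≤ relativeOrd A.toSubring (algebraMap _ (Algebra.adjoin A.toSubring {τ}) f) :=
          relativeOrd_le_of_dvd (h.associated_adjoinAeval hred).dvd'
      _ = Ring.ord _ f := (h.ord_eq_relativeOrd_adjoin hf0).symm

lemma blowRing_le_adjoin (h : IsLocalParametrization k τ A x G H w)
    (hred : nuIdeal A.toSubring ^ (n + 1) = Ideal.span {f} * nuIdeal A.toSubring ^ n) :
    blowRing A.toSubring f ≤ (Algebra.adjoin A.toSubring {τ}).toSubring := by
  have hf0 : (f : K) ≠ 0 := by exact_mod_cast h.ne_zero_of_reduction hred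
  refine blowRing_le (fun y hy => Subalgebra.algebraMap_mem _ (⟨y, hy⟩ : A.toSubring)) ?_
  rintro y ⟨z, hz, hfy⟩
  have hz' := h.map_nuIdeal_eq_span.le (Ideal.mem_map_of_mem _ hz)
  obtain ⟨v, hv⟩ := (h.associated_adjoinAeval hred).dvd.trans (Ideal.mem_span_singleton.1 hz')
  rw [mul_left_cancel₀ hf0 (hfy.trans (congrArg Subtype.val hv))]
  exact v.2

/-- A prime of `A[τ]` over `N` contains `τ - α` for some `α`. -/
lemma exists_forall_mem_of_eval_eq_zero [IsAlgClosed k] (h : IsLocalParametrization k τ A x G H w)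
    (hf : ¬IsUnit f)
    (hred : nuIdeal A.toSubring ^ (n + 1) = Ideal.span {f} * nuIdeal A.toSubring ^ n)
    (N : Ideal (blowRing A.toSubring f)) [N.IsMaximal] :
    ∃ α : k, ∀ P : k[X], P.eval α = 0 → ∀ v ∈ Algebra.adjoin A.toSubring {τ},
      ∀ y : blowRing A.toSubring f, y = Polynomial.aeval τ P * v → y ∈ N := by
  have hf0 := h.ne_zero_of_reduction hred
  have := h.isNoetherianRing
  let ι : blowRing A.toSubring f →+* Algebra.adjoin A.toSubring {τ} :=
    Subring.inclusion (h.blowRing_le_adjoin hred)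
  have hι : Function.Injective ι := Subring.inclusion_injective (h.blowRing_le_adjoin hred)
  let _ := ι.toAlgebra
  have : Algebra.IsIntegral (blowRing A.toSubring f) (Algebra.adjoin A.toSubring {τ}) := by
    have hV : Algebra.IsIntegral A.toSubring (Algebra.adjoin A.toSubring {τ}) :=
      Algebra.IsIntegral.adjoin fun y hy => Set.mem_singleton_iff.1 hy ▸ h.isIntegral
    exact ⟨RingHom.IsIntegral.tower_top (Subring.inclusion (le_blowRing A.toSubring f)) ι
      hV.isIntegral⟩
  obtain ⟨M, hM, rfl⟩ := Ideal.exists_ideal_over_maximal_of_isIntegral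
    (S := Algebra.adjoin A.toSubring {τ}) N
    ((RingHom.injective_iff_ker_eq_bot ι).1 hι ▸ bot_le)
  have hfM := inclusion_mem_of_not_isUnit (fun _ =>
    isIntegral_of_mem_blowRing (IsNoetherian.noetherian _) hf hf0 hred) (M.comap ι) hf
  have hM0 : M ≠ ⊥ := by
    rintro rfl
    have hιf : ι (Subring.inclusion (le_blowRing A.toSubring f) f) = 0 := Ideal.mem_bot.1 hfM
    exact (map_ne_zero_iff ι hι).2
      ((map_ne_zero_iff _ (Subring.inclusion_injective _)).2 hf0) hιf
  let _ := h.algebra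
  have := h.isScalarTower
  obtain ⟨α, hα⟩ := h.isRationalOver.exists_sub_algebraMap_mem hM0
  refine ⟨α, fun P hP v hv y hy => Ideal.mem_comap.2 ?_⟩
  have hPM := Ideal.mem_of_dvd M
    (sub_algebraMap_dvd_aeval (IsRationalOrder.gen τ A.toSubring) hP) hα
  have hιy : ι y = Polynomial.aeval (IsRationalOrder.gen τ A.toSubring) P * ⟨v, hv⟩ :=
    Subtype.ext (hy.trans (congrArg (· * v)
      (Polynomial.aeval_algebraMap_apply K (IsRationalOrder.gen τ A.toSubring) P)))
  change ι y ∈ M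
  rw [hιy]
  exact Ideal.mul_mem_right _ M hPM

lemma coe_sum_mul_aeval (h : IsLocalParametrization k τ A x G H w) (b : Fin 3 → k) :
    ((∑ l, (⟨_, h.algebraMap_mem (b l)⟩ : A.toSubring) * x l : A.toSubring) : K) *
        Polynomial.aeval τ G =
      Polynomial.aeval τ H * Polynomial.aeval τ (∑ l, b l • w l) := by
  rw [AddSubmonoidClass.coe_finsetSum, map_sum, Finset.sum_mul, Finset.mul_sum]
  refine Finset.sum_congr rfl fun l _ => ?_
  have hl := h.mul_aeval l
  rw [map_mul] at hl
  rw [map_smul, Algebra.smul_def, Subring.coe_mul]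
  linear_combination algebraMap k K (b l) * hl

theorem exists_forall_le_natDegree [IsAlgClosed k] (h : IsLocalParametrization k τ A x G H w)
    {O' : Subring K} (hO' : IsInfinitelyNearTo A.toSubring O') {c : ℕ}
    (hc : IsHSMultOfDimOne O' (nuIdeal O') c) :
    ∃ α : k, ∀ b : Fin 3 → k, (∑ l, b l • w l).eval α = 0 → ∑ l, b l • w l ≠ 0 →
      c ≤ (∑ l, b l • w l).natDegree := by
  obtain ⟨O₁, ⟨f, hf, ⟨n, hred⟩, N, hN, rfl⟩, hchain⟩ := Relation.TransGen.head'_iff.1 hO'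
  have hf0 := h.ne_zero_of_reduction hred
  have hf0' : (f : K) ≠ 0 := by exact_mod_cast hf0
  have := h.isNoetherianRing
  have hle := le_ofPrime_blowRing (fun _ =>
    isIntegral_of_mem_blowRing (IsNoetherian.noetherian _) hf hf0 hred) N
  have hB := h.of_le hle.1 (ofPrime_blowRing_le_subfield hf0 N h.le_adjoin)
  rw [closure_locSet_eq] at hchain
  obtain ⟨α, hα⟩ := h.exists_forall_mem_of_eval_eq_zero hf hred N
  refine ⟨α, fun b hbα hb0 => ?_⟩
  let z : A.toSubring := ∑ l, (⟨_, h.algebraMap_mem (b l)⟩ : A.toSubring) * x l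
  have hz : z ∈ nuIdeal A.toSubring := h.nuIdeal_eq_span ▸ sum_mem fun l _ =>
    Ideal.mul_mem_left _ _ (Ideal.subset_span ⟨l, rfl⟩)
  let y : blowRing A.toSubring f := ⟨z / f, mem_blowRing ⟨z, hz, mul_div_cancel₀ _ hf0'⟩⟩
  have hzG := h.coe_sum_mul_aeval b
  obtain ⟨u, hu, hfu⟩ := h.exists_mul_eq_aeval hred
  obtain ⟨u', hu', hHu'⟩ := h.exists_aeval_mul_eq hred
  obtain ⟨v, hv, hGv⟩ := h.exists_aeval_mul_eq_one
  have hyf : (y : K) * f = z := div_mul_cancel₀ _ hf0'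
  have hyP : (y : K) = Polynomial.aeval τ (∑ l, b l • w l) * (u * v) := by
    refine mul_right_cancel₀ hf0' ?_
    linear_combination hyf + v * hzG - z * hGv -
      v * Polynomial.aeval τ (∑ l, b l • w l) * hfu
  have hPy : y * (Polynomial.aeval τ G * u') = Polynomial.aeval τ (∑ l, b l • w l) := by
    refine mul_right_cancel₀ hf0' ?_
    linear_combination Polynomial.aeval τ G * u' * hyf + u' * hzG +
      Polynomial.aeval τ (∑ l, b l • w l) * hHu'
  have hyN := hα _ hbα _ (mul_mem hu hv) y hyP
  have hyu := mt (IsLocalization.AtPrime.isUnit_to_map_iff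
    (LocalSubring.ofPrime _ N).toSubring N y).1 (not_not.2 hyN)
  exact hB.le_natDegree_of_chain hchain hc hyu (h.aeval_ne_zero hb0)
    (mem_adjoin_of_le hle.1 (mul_mem (aeval_mem_adjoin h.algebraMap_mem τ G) hu')) hPy

theorem le_natDegree [IsAlgClosed k] (h : IsLocalParametrization k τ A x G H w)
    (hf : ¬IsUnit f)
    (hred : nuIdeal A.toSubring ^ (n + 1) = Ideal.span {f} * nuIdeal A.toSubring ^ n)
    {O' : Subring K} (hO' : IsInfinitelyNearTo A.toSubring O') {c : ℕ}
    (hc : IsHSMultOfDimOne O' (nuIdeal O') c) : c ≤ H.natDegree :=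
  let ⟨_, hu, hfu⟩ := h.exists_mul_eq_aeval hred
  h.le_natDegree_of_chain hO'.to_reflTransGen hc hf (h.aeval_ne_zero h.ne_zero) hu hfu

end IsLocalParametrization

end LocalParametrization

/-! ### Binary forms and affine charts -/

section Forms

open scoped Polynomial

variable {k : Type*} [CommRing k]

lemma aeval_mul_of_isHomogeneous {σ B : Type*} [CommRing B] [Algebra k B] {F : MvPolynomial σ k}
    {e : ℕ} (hF : F.IsHomogeneous e) (c : B) (v : σ → B) :
    aeval (fun i => c * v i) F = c ^ e * aeval v F := by
  rw [aeval_def, aeval_def, eval₂_eq, eval₂_eq, Finset.mul_sum]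
  refine Finset.sum_congr rfl fun s hs => ?_
  rw [Finset.prod_congr rfl fun i _ => mul_pow c (v i) (s i), Finset.prod_mul_distrib,
    Finset.prod_pow_eq_pow_sum, ← hF.degree_eq_sum_deg_support hs, mul_left_comm]

section Graded

attribute [local instance] MvPolynomial.gradedAlgebra

variable {σ : Type*} {F : MvPolynomial σ k} {d : ℕ}

lemma homogeneousComponent_add_mul (hF : F.IsHomogeneous d) (e : ℕ) (P : MvPolynomial σ k) :
    homogeneousComponent (d + e) (F * P) = F * homogeneousComponent e P := by
  have h := DirectSum.coe_decompose_mul_add_of_left_mem (homogeneousSubmodule σ k) (j := e)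
    (b := P) hF
  exact (decomposition.decompose'_apply _ _).symm.trans
    (h.trans (congrArg (F * ·) (decomposition.decompose'_apply P e)))

lemma homogeneousComponent_mul_of_lt (hF : F.IsHomogeneous d) {e : ℕ} (he : e < d)
    (P : MvPolynomial σ k) : homogeneousComponent e (F * P) = 0 :=
  (decomposition.decompose'_apply _ _).symm.trans
    (DirectSum.coe_decompose_mul_of_left_mem_of_not_le (homogeneousSubmodule σ k) hF (not_le.2 he))

end Graded

/-- Restriction of a binary form to the affine chart `t ↦ r' + t r` of the projective line, whose
point at infinity is `r`. -/
noncomputable def dehomogenize (r r' : Fin 2 → k) : MvPolynomial (Fin 2) k →ₐ[k] k[X] :=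
  aeval fun i => Polynomial.C (r' i) + Polynomial.X * Polynomial.C (r i)

/-- The linear form on the projective line vanishing at the point `r`. -/
noncomputable def pointForm (r : Fin 2 → k) : MvPolynomial (Fin 2) k :=
  C (r 0) * X 1 - C (r 1) * X 0

lemma pointForm_isHomogeneous (r : Fin 2 → k) : (pointForm r).IsHomogeneous 1 :=
  (isHomogeneous_C_mul_X _ _).sub (isHomogeneous_C_mul_X _ _)

variable {r r' : Fin 2 → k}

lemma aeval_dehomogenize {B : Type*} [CommRing B] [Algebra k B] (t : B)
    (F : MvPolynomial (Fin 2) k) :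
    Polynomial.aeval t (dehomogenize r r' F) =
      aeval (fun i => algebraMap k B (r' i) + t * algebraMap k B (r i)) F := by
  have hcomp : (Polynomial.aeval t).comp (dehomogenize r r') =
      aeval fun i => algebraMap k B (r' i) + t * algebraMap k B (r i) := by
    ext i
    simp [dehomogenize, mul_comm t]
  exact DFunLike.congr_fun hcomp F

lemma eval_dehomogenize (t : k) (F : MvPolynomial (Fin 2) k) :
    (dehomogenize r r' F).eval t = eval (fun i => r' i + t * r i) F := by
  simpa [aeval_eq_eval] using aeval_dehomogenize t F

variable {F : MvPolynomial (Fin 2) k} {e : ℕ}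

lemma aeval_eq_pow_mul_aeval_dehomogenize {B : Type*} [CommRing B] [Algebra k B]
    (hF : F.IsHomogeneous e) {v u t : B} (hu : v * t = u) :
    aeval (fun i => v * algebraMap k B (r' i) + u * algebraMap k B (r i)) F =
      v ^ e * Polynomial.aeval t (dehomogenize r r' F) := by
  rw [aeval_dehomogenize, ← aeval_mul_of_isHomogeneous hF]
  simp only [← hu, mul_add, mul_assoc]

lemma natDegree_dehomogenize_le (hF : F.IsHomogeneous e) :
    (dehomogenize r r' F).natDegree ≤ e := by
  have hlin (i : Fin 2) :
      (Polynomial.C (r' i) + Polynomial.X * Polynomial.C (r i)).natDegree ≤ 1 := by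
    compute_degree
  simpa [dehomogenize] using aeval_natDegree_le F hF.totalDegree_le _ hlin

lemma coeff_dehomogenize (hF : F.IsHomogeneous e) :
    (dehomogenize r r' F).coeff e = eval r F := by
  rw [dehomogenize, aeval_def, eval₂_eq', Polynomial.finsetSum_coeff, eval_eq']
  refine Finset.sum_congr rfl fun s hs => ?_
  have hse : e = s 0 + s 1 := by
    rw [hF.degree_eq_sum_deg_support hs, Finset.sum_subset (Finset.subset_univ _)
      fun i _ hi => by simpa using hi, Fin.sum_univ_two]
  have hlin (i : Fin 2) :
      (Polynomial.C (r' i) + Polynomial.X * Polynomial.C (r i)).natDegree ≤ 1 := by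
    compute_degree
  have hdeg (i : Fin 2) :
      ((Polynomial.C (r' i) + Polynomial.X * Polynomial.C (r i)) ^ s i).natDegree ≤ s i := by
    simpa using Polynomial.natDegree_pow_le_of_le (s i) (hlin i)
  have hcoeff (i : Fin 2) :
      ((Polynomial.C (r' i) + Polynomial.X * Polynomial.C (r i)) ^ s i).coeff (s i) =
        r i ^ s i := by
    simpa [Polynomial.coeff_C] using Polynomial.coeff_pow_of_natDegree_le (m := s i) (hlin i)
  rw [Polynomial.algebraMap_eq, Polynomial.coeff_C_mul, Fin.prod_univ_two, Fin.prod_univ_two, hse,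
    Polynomial.coeff_mul_add_eq_of_natDegree_le (hdeg 0) (hdeg 1), hcoeff, hcoeff]

lemma X_eq_pointForm_mul_sub (hdet : r 0 * r' 1 - r 1 * r' 0 = 1) (i : Fin 2) :
    (X i : MvPolynomial (Fin 2) k) = pointForm r * C (r' i) + -pointForm r' * C (r i) := by
  have h := congrArg (C : k → MvPolynomial (Fin 2) k) hdet
  simp only [map_sub, map_mul, map_one] at h
  fin_cases i
  · simp only [pointForm, Fin.zero_eta]
    linear_combination (-X 0) * h
  · simp only [pointForm, Fin.mk_one]
    linear_combination (-X 1) * h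

lemma aeval_mul_pointForm (hdet : r 0 * r' 1 - r 1 * r' 0 = 1) (hF : F.IsHomogeneous e)
    {s t : MvPolynomial (Fin 2) k} (hst : s * -pointForm r' = t * pointForm r) :
    pointForm r ^ e * aeval (fun i => s * C (r' i) + t * C (r i)) F = s ^ e * F := by
  have hX (i : Fin 2) : pointForm r * (s * C (r' i) + t * C (r i)) = s * X i := by
    linear_combination (-s) * X_eq_pointForm_mul_sub hdet i - C (r i) * hst
  rw [← aeval_mul_of_isHomogeneous hF, funext hX, aeval_mul_of_isHomogeneous hF, aeval_X_left,
    AlgHom.id_apply]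

lemma dehomogenize_pointForm_left (hdet : r 0 * r' 1 - r 1 * r' 0 = 1) :
    dehomogenize r r' (pointForm r) = 1 := by
  have h := congrArg (Polynomial.C : k → k[X]) hdet
  simp only [map_sub, map_mul, map_one] at h
  simp only [dehomogenize, pointForm, map_sub, map_mul, algHom_C, aeval_X,
    Polynomial.algebraMap_eq]
  linear_combination h

lemma dehomogenize_pointForm_right (hdet : r 0 * r' 1 - r 1 * r' 0 = 1) :
    dehomogenize r r' (-pointForm r') = Polynomial.X := by
  have h := congrArg (Polynomial.C : k → k[X]) hdet
  simp only [map_sub, map_mul, map_one] at h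
  simp only [dehomogenize, pointForm, map_neg, map_sub, map_mul, algHom_C, aeval_X,
    Polynomial.algebraMap_eq]
  linear_combination Polynomial.X * h

lemma ne_zero_of_det_eq_one [Nontrivial k] (hdet : r 0 * r' 1 - r 1 * r' 0 = 1) : r ≠ 0 := by
  rintro rfl
  simp at hdet

lemma pointForm_ne_zero [Nontrivial k] (hdet : r 0 * r' 1 - r 1 * r' 0 = 1) : pointForm r ≠ 0 := by
  intro h
  have h1 := dehomogenize_pointForm_left hdet
  rw [h, map_zero] at h1
  exact zero_ne_one h1

lemma eq_zero_of_dehomogenize_eq_zero [IsDomain k] (hdet : r 0 * r' 1 - r 1 * r' 0 = 1)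
    (hF : F.IsHomogeneous e) (h : dehomogenize r r' F = 0) : F = 0 := by
  let ι := algebraMap (MvPolynomial (Fin 2) k) (FractionRing (MvPolynomial (Fin 2) k))
  have hι : Function.Injective ι := IsFractionRing.injective _ _
  have hv : ι (pointForm r) ≠ 0 := (map_ne_zero_iff _ hι).2 (pointForm_ne_zero hdet)
  have hF' := aeval_eq_pow_mul_aeval_dehomogenize (r := r) (r' := r') hF
    (mul_div_cancel₀ (ι (-pointForm r')) hv)
  rw [h, map_zero, mul_zero] at hF'
  refine (map_eq_zero_iff ι hι).1 ?_
  have hcomp : IsScalarTower.toAlgHom k (MvPolynomial (Fin 2) k) _ = aeval fun i =>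
      ι (pointForm r) * algebraMap k _ (r' i) + ι (-pointForm r') * algebraMap k _ (r i) := by
    ext i
    rw [aeval_X]
    change ι (X i) = _
    rw [X_eq_pointForm_mul_sub hdet i, map_add, map_mul, map_mul]
    rfl
  exact (DFunLike.congr_fun hcomp F).trans hF'

lemma exists_dehomogenize_eq (hdet : r 0 * r' 1 - r 1 * r' 0 = 1) {p : k[X]}
    (hp : p.natDegree ≤ e) : ∃ F, F.IsHomogeneous e ∧ dehomogenize r r' F = p := by
  refine ⟨∑ i ∈ Finset.range (e + 1),
    C (p.coeff i) * ((-pointForm r') ^ i * pointForm r ^ (e - i)), ?_, ?_⟩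
  · refine IsHomogeneous.sum _ _ _ fun i hi => ?_
    have h := (((pointForm_isHomogeneous r').neg.pow i).mul
      ((pointForm_isHomogeneous r).pow (e - i))).C_mul (p.coeff i)
    rwa [one_mul, one_mul, Nat.add_sub_cancel' (Finset.mem_range_succ_iff.1 hi)] at h
  · rw [map_sum]
    conv_rhs => rw [p.as_sum_range' (e + 1) (Nat.lt_succ_of_le hp)]
    refine Finset.sum_congr rfl fun i _ => ?_
    rw [map_mul, map_mul, map_pow, map_pow, dehomogenize_pointForm_left hdet,
      dehomogenize_pointForm_right hdet, algHom_C, Polynomial.algebraMap_eq, one_pow, mul_one,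
      Polynomial.C_mul_X_pow_eq_monomial]

lemma pointForm_dvd_of_eval_eq_zero (hdet : r 0 * r' 1 - r 1 * r' 0 = 1)
    (hF : F.IsHomogeneous e) (h : eval r F = 0) : pointForm r ∣ F := by
  rw [← Ideal.mem_span_singleton, ← Ideal.Quotient.eq_zero_iff_mem]
  let π := Ideal.Quotient.mkₐ k (Ideal.span {pointForm r})
  have hr : π (pointForm r) = 0 := Ideal.Quotient.mk_singleton_self _
  have hX (i : Fin 2) : π (X i) = -π (pointForm r') * algebraMap k _ (r i) := by
    rw [X_eq_pointForm_mul_sub hdet i, map_add, map_mul, hr, zero_mul, zero_add, map_mul, map_neg]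
    rfl
  calc π F = aeval (fun i => π (X i)) F := DFunLike.congr_fun (aeval_unique π) F
    _ = (-π (pointForm r')) ^ e * algebraMap k _ (eval r F) := by
        rw [funext hX, aeval_mul_of_isHomogeneous hF]
        exact congrArg _ (MvPolynomial.aeval_algebraMap_apply _ r F)
    _ = 0 := by rw [h, map_zero, mul_zero]

end Forms

section ProjectiveLine

variable {k : Type*} [Field k]

lemma exists_det_eq_one {r : Fin 2 → k} (hr : r ≠ 0) :
    ∃ r' : Fin 2 → k, r 0 * r' 1 - r 1 * r' 0 = 1 := by
  rcases eq_or_ne (r 0) 0 with h0 | h0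
  · have h1 : r 1 ≠ 0 := fun h1 => hr (funext (Fin.forall_fin_two.2 ⟨h0, h1⟩))
    exact ⟨![-(r 1)⁻¹, 0], by simp [h1]⟩
  · exact ⟨![0, (r 0)⁻¹], by simp [h0]⟩

lemma exists_ne_zero_eval_eq_zero [IsAlgClosed k] {F : MvPolynomial (Fin 2) k} {e : ℕ}
    (hF : F.IsHomogeneous e) (he : e ≠ 0) : ∃ z : Fin 2 → k, z ≠ 0 ∧ eval z F = 0 := by
  let f := dehomogenize ![0, 1] ![1, 0] F
  by_cases hf : f.degree = 0
  · refine ⟨![0, 1], fun h => by simpa using congrFun h 1, ?_⟩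
    rw [← coeff_dehomogenize (r' := ![1, 0]) hF]
    refine Polynomial.coeff_eq_zero_of_natDegree_lt ?_
    rw [Polynomial.natDegree_eq_of_degree_eq_some hf]
    exact he.bot_lt
  · obtain ⟨t, ht⟩ := IsAlgClosed.exists_root f hf
    exact ⟨_, fun h => by simpa using congrFun h 0, (eval_dehomogenize t F).symm.trans ht⟩

lemma exists_eval_ne_zero_of_idealHeight_eq_two {ι : Type*} {d : ℕ}
    {g : ι → MvPolynomial (Fin 2) k} (hg : ∀ i, (g i).IsHomogeneous d)
    (hht : idealHeight (Ideal.span (Set.range g)) = 2) {z : Fin 2 → k} (hz : z ≠ 0) :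
    ∃ i, eval z (g i) ≠ 0 := by
  by_contra! hcon
  obtain ⟨z', hdet⟩ := exists_det_eq_one hz
  have hle : Ideal.span (Set.range g) ≤ Ideal.span {pointForm z} := by
    refine Ideal.span_le.2 ?_
    rintro _ ⟨i, rfl⟩
    exact Ideal.mem_span_singleton.2 (pointForm_dvd_of_eval_eq_zero hdet (hg i) (hcon i))
  have hne : Ideal.span {pointForm z} ≠ ⊤ := by
    intro h
    obtain ⟨b, hb⟩ := Ideal.mem_span_singleton.1 ((Ideal.eq_top_iff_one _).1 h)
    have hb' := congrArg (eval z) hb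
    simp [pointForm, mul_comm (z 1)] at hb'
  obtain ⟨P, hP⟩ := Ideal.nonempty_minimalPrimes hne
  let p : PrimeSpectrum (MvPolynomial (Fin 2) k) := ⟨P, hP.1.1⟩
  have hP1 : p.asIdeal.height ≤ 1 :=
    Ideal.height_le_one_of_isPrincipal_of_mem_minimalPrimes _ P hP
  have hP2 : (2 : ℕ∞) ≤ p.asIdeal.height := by
    rw [PrimeSpectrum.height_eq_orderHeight p, ← hht]
    exact iInf₂_le p (hle.trans hP.1.2)
  exact absurd (hP2.trans hP1) (by decide)

end ProjectiveLine

/-! ### The local ring of the curve -/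

section ConeRing

variable {k : Type*} [Field k] {d : ℕ} {g : Fin 3 → MvPolynomial (Fin 2) k}

lemma mem_coneRing_iff {f : MvPolynomial (Fin 2) k} :
    f ∈ coneRing g ↔ ∃ Q : MvPolynomial (Fin 3) k, aeval g Q = f := by
  rw [coneRing, Algebra.adjoin_range_eq_range_aeval]
  rfl

lemma homogeneousComponent_aeval {σ τ : Type*} {g : σ → MvPolynomial τ k}
    (hg : ∀ j, (g j).IsHomogeneous d) (Q : MvPolynomial σ k) (e : ℕ) :
    homogeneousComponent e (aeval g Q) = ∑ n ∈ Finset.range (Q.totalDegree + 1),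
      if e = d * n then aeval g (homogeneousComponent n Q) else 0 := by
  conv_lhs => rw [← sum_homogeneousComponent Q, map_sum, map_sum]
  exact Finset.sum_congr rfl fun n _ =>
    homogeneousComponent_of_mem ((homogeneousComponent_isHomogeneous n Q).aeval g hg)

lemma homogeneousComponent_mem_coneRing (hg : ∀ j, (g j).IsHomogeneous d)
    {f : MvPolynomial (Fin 2) k} (hf : f ∈ coneRing g) (e : ℕ) :
    homogeneousComponent e f ∈ coneRing g := by
  obtain ⟨Q, rfl⟩ := mem_coneRing_iff.1 hf
  rw [homogeneousComponent_aeval hg]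
  refine sum_mem fun n _ => ?_
  split_ifs
  · exact mem_coneRing_iff.2 ⟨_, rfl⟩
  · exact zero_mem _

lemma exists_aeval_eq_of_isHomogeneous (hd : d ≠ 0) (hg : ∀ j, (g j).IsHomogeneous d)
    {f : coneRing g} (hf0 : f ≠ 0) {e : ℕ} (hf : (f : MvPolynomial (Fin 2) k).IsHomogeneous e) :
    ∃ n, e = d * n ∧ ∃ P : MvPolynomial (Fin 3) k, P.IsHomogeneous n ∧ aeval (coneGen g) P = f := by
  obtain ⟨Q, hQ⟩ := mem_coneRing_iff.1 f.2
  have hsum := homogeneousComponent_aeval hg Q e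
  rw [hQ, homogeneousComponent_eq_self hf] at hsum
  have hf0' : (f : MvPolynomial (Fin 2) k) ≠ 0 := by exact_mod_cast hf0
  obtain ⟨n, hn, hne⟩ := Finset.exists_ne_zero_of_sum_ne_zero (hsum ▸ hf0')
  obtain ⟨he, -⟩ := ite_ne_right_iff.1 hne
  refine ⟨n, he, _, homogeneousComponent_isHomogeneous n Q, Subtype.ext ?_⟩
  rw [hsum, Finset.sum_eq_single_of_mem n hn fun m _ hm => if_neg fun h =>
    hm (Nat.eq_of_mul_eq_mul_left hd.bot_lt (h.symm.trans he)), if_pos he]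
  exact comp_aeval_apply (coneGen g) (coneRing g).val _

lemma smul_aeval_sub_smul_pow_mem {σ R : Type*} [CommRing R] [Algebra k R] {I : Ideal R}
    {a : σ → k} {i : σ} {x : σ → R} (hx : ∀ j, a i • x j - a j • x i ∈ I)
    {P : MvPolynomial σ k} {n : ℕ} (hP : P.IsHomogeneous n) :
    a i ^ n • aeval x P - eval a P • x i ^ n ∈ I := by
  let π := Ideal.Quotient.mkₐ k I
  have hπ (j : σ) : algebraMap k (R ⧸ I) (a i) * π (x j) = π (x i) * algebraMap k _ (a j) := by
    have h := (Ideal.Quotient.mk_eq_mk_iff_sub_mem _ _).2 (hx j)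
    rw [mul_comm (π (x i)), ← Algebra.smul_def, ← Algebra.smul_def]
    exact h
  refine (Ideal.Quotient.mk_eq_mk_iff_sub_mem _ _).1 ?_
  calc π (a i ^ n • aeval x P) = algebraMap k (R ⧸ I) (a i) ^ n * aeval (π ∘ x) P := by
        rw [map_smul, Algebra.smul_def, map_pow]
        exact congrArg _ (comp_aeval_apply x π P)
    _ = aeval (fun j => π (x i) * algebraMap k (R ⧸ I) (a j)) P := by
        rw [← aeval_mul_of_isHomogeneous hP]
        exact congrArg (aeval · P) (funext hπ)
    _ = π (x i) ^ n * algebraMap k (R ⧸ I) (eval a P) := by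
        rw [aeval_mul_of_isHomogeneous hP]
        exact congrArg _ (MvPolynomial.aeval_algebraMap_apply _ a P)
    _ = π (eval a P • x i ^ n) := by rw [map_smul, Algebra.smul_def, map_pow, mul_comm]

lemma mul_sub_mul_mem_of_crossProduct_mem {R : Type*} [CommRing R] {I : Ideal R} {a x : Fin 3 → R}
    (h : ∀ l, crossProduct a x l ∈ I) (i j : Fin 3) : a i * x j - a j * x i ∈ I := by
  have hdot : a i * x j - a j * x i =
      crossProduct a x ⬝ᵥ crossProduct (Pi.single i 1) (Pi.single j 1) := by
    rw [cross_dot_cross]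
    simp only [dotProduct_single_one]
  rw [hdot]
  exact I.sum_mem fun l _ => I.mul_mem_right _ (h l)

lemma aeval_mem_span_crossProduct {R : Type*} [CommRing R] [Algebra k R] {a : Fin 3 → k} {i : Fin 3}
    (ha : a i ≠ 0) (x : Fin 3 → R) {P : MvPolynomial (Fin 3) k} {n : ℕ} (hP : P.IsHomogeneous n)
    (hPa : eval a P = 0) :
    aeval x P ∈ Ideal.span (Set.range (crossProduct (algebraMap k R ∘ a) x)) := by
  have hcross := mul_sub_mul_mem_of_crossProduct_mem (a := algebraMap k R ∘ a) (x := x)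
    (I := Ideal.span (Set.range (crossProduct (algebraMap k R ∘ a) x)))
    fun l => Ideal.subset_span ⟨l, rfl⟩
  have hmem := smul_aeval_sub_smul_pow_mem (x := x)
    (fun j => by simpa only [Algebra.smul_def, Function.comp_apply] using hcross i j) hP
  rwa [hPa, zero_smul, sub_zero, Submodule.smul_mem_iff _ (pow_ne_zero n ha)] at hmem

lemma map_crossProduct {R S : Type*} [CommRing R] [CommRing S] (f : R →+* S) (a x : Fin 3 → R)
    (l : Fin 3) : f (crossProduct a x l) = crossProduct (f ∘ a) (f ∘ x) l := by
  fin_cases l <;> simp [cross_apply]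

end ConeRing

section CurvePoint

variable {k : Type*} [Field k] {d : ℕ} {g : Fin 3 → MvPolynomial (Fin 2) k} {a : Fin 3 → k}
  {i : Fin 3} {q : Fin 2 → k}

/-- `a` is the image of `q` under the forms `g` of degree `d`, and its coordinate `a i` can serve as
the denominator of affine coordinates around `a`. -/
structure IsCurvePoint (d : ℕ) (g : Fin 3 → MvPolynomial (Fin 2) k) (a : Fin 3 → k) (i : Fin 3)
    (q : Fin 2 → k) : Prop where
  degree_ne_zero : d ≠ 0
  isHomogeneous (j : Fin 3) : (g j).IsHomogeneous d
  eval_eq (j : Fin 3) : eval q (g j) = a j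
  ne_zero : a i ≠ 0

lemma exists_eval_eq_of_onCurve [IsAlgClosed k] (hd : d ≠ 0) (hg : ∀ j, (g j).IsHomogeneous d)
    (ha : onCurve g a) : ∃ q, ∀ j, eval q (g j) = a j := by
  obtain ⟨q, -, t, -, hat⟩ := ha
  obtain ⟨u, rfl⟩ := IsAlgClosed.exists_pow_nat_eq t hd.bot_lt
  refine ⟨fun l => u * q l, fun j => ?_⟩
  rw [hat]
  exact aeval_mul_of_isHomogeneous (hg j) u q

lemma eval_aeval_coneGen (z : Fin 2 → k) (P : MvPolynomial (Fin 3) k) :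
    eval z (aeval (coneGen g) P : MvPolynomial (Fin 2) k) = eval (fun j => eval z (g j)) P :=
  comp_aeval_apply (coneGen g) ((aeval z).comp (coneRing g).val) P

lemma ne_zero_of_eval_ne_zero {z : Fin 2 → k} {s : coneRing g}
    (hs : eval z (s : MvPolynomial (Fin 2) k) ≠ 0) : s ≠ 0 := by
  rintro rfl
  exact hs (map_zero _)

namespace IsCurvePoint

lemma eval_aeval_coneGen_eq (h : IsCurvePoint d g a i q) (P : MvPolynomial (Fin 3) k) :
    eval q (aeval (coneGen g) P : MvPolynomial (Fin 2) k) = eval a P := by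
  rw [eval_aeval_coneGen, funext h.eval_eq]

lemma mem_pointIdeal_iff (h : IsCurvePoint d g a i q) {s : coneRing g} {e : ℕ}
    (hs : (s : MvPolynomial (Fin 2) k).IsHomogeneous e) :
    s ∈ pointIdeal g a ↔ eval q (s : MvPolynomial (Fin 2) k) = 0 := by
  constructor
  · intro hmem
    have hle : pointIdeal g a ≤ RingHom.ker ((eval q).comp (coneRing g).val.toRingHom) := by
      refine Ideal.span_le.2 ?_
      rintro _ ⟨j, l, rfl⟩
      change eval q (a j • g l - a l • g j) = 0
      rw [map_sub, smul_eval, smul_eval, h.eval_eq, h.eval_eq]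
      ring
    exact hle hmem
  · intro hq
    rcases eq_or_ne s 0 with rfl | hs0
    · exact zero_mem _
    obtain ⟨n, -, P, hP, rfl⟩ :=
      exists_aeval_eq_of_isHomogeneous h.degree_ne_zero h.isHomogeneous hs0 hs
    have hmem := smul_aeval_sub_smul_pow_mem (I := pointIdeal g a) (a := a) (x := coneGen g)
      (i := i) (fun j => Ideal.subset_span ⟨i, j, rfl⟩) hP
    rwa [← h.eval_aeval_coneGen_eq, hq, zero_smul, sub_zero,
      Submodule.smul_mem_iff _ (pow_ne_zero n h.ne_zero)] at hmem

lemma mem_curveLocalRing_iff (h : IsCurvePoint d g a i q) {x : FractionRing (coneRing g)} :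
    x ∈ curveLocalRing g a ↔ ∃ (f s : coneRing g) (e : ℕ),
      (f : MvPolynomial (Fin 2) k).IsHomogeneous e ∧
      (s : MvPolynomial (Fin 2) k).IsHomogeneous e ∧
      eval q (s : MvPolynomial (Fin 2) k) ≠ 0 ∧ algebraMap _ _ s * x = algebraMap _ _ f := by
  constructor
  · intro hx
    induction hx using Subring.closure_induction with
    | mem x hx =>
      obtain ⟨f, s, e, hf, hs, hsp, hsx⟩ := hx
      exact ⟨f, s, e, hf, hs, fun h0 => hsp ((h.mem_pointIdeal_iff hs).2 h0), hsx⟩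
    | zero => exact ⟨0, 1, 0, isHomogeneous_zero _ _ _, isHomogeneous_one _ _, by simp, by simp⟩
    | one => exact ⟨1, 1, 0, isHomogeneous_one _ _, isHomogeneous_one _ _, by simp, by simp⟩
    | add x y _ _ hx hy =>
      obtain ⟨f, s, e, hf, hs, hsp, hsx⟩ := hx
      obtain ⟨f', s', e', hf', hs', hsp', hsx'⟩ := hy
      refine ⟨f * s' + s * f', s * s', e + e', (hf.mul hs').add (hs.mul hf'), hs.mul hs', ?_, ?_⟩
      · rw [MulMemClass.coe_mul, map_mul]
        exact mul_ne_zero hsp hsp'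
      · simp only [map_add, map_mul, ← hsx, ← hsx']
        ring
    | neg x _ hx =>
      obtain ⟨f, s, e, hf, hs, hsp, hsx⟩ := hx
      exact ⟨-f, s, e, hf.neg, hs, hsp, by rw [map_neg, ← hsx, mul_neg]⟩
    | mul x y _ _ hx hy =>
      obtain ⟨f, s, e, hf, hs, hsp, hsx⟩ := hx
      obtain ⟨f', s', e', hf', hs', hsp', hsx'⟩ := hy
      refine ⟨f * f', s * s', e + e', hf.mul hf', hs.mul hs', ?_, ?_⟩
      · rw [MulMemClass.coe_mul, map_mul]
        exact mul_ne_zero hsp hsp'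
      · simp only [map_mul, ← hsx, ← hsx']
        ring
  · rintro ⟨f, s, e, hf, hs, hsp, hsx⟩
    exact Subring.subset_closure
      ⟨f, s, e, hf, hs, fun h0 => hsp ((h.mem_pointIdeal_iff hs).1 h0), hsx⟩

lemma algebraMap_ne_zero {s : coneRing g} (hs : eval q (s : MvPolynomial (Fin 2) k) ≠ 0) :
    algebraMap (coneRing g) (FractionRing (coneRing g)) s ≠ 0 :=
  (map_ne_zero_iff _ (IsFractionRing.injective _ _)).2 (ne_zero_of_eval_ne_zero hs)

lemma isUnit_iff (h : IsCurvePoint d g a i q) {x : curveLocalRing g a} {f s : coneRing g} {e : ℕ}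
    (hf : (f : MvPolynomial (Fin 2) k).IsHomogeneous e)
    (hs : (s : MvPolynomial (Fin 2) k).IsHomogeneous e)
    (hsq : eval q (s : MvPolynomial (Fin 2) k) ≠ 0)
    (hx : algebraMap _ (FractionRing (coneRing g)) s * x = algebraMap _ _ f) :
    IsUnit x ↔ eval q (f : MvPolynomial (Fin 2) k) ≠ 0 := by
  constructor
  · intro hu hfq
    obtain ⟨y, hxy⟩ := hu.exists_right_inv
    obtain ⟨f', s', -, -, -, hsq', hy⟩ := h.mem_curveLocalRing_iff.1 y.2
    have hxy' : (x : FractionRing (coneRing g)) * y = 1 := congrArg Subtype.val hxy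
    have hK : algebraMap _ (FractionRing (coneRing g)) (f * f') = algebraMap _ _ (s * s') := by
      rw [map_mul, map_mul, ← hx, ← hy]
      linear_combination (algebraMap _ _ s * algebraMap _ _ s') * hxy'
    have hcone := congrArg (fun z : coneRing g => eval q (z : MvPolynomial (Fin 2) k))
      (IsFractionRing.injective _ _ hK)
    simp only [MulMemClass.coe_mul, map_mul, hfq, zero_mul] at hcone
    exact mul_ne_zero hsq hsq' hcone.symm
  · intro hfq
    have hf0 := algebraMap_ne_zero hfq
    have hmem : algebraMap _ (FractionRing (coneRing g)) s / algebraMap _ _ f ∈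
        curveLocalRing g a :=
      h.mem_curveLocalRing_iff.2 ⟨s, f, e, hs, hf, hfq, mul_div_cancel₀ _ hf0⟩
    refine IsUnit.of_mul_eq_one ⟨_, hmem⟩ (Subtype.ext ?_)
    change (x : FractionRing (coneRing g)) * _ = 1
    rw [mul_div_assoc', mul_comm, hx, div_self hf0]

lemma isLocalRing (h : IsCurvePoint d g a i q) : IsLocalRing (curveLocalRing g a) := by
  refine IsLocalRing.of_nonunits_add fun x y hx hy => ?_
  obtain ⟨f, s, e, hf, hs, hsq, hsx⟩ := h.mem_curveLocalRing_iff.1 x.2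
  obtain ⟨f', s', e', hf', hs', hsq', hsx'⟩ := h.mem_curveLocalRing_iff.1 y.2
  have hfq := not_not.1 (mt (h.isUnit_iff hf hs hsq hsx).2 hx)
  have hfq' := not_not.1 (mt (h.isUnit_iff hf' hs' hsq' hsx').2 hy)
  refine mt (h.isUnit_iff (f := f * s' + s * f') (s := s * s') ((hf.mul hs').add (hs.mul hf'))
    (hs.mul hs') ?_ ?_).1 (not_not.2 ?_)
  · rw [MulMemClass.coe_mul, map_mul]
    exact mul_ne_zero hsq hsq'
  · simp only [map_add, map_mul, ← hsx, ← hsx', Subring.coe_add]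
    ring
  · rw [AddMemClass.coe_add, MulMemClass.coe_mul, MulMemClass.coe_mul, map_add, map_mul, map_mul,
      hfq, hfq', zero_mul, mul_zero, add_zero]

lemma algebraMap_mem (h : IsCurvePoint d g a i q) (c : k) :
    algebraMap k (FractionRing (coneRing g)) c ∈ curveLocalRing g a :=
  h.mem_curveLocalRing_iff.2 ⟨algebraMap k _ c, 1, 0, isHomogeneous_C _ c, isHomogeneous_one _ _,
    by simp, by rw [map_one, one_mul, ← IsScalarTower.algebraMap_apply]⟩

lemma eval_coneGen_ne_zero (h : IsCurvePoint d g a i q) :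
    eval q (coneGen g i : MvPolynomial (Fin 2) k) ≠ 0 :=
  (h.eval_eq i).trans_ne h.ne_zero

/-- The affine coordinate `g j / g i` in the local ring at `a`. -/
noncomputable def coord (h : IsCurvePoint d g a i q) (j : Fin 3) : curveLocalRing g a :=
  ⟨algebraMap _ _ (coneGen g j) / algebraMap _ _ (coneGen g i), h.mem_curveLocalRing_iff.2
    ⟨coneGen g j, coneGen g i, d, h.isHomogeneous j, h.isHomogeneous i, h.eval_coneGen_ne_zero,
      mul_div_cancel₀ _ (algebraMap_ne_zero h.eval_coneGen_ne_zero)⟩⟩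

lemma algebraMap_mul_coord (h : IsCurvePoint d g a i q) (j : Fin 3) :
    algebraMap _ (FractionRing (coneRing g)) (coneGen g i) * h.coord j =
      algebraMap _ _ (coneGen g j) :=
  mul_div_cancel₀ _ (algebraMap_ne_zero h.eval_coneGen_ne_zero)

end IsCurvePoint

end CurvePoint

section PointSyzygy

variable {k : Type*} [Field k] {d : ℕ} {g : Fin 3 → MvPolynomial (Fin 2) k} {a : Fin 3 → k}
  {i : Fin 3} {q : Fin 2 → k}

/-- The cross product `a × g`. Its entries are the pullbacks of lines through `a` which span all
such lines, and it is orthogonal to `g`. -/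
noncomputable def pointSyzygy (g : Fin 3 → MvPolynomial (Fin 2) k) (a : Fin 3 → k) :
    Fin 3 → coneRing g :=
  crossProduct (algebraMap k (coneRing g) ∘ a) (coneGen g)

lemma map_pointSyzygy {R : Type*} [CommRing R] (f : MvPolynomial (Fin 2) k →+* R) (l : Fin 3) :
    f (pointSyzygy g a l) = crossProduct (fun j => f (C (a j))) (fun j => f (g j)) l :=
  map_crossProduct (f.comp (coneRing g).val.toRingHom) _ _ l

lemma coe_pointSyzygy (l : Fin 3) :
    (pointSyzygy g a l : MvPolynomial (Fin 2) k) = crossProduct (fun j => C (a j)) g l :=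
  map_pointSyzygy (RingHom.id _) l

lemma eval_pointSyzygy (z : Fin 2 → k) (l : Fin 3) :
    eval z (pointSyzygy g a l : MvPolynomial (Fin 2) k) =
      crossProduct a (fun j => eval z (g j)) l := by
  simpa only [eval_C] using map_pointSyzygy (eval z) l

lemma pointSyzygy_isHomogeneous (hg : ∀ j, (g j).IsHomogeneous d) (l : Fin 3) :
    (pointSyzygy g a l : MvPolynomial (Fin 2) k).IsHomogeneous d := by
  rw [coe_pointSyzygy, cross_apply]
  fin_cases l <;> exact ((hg _).C_mul _).sub ((hg _).C_mul _)

namespace IsCurvePoint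

/-- The `k`-algebra structure on the local ring at `a`. -/
noncomputable abbrev algebra (h : IsCurvePoint d g a i q) : Algebra k (curveLocalRing g a) :=
  ((algebraMap k (FractionRing (coneRing g))).codRestrict _ h.algebraMap_mem).toAlgebra

/-- The germs `pointSyzygy g a l / g i`, which generate the maximal ideal of the local ring at
`a`. -/
noncomputable def localSyzygy (h : IsCurvePoint d g a i q) : Fin 3 → curveLocalRing g a :=
  let _ := h.algebra
  crossProduct (algebraMap k (curveLocalRing g a) ∘ a) h.coord

lemma algebraMap_mul_localSyzygy (h : IsCurvePoint d g a i q) (l : Fin 3) :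
    algebraMap _ (FractionRing (coneRing g)) (coneGen g i) * h.localSyzygy l =
      algebraMap _ _ (pointSyzygy g a l) := by
  have hcoord : (fun j => algebraMap _ _ (coneGen g i) * (h.coord j : FractionRing (coneRing g))) =
      fun j => algebraMap _ _ (coneGen g j) := funext h.algebraMap_mul_coord
  have hlocal : (h.localSyzygy l : FractionRing (coneRing g)) =
      crossProduct (fun j => algebraMap k _ (a j)) (fun j => (h.coord j : FractionRing _)) l :=
    map_crossProduct (curveLocalRing g a).subtype _ _ l
  have hcone : algebraMap _ (FractionRing (coneRing g)) (pointSyzygy g a l) =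
      crossProduct (fun j => algebraMap k _ (a j)) (fun j => algebraMap _ _ (coneGen g j)) l :=
    (map_crossProduct (algebraMap _ _) _ _ l).trans
      (by simp only [Function.comp_def, ← IsScalarTower.algebraMap_apply])
  rw [hlocal, hcone, ← hcoord]
  exact (congrFun (map_smul (crossProduct _) (algebraMap _ _ (coneGen g i)) _) l).symm

lemma not_isUnit_localSyzygy (h : IsCurvePoint d g a i q) (l : Fin 3) :
    ¬IsUnit (h.localSyzygy l) := by
  rw [h.isUnit_iff (pointSyzygy_isHomogeneous h.isHomogeneous l) (h.isHomogeneous i)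
    h.eval_coneGen_ne_zero (h.algebraMap_mul_localSyzygy l), not_not, eval_pointSyzygy,
    funext h.eval_eq, cross_self, Pi.zero_apply]

lemma algebraMap_pow_mul_aeval_coord (h : IsCurvePoint d g a i q) {P : MvPolynomial (Fin 3) k}
    {n : ℕ} (hP : P.IsHomogeneous n) :
    let _ := h.algebra
    algebraMap _ (FractionRing (coneRing g)) (coneGen g i) ^ n *
      (aeval h.coord P : curveLocalRing g a) =
      algebraMap _ _ (aeval (coneGen g) P) := by
  intro _
  have hcoe : ((aeval h.coord P : curveLocalRing g a) : FractionRing (coneRing g)) =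
      aeval (fun j => (h.coord j : FractionRing (coneRing g))) P :=
    map_aeval h.coord (curveLocalRing g a).subtype P
  rw [hcoe, ← aeval_mul_of_isHomogeneous hP, funext h.algebraMap_mul_coord]
  exact aeval_algebraMap_apply _ _ P

lemma nuIdeal_eq_span (h : IsCurvePoint d g a i q) :
    nuIdeal (curveLocalRing g a) = Ideal.span (Set.range h.localSyzygy) := by
  refine le_antisymm (Ideal.span_le.2 fun x hx => ?_) (Ideal.span_le.2 ?_)
  · obtain ⟨f, s, e, hf, hs, hsq, hsx⟩ := h.mem_curveLocalRing_iff.1 x.2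
    have hs0 := algebraMap_ne_zero hsq
    have hfq := not_not.1 (mt (h.isUnit_iff hf hs hsq hsx).2 hx)
    rcases eq_or_ne f 0 with rfl | hf0
    · rw [map_zero, mul_eq_zero_iff_left hs0, ZeroMemClass.coe_eq_zero] at hsx
      exact hsx ▸ zero_mem _
    obtain ⟨n, rfl, P, hP, rfl⟩ :=
      exists_aeval_eq_of_isHomogeneous h.degree_ne_zero h.isHomogeneous hf0 hf
    let y : curveLocalRing g a := ⟨algebraMap _ _ (coneGen g i ^ n) / algebraMap _ _ s,
      h.mem_curveLocalRing_iff.2 ⟨coneGen g i ^ n, s, d * n, (h.isHomogeneous i).pow n, hs, hsq,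
        mul_div_cancel₀ _ hs0⟩⟩
    let _ := h.algebra
    have hxy : x = y * aeval h.coord P := Subtype.ext (mul_left_cancel₀ hs0 (by
      rw [hsx, ← h.algebraMap_pow_mul_aeval_coord hP, Subring.coe_mul, ← mul_assoc,
        mul_div_cancel₀ _ hs0, map_pow]))
    rw [hxy]
    exact Ideal.mul_mem_left _ _
      (aeval_mem_span_crossProduct h.ne_zero h.coord hP (by rw [← h.eval_aeval_coneGen_eq, hfq]))
  · rintro _ ⟨l, rfl⟩
    exact Ideal.subset_span (h.not_isUnit_localSyzygy l)

end IsCurvePoint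

end PointSyzygy

section AdaptedChart

open scoped Polynomial

variable {k : Type*} [Field k]

lemma span_range_eq_top_of_exists_eval_ne_zero [IsAlgClosed k] {ι : Type*} {p : ι → k[X]}
    (h : ∀ α, ∃ j, (p j).eval α ≠ 0) : Ideal.span (Set.range p) = ⊤ := by
  obtain ⟨γ, hγ⟩ := IsPrincipalIdealRing.principal (Ideal.span (Set.range p))
  rw [hγ]
  refine Ideal.span_singleton_eq_top.2 (Polynomial.isUnit_iff_degree_eq_zero.2 ?_)
  by_contra hdeg
  obtain ⟨α, hα⟩ := IsAlgClosed.exists_root γ hdeg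
  obtain ⟨j, hj⟩ := h α
  have hmem : p j ∈ Ideal.span {γ} := hγ.le (Ideal.subset_span ⟨j, rfl⟩)
  exact hj (Polynomial.eval_eq_zero_of_dvd_of_eval_eq_zero (Ideal.mem_span_singleton.1 hmem) hα)

variable {d : ℕ} {g : Fin 3 → MvPolynomial (Fin 2) k} {a : Fin 3 → k} {i : Fin 3}
  {q r r' : Fin 2 → k} {τ : FractionRing (coneRing g)}

lemma exists_homogeneous_mul_eq_mul (hd : d ≠ 0) (hg : ∀ j, (g j).IsHomogeneous d)
    (hbir : ∀ v ∈ Algebra.adjoin k {f : MvPolynomial (Fin 2) k | f.IsHomogeneous d},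
      ∃ x ∈ Algebra.adjoin k (Set.range g), ∃ y ∈ Algebra.adjoin k (Set.range g),
        y ≠ 0 ∧ y * v = x)
    {u v : MvPolynomial (Fin 2) k} (hu : u.IsHomogeneous 1) (hv : v.IsHomogeneous 1)
    (hv0 : v ≠ 0) :
    ∃ (s t : coneRing g) (e : ℕ), (s : MvPolynomial (Fin 2) k).IsHomogeneous e ∧
      (t : MvPolynomial (Fin 2) k).IsHomogeneous e ∧ s ≠ 0 ∧
      (s : MvPolynomial (Fin 2) k) * u = t * v := by
  obtain ⟨n, rfl⟩ := Nat.exists_eq_add_one_of_ne_zero hd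
  have huv : (u * v ^ n).IsHomogeneous (n + 1) := by
    simpa [add_comm] using hu.mul (hv.pow n)
  have hvv : (v ^ (n + 1)).IsHomogeneous (n + 1) := by simpa using hv.pow (n + 1)
  obtain ⟨x, hx, y, hy, hy0, hxy⟩ := hbir _ (Algebra.subset_adjoin huv)
  obtain ⟨x', hx', y', hy', hy0', hxy'⟩ := hbir _ (Algebra.subset_adjoin hvv)
  have hne : y * x' ≠ 0 := mul_ne_zero hy0 (hxy' ▸ mul_ne_zero hy0' (pow_ne_zero _ hv0))
  have hratio : u * (y * x') = v * (x * y') := by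
    rw [← hxy, ← hxy']
    ring
  obtain ⟨e, he⟩ : ∃ e, homogeneousComponent e (y * x') ≠ 0 := by
    by_contra! h0
    exact hne (by rw [← sum_homogeneousComponent (y * x'), Finset.sum_eq_zero fun e _ => h0 e])
  refine ⟨⟨_, homogeneousComponent_mem_coneRing hg (mul_mem hy hx') e⟩,
    ⟨_, homogeneousComponent_mem_coneRing hg (mul_mem hx hy') e⟩, e,
    homogeneousComponent_isHomogeneous e _, homogeneousComponent_isHomogeneous e _,
    fun h0 => he (congrArg Subtype.val h0), ?_⟩
  change homogeneousComponent e (y * x') * u = homogeneousComponent e (x * y') * v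
  rw [mul_comm _ u, mul_comm _ v, ← homogeneousComponent_add_mul hu,
    ← homogeneousComponent_add_mul hv, hratio]

/-- In addition to `IsCurvePoint`, `τ` is the affine coordinate, in the function field of the curve,
of the chart `t ↦ r' + t r` of the projective line; the chart is chosen so that its point at
infinity is a zero of `g i`. -/
structure IsAdaptedChart (d : ℕ) (g : Fin 3 → MvPolynomial (Fin 2) k) (a : Fin 3 → k) (i : Fin 3)
    (q r r' : Fin 2 → k) (τ : FractionRing (coneRing g)) : Prop extends
    IsCurvePoint d g a i q where
  det_eq_one : r 0 * r' 1 - r 1 * r' 0 = 1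
  eval_eq_zero : eval r (g i) = 0
  exists_eval_ne_zero (z : Fin 2 → k) (hz : z ≠ 0) : ∃ j, eval z (g j) ≠ 0
  exists_ratio : ∃ (s t : coneRing g) (e : ℕ), (s : MvPolynomial (Fin 2) k).IsHomogeneous e ∧
    (t : MvPolynomial (Fin 2) k).IsHomogeneous e ∧ s ≠ 0 ∧
    (s : MvPolynomial (Fin 2) k) * -pointForm r' = t * pointForm r ∧
    algebraMap _ _ s * τ = algebraMap _ _ t

lemma IsCurvePoint.exists_isAdaptedChart [IsAlgClosed k] (h : IsCurvePoint d g a i q)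
    (hht : idealHeight (Ideal.span (Set.range g)) = 2)
    (hbir : ∀ v ∈ Algebra.adjoin k {f : MvPolynomial (Fin 2) k | f.IsHomogeneous d},
      ∃ x ∈ Algebra.adjoin k (Set.range g), ∃ y ∈ Algebra.adjoin k (Set.range g),
        y ≠ 0 ∧ y * v = x) :
    ∃ r r' τ, IsAdaptedChart d g a i q r r' τ := by
  obtain ⟨r, hr, hri⟩ := exists_ne_zero_eval_eq_zero (h.isHomogeneous i) h.degree_ne_zero
  obtain ⟨r', hdet⟩ := exists_det_eq_one hr
  obtain ⟨s, t, e, hs, ht, hs0, hst⟩ := exists_homogeneous_mul_eq_mul h.degree_ne_zero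
    h.isHomogeneous hbir (pointForm_isHomogeneous r').neg (pointForm_isHomogeneous r)
    (pointForm_ne_zero hdet)
  exact ⟨r, r', algebraMap _ _ t / algebraMap _ _ s, h, hdet, hri,
    fun _ => exists_eval_ne_zero_of_idealHeight_eq_two h.isHomogeneous hht,
    s, t, e, hs, ht, hs0, hst,
    mul_div_cancel₀ _ ((map_ne_zero_iff _ (IsFractionRing.injective _ _)).2 hs0)⟩

namespace IsAdaptedChart

lemma exists_pow_mul_eq (h : IsAdaptedChart d g a i q r r' τ) :
    ∃ s : coneRing g, s ≠ 0 ∧ ∀ {F : MvPolynomial (Fin 2) k} {e : ℕ}, F.IsHomogeneous e →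
      ∃ A : coneRing g, pointForm r ^ e * A = (s : MvPolynomial (Fin 2) k) ^ e * F ∧
        algebraMap _ (FractionRing (coneRing g)) A =
          algebraMap _ _ s ^ e * Polynomial.aeval τ (dehomogenize r r' F) := by
  obtain ⟨s, t, -, -, -, hs0, hst, hτ⟩ := h.exists_ratio
  refine ⟨s, hs0, fun {F e} hF =>
    ⟨aeval (fun l => s * algebraMap k _ (r' l) + t * algebraMap k _ (r l)) F, ?_, ?_⟩⟩
  · rw [← aeval_mul_pointForm h.det_eq_one hF hst]
    exact congrArg (pointForm r ^ e * ·) (comp_aeval_apply _ (coneRing g).val F)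
  · rw [← aeval_eq_pow_mul_aeval_dehomogenize hF hτ, ← aeval_algebraMap_apply]
    congr 2
    funext l
    simp only [Function.comp_apply, map_add, map_mul, ← IsScalarTower.algebraMap_apply]

lemma aeval_ne_zero (h : IsAdaptedChart d g a i q r r' τ) {P : k[X]} (hP : P ≠ 0) :
    Polynomial.aeval τ P ≠ 0 := by
  obtain ⟨F, hF, rfl⟩ := exists_dehomogenize_eq h.det_eq_one (le_refl P.natDegree)
  obtain ⟨s, hs0, hs⟩ := h.exists_pow_mul_eq
  obtain ⟨A, hA, hAK⟩ := hs hF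
  intro h0
  rw [h0, mul_zero, map_eq_zero_iff _ (IsFractionRing.injective _ _)] at hAK
  rw [hAK, ZeroMemClass.coe_zero, mul_zero, eq_comm, mul_eq_zero_iff_left (pow_ne_zero _
    (ZeroMemClass.coe_eq_zero.not.2 hs0))] at hA
  exact hP (by rw [hA, map_zero])

lemma mul_aeval_dehomogenize (h : IsAdaptedChart d g a i q r r' τ) {f s : coneRing g} {e : ℕ}
    (hf : (f : MvPolynomial (Fin 2) k).IsHomogeneous e)
    (hs : (s : MvPolynomial (Fin 2) k).IsHomogeneous e) (hs0 : s ≠ 0)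
    {x : FractionRing (coneRing g)} (hx : algebraMap _ _ s * x = algebraMap _ _ f) :
    x * Polynomial.aeval τ (dehomogenize r r' (s : MvPolynomial (Fin 2) k)) =
      Polynomial.aeval τ (dehomogenize r r' (f : MvPolynomial (Fin 2) k)) := by
  obtain ⟨w, hw0, hw⟩ := h.exists_pow_mul_eq
  obtain ⟨A, hA, hAK⟩ := hw hs
  obtain ⟨B, hB, hBK⟩ := hw hf
  have hcomm : f * A = s * B := Subtype.ext
    (mul_left_cancel₀ (pow_ne_zero e (pointForm_ne_zero h.det_eq_one)) (by
      push_cast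
      linear_combination (f : MvPolynomial (Fin 2) k) * hA - (s : MvPolynomial (Fin 2) k) * hB))
  have hcommK := congrArg (algebraMap _ (FractionRing (coneRing g))) hcomm
  rw [map_mul, map_mul, hAK, hBK, ← hx] at hcommK
  have hinj := IsFractionRing.injective (coneRing g) (FractionRing (coneRing g))
  refine mul_left_cancel₀ (mul_ne_zero ((map_ne_zero_iff _ hinj).2 hs0)
    (pow_ne_zero e ((map_ne_zero_iff _ hinj).2 hw0))) ?_
  linear_combination hcommK

lemma coord_mul_aeval (h : IsAdaptedChart d g a i q r r' τ) (j : Fin 3) :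
    (h.coord j : FractionRing (coneRing g)) * Polynomial.aeval τ (dehomogenize r r' (g i)) =
      Polynomial.aeval τ (dehomogenize r r' (g j)) :=
  h.mul_aeval_dehomogenize (f := coneGen g j) (s := coneGen g i) (h.isHomogeneous j)
    (h.isHomogeneous i) (ne_zero_of_eval_ne_zero h.eval_coneGen_ne_zero)
    (h.algebraMap_mul_coord j)

lemma add_mul_ne_zero (h : IsAdaptedChart d g a i q r r' τ) (α : k) :
    (fun l => r' l + α * r l) ≠ 0 := by
  intro h0
  have h0' (l : Fin 2) : r' l + α * r l = 0 := congrFun h0 l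
  exact one_ne_zero (α := k) (by
    linear_combination -h.det_eq_one + r 0 * h0' 1 - r 1 * h0' 0)

lemma exists_aeval_mul_eq_one [IsAlgClosed k] (h : IsAdaptedChart d g a i q r r' τ) :
    ∃ v ∈ Algebra.adjoin (curveLocalRing g a) {τ},
      Polynomial.aeval τ (dehomogenize r r' (g i)) * v = 1 := by
  have htop : Ideal.span (Set.range fun j => dehomogenize r r' (g j)) = ⊤ :=
    span_range_eq_top_of_exists_eval_ne_zero fun α => by
      simpa only [eval_dehomogenize] using h.exists_eval_ne_zero _ (h.add_mul_ne_zero α)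
  obtain ⟨c, hc⟩ := Ideal.mem_span_range_iff_exists_fun.1 ((Ideal.eq_top_iff_one _).1 htop)
  refine ⟨∑ j, Polynomial.aeval τ (c j) * h.coord j, sum_mem fun j _ =>
    mul_mem (aeval_mem_adjoin h.algebraMap_mem τ _) (Subalgebra.algebraMap_mem _ (h.coord j)), ?_⟩
  have hone := congrArg (Polynomial.aeval τ) hc
  rw [map_sum, map_one] at hone
  rw [← hone, Finset.mul_sum]
  refine Finset.sum_congr rfl fun j _ => ?_
  rw [map_mul]
  linear_combination Polynomial.aeval τ (c j) * h.coord_mul_aeval j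

lemma isIntegral (h : IsAdaptedChart d g a i q r r' τ) : IsIntegral (curveLocalRing g a) τ := by
  obtain ⟨j, hj⟩ := h.exists_eval_ne_zero r (ne_zero_of_det_eq_one h.det_eq_one)
  let σ := (algebraMap k (FractionRing (coneRing g))).codRestrict _ h.algebraMap_mem
  let G (l : Fin 3) : (curveLocalRing g a)[X] := (dehomogenize r r' (g l)).map σ
  have hdeg (l : Fin 3) : (G l).natDegree ≤ d :=
    Polynomial.natDegree_map_le.trans (natDegree_dehomogenize_le (h.isHomogeneous l))
  refine ⟨Polynomial.C (σ (eval r (g j))⁻¹) * (G j - Polynomial.C (h.coord j) * G i),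
    Polynomial.monic_of_natDegree_le_of_coeff_eq_one d ?_ ?_, ?_⟩
  · exact (Polynomial.natDegree_C_mul_le _ _).trans (Polynomial.natDegree_sub_le_iff_left
      ((Polynomial.natDegree_C_mul_le _ _).trans (hdeg i)) |>.2 (hdeg j))
  · simp only [G, Polynomial.coeff_C_mul, Polynomial.coeff_sub, Polynomial.coeff_map,
      coeff_dehomogenize (h.isHomogeneous _), h.eval_eq_zero, map_zero, mul_zero, sub_zero]
    rw [← map_mul, inv_mul_cancel₀ hj, map_one]
  · have hG (l : Fin 3) : (G l).eval₂ (algebraMap _ (FractionRing (coneRing g))) τ =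
        Polynomial.aeval τ (dehomogenize r r' (g l)) := Polynomial.eval₂_map _ _ _
    rw [Polynomial.eval₂_mul, Polynomial.eval₂_sub, Polynomial.eval₂_mul, Polynomial.eval₂_C,
      Polynomial.eval₂_C, hG, hG]
    exact mul_eq_zero_of_right _ (sub_eq_zero.2 (h.coord_mul_aeval j).symm)

lemma exists_mul_mem (h : IsAdaptedChart d g a i q r r' τ) :
    ∃ b : curveLocalRing g a, b ≠ 0 ∧ (b : FractionRing (coneRing g)) * τ ∈ curveLocalRing g a := by
  obtain ⟨n, rfl⟩ := Nat.exists_eq_add_one_of_ne_zero h.degree_ne_zero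
  obtain ⟨s, t, e, hs, ht, hs0, -, hτ⟩ := h.exists_ratio
  have hs0' := (map_ne_zero_iff _ (IsFractionRing.injective (coneRing g)
    (FractionRing (coneRing g)))).2 hs0
  have hgi := (h.isHomogeneous i).pow e
  have hgq : eval q ((coneGen g i ^ e : coneRing g) : MvPolynomial (Fin 2) k) ≠ 0 := by
    rw [SubmonoidClass.coe_pow, map_pow]
    exact pow_ne_zero e h.eval_coneGen_ne_zero
  have hgi0 := IsCurvePoint.algebraMap_ne_zero hgq
  have hdeg : e * (n + 1) = (n + 1) * e := mul_comm _ _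
  refine ⟨⟨algebraMap _ _ (s ^ (n + 1)) / algebraMap _ _ (coneGen g i ^ e),
    h.mem_curveLocalRing_iff.2 ⟨s ^ (n + 1), coneGen g i ^ e, (n + 1) * e, hdeg ▸ hs.pow (n + 1),
      hgi, hgq, mul_div_cancel₀ _ hgi0⟩⟩, fun h0 => ?_, h.mem_curveLocalRing_iff.2
    ⟨s ^ n * t, coneGen g i ^ e, (n + 1) * e, ?_, hgi, hgq, ?_⟩⟩
  · refine div_ne_zero ?_ hgi0 (congrArg Subtype.val h0)
    rw [map_pow]
    exact pow_ne_zero _ hs0'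
  · rw [← hdeg, mul_add_one]
    exact (hs.pow n).mul ht
  · rw [← mul_assoc, mul_div_cancel₀ _ hgi0, pow_succ, map_mul, map_mul, mul_assoc, hτ]

lemma isRationalOrder (h : IsAdaptedChart d g a i q r r' τ) :
    IsRationalOrder k τ (curveLocalRing g a) where
  algebraMap_mem := h.algebraMap_mem
  le_adjoin x hx := by
    obtain ⟨f, s, e, hf, hs, hsq, hsx⟩ := h.mem_curveLocalRing_iff.1 hx
    have hs0 := ne_zero_of_eval_ne_zero hsq
    have hths := h.aeval_ne_zero fun h0 =>
      hs0 (Subtype.ext (eq_zero_of_dehomogenize_eq_zero h.det_eq_one hs h0))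
    exact (IntermediateField.mem_adjoin_simple_iff k x).2
      ⟨_, _, (eq_div_iff hths).2 (h.mul_aeval_dehomogenize hf hs hs0 hsx)⟩
  isIntegral := h.isIntegral
  exists_mul_mem := h.exists_mul_mem

end IsAdaptedChart

end AdaptedChart

/-! ### Multiplicities at a point of the curve -/

section LocalEquation

open scoped Polynomial

/-- `H` is the greatest common divisor of the family `p`, and `w` is the family of cofactors. -/
structure IsPrimitiveFactorization {ι R : Type*} [CommRing R] (p : ι → R) (H : R) (w : ι → R) :
    Prop where
  ne_zero : H ≠ 0
  eq_mul (l : ι) : p l = H * w l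
  span_eq_top : Ideal.span (Set.range w) = ⊤

lemma exists_isPrimitiveFactorization {ι R : Type*} [Finite ι] [CommRing R] [IsDomain R]
    [IsPrincipalIdealRing R] {p : ι → R} (hp : p ≠ 0) :
    ∃ H w, IsPrimitiveFactorization p H w := by
  have := Fintype.ofFinite ι
  obtain ⟨H, hH⟩ := IsPrincipalIdealRing.principal (Ideal.span (Set.range p))
  have hdvd (l : ι) : H ∣ p l :=
    Ideal.mem_span_singleton.1 (hH.le (Ideal.subset_span ⟨l, rfl⟩))
  choose w hw using hdvd
  have hH0 : H ≠ 0 := by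
    rintro rfl
    exact hp (funext fun l => (hw l).trans (zero_mul _))
  refine ⟨H, w, hH0, hw, (Ideal.eq_top_iff_one _).2 ?_⟩
  obtain ⟨b, hb⟩ :=
    Ideal.mem_span_range_iff_exists_fun.1 (hH.ge (Ideal.mem_span_singleton_self H))
  refine Ideal.mem_span_range_iff_exists_fun.2 ⟨b, mul_left_cancel₀ hH0 ?_⟩
  rw [mul_one, Finset.mul_sum]
  exact (Finset.sum_congr rfl fun l _ => by rw [hw l]; ring).trans hb

variable {k : Type*} [Field k]

lemma exists_dotProduct_eq_zero_and_crossProduct_ne_zero {a : Fin 3 → k} (ha : a ≠ 0)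
    (v : Fin 3 → k) : ∃ b, b ⬝ᵥ v = 0 ∧ crossProduct a b ≠ 0 := by
  let f : (Fin 3 → k) →ₗ[k] k := (dotProductBilin k k).flip v
  have hrank := f.finrank_range_add_finrank_ker
  have hrange := f.range.finrank_le
  rw [Module.finrank_self] at hrange
  rw [Module.finrank_fin_fun] at hrank
  have hnot : ¬ f.ker ≤ k ∙ a := fun hle => by
    have := Submodule.finrank_mono hle
    rw [finrank_span_singleton ha] at this
    omega
  obtain ⟨b, hb, hba⟩ := SetLike.not_le_iff_exists.1 hnot
  exact ⟨b, hb, crossProduct_ne_zero_iff_linearIndependent.2 ((LinearIndependent.pair_iff' ha).2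
    fun t ht => hba (Submodule.mem_span_singleton.2 ⟨t, ht⟩))⟩

variable {d : ℕ} {g : Fin 3 → MvPolynomial (Fin 2) k} {a : Fin 3 → k} {i : Fin 3}
  {q r r' : Fin 2 → k} {τ : FractionRing (coneRing g)}

lemma sum_smul_pointSyzygy_ne_zero (hmin : LinearIndependent k g) {b : Fin 3 → k}
    (hb : crossProduct a b ≠ 0) :
    ∑ l, b l • (pointSyzygy g a l : MvPolynomial (Fin 2) k) ≠ 0 := by
  have htriple : ∑ l, b l • (pointSyzygy g a l : MvPolynomial (Fin 2) k) =
      ∑ l, crossProduct b a l • g l := by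
    simp only [coe_pointSyzygy, Fin.sum_univ_three, cross_apply, smul_eq_C_mul, Matrix.cons_val,
      map_sub, map_mul]
    ring
  rw [htriple]
  intro h0
  refine hb ?_
  rw [← cross_anticomm, neg_eq_zero]
  exact funext (Fintype.linearIndependent_iff.1 hmin _ h0)

/-- The restrictions to an affine chart of the pullbacks of the lines through `a`. -/
noncomputable def chartSyzygy (g : Fin 3 → MvPolynomial (Fin 2) k) (a : Fin 3 → k)
    (r r' : Fin 2 → k) (l : Fin 3) : k[X] :=
  dehomogenize r r' (pointSyzygy g a l : MvPolynomial (Fin 2) k)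

namespace IsAdaptedChart

lemma sum_smul_chartSyzygy_ne_zero (h : IsAdaptedChart d g a i q r r' τ)
    (hmin : LinearIndependent k g) {b : Fin 3 → k} (hb : crossProduct a b ≠ 0) :
    ∑ l, b l • chartSyzygy g a r r' l ≠ 0 := by
  simp only [chartSyzygy, ← map_smul, ← map_sum]
  refine fun h0 => sum_smul_pointSyzygy_ne_zero hmin hb
    (eq_zero_of_dehomogenize_eq_zero h.det_eq_one (e := d)
      (IsHomogeneous.sum _ _ _ fun l _ => ?_) h0)
  rw [smul_eq_C_mul]
  exact (pointSyzygy_isHomogeneous h.isHomogeneous l).C_mul _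

lemma exists_isPrimitiveFactorization_chartSyzygy (h : IsAdaptedChart d g a i q r r' τ)
    (hmin : LinearIndependent k g) :
    ∃ H w, IsPrimitiveFactorization (chartSyzygy g a r r') H w := by
  obtain ⟨b, -, hb⟩ := exists_dotProduct_eq_zero_and_crossProduct_ne_zero
    (fun h0 => h.ne_zero (congrFun h0 i)) 0
  exact exists_isPrimitiveFactorization fun h0 => h.sum_smul_chartSyzygy_ne_zero hmin hb
    (Finset.sum_eq_zero fun l _ => by rw [h0, Pi.zero_apply, smul_zero])

lemma eval_ne_zero_of_crossProduct_eq_zero (h : IsAdaptedChart d g a i q r r' τ) {z : Fin 2 → k}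
    (hz : z ≠ 0) (hcross : ∀ l, crossProduct a (fun j => eval z (g j)) l = 0) {s : coneRing g}
    {e : ℕ} (hs : (s : MvPolynomial (Fin 2) k).IsHomogeneous e)
    (hsq : eval q (s : MvPolynomial (Fin 2) k) ≠ 0) : eval z (s : MvPolynomial (Fin 2) k) ≠ 0 := by
  have hprop (j : Fin 3) : a i * eval z (g j) - a j * eval z (g i) = 0 :=
    Ideal.mem_bot.1 (mul_sub_mul_mem_of_crossProduct_mem (fun l => Ideal.mem_bot.2 (hcross l)) i j)
  have hgi : eval z (g i) ≠ 0 := fun h0 => by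
    obtain ⟨j, hj⟩ := h.exists_eval_ne_zero z hz
    have := hprop j
    rw [h0, mul_zero, sub_zero] at this
    exact mul_ne_zero h.ne_zero hj this
  obtain ⟨n, -, P, hP, rfl⟩ := exists_aeval_eq_of_isHomogeneous h.degree_ne_zero h.isHomogeneous
    (ne_zero_of_eval_ne_zero hsq) hs
  rw [h.eval_aeval_coneGen_eq] at hsq
  have hP' : a i ^ n * eval (fun j => eval z (g j)) P - eval a P * eval z (g i) ^ n = 0 :=
    smul_aeval_sub_smul_pow_mem (I := ⊥) hprop hP
  intro h0
  rw [← eval_aeval_coneGen, h0, mul_zero, zero_sub, neg_eq_zero] at hP'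
  exact mul_ne_zero hsq (pow_ne_zero n hgi) hP'

variable {H : k[X]} {w : Fin 3 → k[X]}

lemma exists_mul_aeval_eq (h : IsAdaptedChart d g a i q r r' τ)
    (hw : IsPrimitiveFactorization (chartSyzygy g a r r') H w) {α : k} (hα : H.eval α = 0)
    (y : curveLocalRing g a) :
    ∃ F D : k[X], D.eval α ≠ 0 ∧ y * Polynomial.aeval τ D = Polynomial.aeval τ F := by
  obtain ⟨f, s, e, hf, hs, hsq, hsy⟩ := h.mem_curveLocalRing_iff.1 y.2
  refine ⟨_, _, ?_, h.mul_aeval_dehomogenize hf hs (ne_zero_of_eval_ne_zero hsq) hsy⟩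
  rw [eval_dehomogenize]
  refine h.eval_ne_zero_of_crossProduct_eq_zero (h.add_mul_ne_zero α) (fun l => ?_) hs hsq
  rw [← eval_pointSyzygy, ← eval_dehomogenize]
  exact (congrArg (Polynomial.eval α) (hw.eq_mul l)).trans
    (by rw [Polynomial.eval_mul, hα, zero_mul])

theorem isLocalParametrization [IsAlgClosed k] (h : IsAdaptedChart d g a i q r r' τ)
    (hw : IsPrimitiveFactorization (chartSyzygy g a r r') H w) :
    IsLocalParametrization k τ { toSubring := curveLocalRing g a, isLocalRing := h.isLocalRing }
      h.localSyzygy (dehomogenize r r' (g i)) H w where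
  toIsRationalOrder := h.isRationalOrder
  aeval_ne_zero := h.aeval_ne_zero
  ne_zero := hw.ne_zero
  nuIdeal_eq_span := h.nuIdeal_eq_span
  span_eq_top := hw.span_eq_top
  mul_aeval l := by
    rw [← hw.eq_mul]
    exact h.mul_aeval_dehomogenize (s := coneGen g i)
      (pointSyzygy_isHomogeneous h.isHomogeneous l) (h.isHomogeneous i)
      (ne_zero_of_eval_ne_zero h.eval_coneGen_ne_zero)
      (h.algebraMap_mul_localSyzygy l)
  exists_aeval_mul_eq_one := h.exists_aeval_mul_eq_one
  exists_mul_aeval_eq := h.exists_mul_aeval_eq hw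

variable {O' : Subring (FractionRing (coneRing g))} {c : ℕ}

theorem isHSMultOfDimOne [IsAlgClosed k] (h : IsAdaptedChart d g a i q r r' τ)
    (hw : IsPrimitiveFactorization (chartSyzygy g a r r') H w)
    (hO' : IsInfinitelyNearTo (curveLocalRing g a) O') :
    IsHSMultOfDimOne (curveLocalRing g a) (nuIdeal (curveLocalRing g a)) H.natDegree := by
  obtain ⟨-, ⟨f, hf, ⟨n, hred⟩, -⟩, -⟩ := Relation.TransGen.head'_iff.1 hO'
  exact (h.isLocalParametrization hw).isHSMultOfDimOne hf hred

theorem le_natDegree [IsAlgClosed k] (h : IsAdaptedChart d g a i q r r' τ)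
    (hw : IsPrimitiveFactorization (chartSyzygy g a r r') H w)
    (hO' : IsInfinitelyNearTo (curveLocalRing g a) O')
    (hc : IsHSMultOfDimOne O' (nuIdeal O') c) : c ≤ H.natDegree := by
  obtain ⟨-, ⟨f, hf, ⟨n, hred⟩, -⟩, -⟩ := Relation.TransGen.head'_iff.1 hO'
  exact (h.isLocalParametrization hw).le_natDegree hf hred hO' hc

/-- The line through `a` in the direction of a point infinitely near to `a` meets the curve with
multiplicity at least the sum of the multiplicities of the two points. -/
theorem add_natDegree_le [IsAlgClosed k] (h : IsAdaptedChart d g a i q r r' τ)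
    (hmin : LinearIndependent k g) (hw : IsPrimitiveFactorization (chartSyzygy g a r r') H w)
    (hO' : IsInfinitelyNearTo (curveLocalRing g a) O')
    (hc : IsHSMultOfDimOne O' (nuIdeal O') c) : c + H.natDegree ≤ d := by
  obtain ⟨α, hα⟩ := (h.isLocalParametrization hw).exists_forall_le_natDegree hO' hc
  obtain ⟨b, hbw, hb⟩ := exists_dotProduct_eq_zero_and_crossProduct_ne_zero
    (fun h0 => h.ne_zero (congrFun h0 i)) (fun l => (w l).eval α)
  have hline : ∑ l, b l • chartSyzygy g a r r' l = H * ∑ l, b l • w l := by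
    simp only [hw.eq_mul, Finset.mul_sum, mul_smul_comm]
  have hsum : ∑ l, b l • w l ≠ 0 := fun h0 =>
    h.sum_smul_chartSyzygy_ne_zero hmin hb (by rw [hline, h0, mul_zero])
  have hle := hα b (by
    simp only [Polynomial.eval_finsetSum, Polynomial.eval_smul]
    exact hbw) hsum
  have hdeg : (H * ∑ l, b l • w l).natDegree ≤ d := by
    rw [← hline]
    exact Polynomial.natDegree_sum_le_of_forall_le _ _ fun l _ =>
      (Polynomial.natDegree_smul_le _ _).trans
        (natDegree_dehomogenize_le (pointSyzygy_isHomogeneous h.isHomogeneous l))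
  rw [Polynomial.natDegree_mul hw.ne_zero hsum] at hdeg
  omega

end IsAdaptedChart

end LocalEquation

/-! ### Column degrees of the Hilbert–Burch matrix -/

section ColumnDegrees

open scoped Polynomial

variable {k : Type*} [Field k]

lemma exists_eq_mul_of_mem_range_of_lt {σ ι : Type*} {φ : Matrix ι (Fin 2) (MvPolynomial σ k)}
    {d₁ d₂ e : ℕ} (hcol1 : ∀ l, (φ l 0).IsHomogeneous d₁) (hcol2 : ∀ l, (φ l 1).IsHomogeneous d₂)
    {W : ι → MvPolynomial σ k} (hW : ∀ l, (W l).IsHomogeneous e) (hW0 : W ≠ 0) (he : e < d₂)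
    (hmem : W ∈ φ.mulVecLin.range) :
    ∃ u e', d₁ + e' = e ∧ ∀ l, W l = φ l 0 * u := by
  obtain ⟨v, hv⟩ := hmem
  have hrow (l : ι) : W l = φ l 0 * v 0 + φ l 1 * v 1 :=
    (congrFun hv l).symm.trans (Fin.sum_univ_two _)
  have hfirst (l : ι) : W l = homogeneousComponent e (φ l 0 * v 0) := by
    rw [← homogeneousComponent_eq_self (hW l), hrow, map_add,
      homogeneousComponent_mul_of_lt (hcol2 l) he, add_zero]
  have hle : d₁ ≤ e := by
    by_contra! hlt
    refine hW0 (funext fun l => ?_)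
    rw [hfirst, homogeneousComponent_mul_of_lt (hcol1 l) hlt, Pi.zero_apply]
  obtain ⟨e', rfl⟩ := Nat.exists_eq_add_of_le hle
  refine ⟨homogeneousComponent e' (v 0), e', rfl, fun l => ?_⟩
  rw [hfirst, homogeneousComponent_add_mul (hcol1 l)]

variable {d : ℕ} {g : Fin 3 → MvPolynomial (Fin 2) k} {a : Fin 3 → k} {i : Fin 3}
  {q r r' : Fin 2 → k} {τ : FractionRing (coneRing g)} {H : k[X]} {w : Fin 3 → k[X]}

lemma sum_pointSyzygy_mul_eq_zero (g : Fin 3 → MvPolynomial (Fin 2) k) (a : Fin 3 → k) :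
    ∑ l, (pointSyzygy g a l : MvPolynomial (Fin 2) k) * g l = 0 := by
  simp only [coe_pointSyzygy]
  exact (dotProduct_comm _ _).trans (dot_cross_self _ _)

namespace IsAdaptedChart

lemma exists_eval_pointSyzygy_ne_zero (h : IsAdaptedChart d g a i q r r' τ) :
    ∃ l, eval r (pointSyzygy g a l : MvPolynomial (Fin 2) k) ≠ 0 := by
  by_contra! h0
  simp only [eval_pointSyzygy] at h0
  exact h.eval_ne_zero_of_crossProduct_eq_zero (ne_zero_of_det_eq_one h.det_eq_one) h0
    (s := coneGen g i) (h.isHomogeneous i) h.eval_coneGen_ne_zero h.eval_eq_zero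

lemma natDegree_add_natDegree_le (h : IsAdaptedChart d g a i q r r' τ)
    (hw : IsPrimitiveFactorization (chartSyzygy g a r r') H w) {l : Fin 3} (hl : w l ≠ 0) :
    H.natDegree + (w l).natDegree ≤ d := by
  rw [← Polynomial.natDegree_mul hw.ne_zero hl, ← hw.eq_mul]
  exact natDegree_dehomogenize_le (pointSyzygy_isHomogeneous h.isHomogeneous l)

lemma exists_natDegree_add_natDegree_eq (h : IsAdaptedChart d g a i q r r' τ)
    (hw : IsPrimitiveFactorization (chartSyzygy g a r r') H w) :
    ∃ l, w l ≠ 0 ∧ H.natDegree + (w l).natDegree = d := by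
  obtain ⟨l, hl⟩ := h.exists_eval_pointSyzygy_ne_zero
  rw [← coeff_dehomogenize (r' := r') (pointSyzygy_isHomogeneous h.isHomogeneous l)] at hl
  have hwl : w l ≠ 0 := fun h0 => hl (by
    rw [← chartSyzygy, hw.eq_mul, h0, mul_zero, Polynomial.coeff_zero])
  refine ⟨l, hwl, (h.natDegree_add_natDegree_le hw hwl).antisymm ?_⟩
  rw [← Polynomial.natDegree_mul hw.ne_zero hwl, ← hw.eq_mul]
  exact Polynomial.le_natDegree_of_ne_zero hl

lemma exists_syzygy_dehomogenize_eq (h : IsAdaptedChart d g a i q r r' τ)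
    (hw : IsPrimitiveFactorization (chartSyzygy g a r r') H w) :
    ∃ W : Fin 3 → MvPolynomial (Fin 2) k, (∀ l, (W l).IsHomogeneous (d - H.natDegree)) ∧
      (∀ l, dehomogenize r r' (W l) = w l) ∧ ∑ l, W l * g l = 0 := by
  have hdeg (l : Fin 3) : (w l).natDegree ≤ d - H.natDegree := by
    rcases eq_or_ne (w l) 0 with h0 | h0
    · rw [h0, Polynomial.natDegree_zero]
      exact zero_le
    · exact Nat.le_sub_of_add_le' (h.natDegree_add_natDegree_le hw h0)
  choose W hW hWw using fun l => exists_dehomogenize_eq h.det_eq_one (hdeg l)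
  refine ⟨W, hW, hWw, eq_zero_of_dehomogenize_eq_zero h.det_eq_one
    (IsHomogeneous.sum _ _ _ fun l _ => (hW l).mul (h.isHomogeneous l))
    (mul_left_cancel₀ hw.ne_zero ?_)⟩
  have hsyz := congrArg (dehomogenize r r') (sum_pointSyzygy_mul_eq_zero g a)
  rw [map_sum, map_zero] at hsyz
  rw [mul_zero, ← hsyz, map_sum, Finset.mul_sum]
  refine Finset.sum_congr rfl fun l _ => ?_
  rw [map_mul, map_mul, hWw, ← mul_assoc, ← hw.eq_mul]
  rfl

theorem natDegree_le_or_eq (h : IsAdaptedChart d g a i q r r' τ)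
    (hw : IsPrimitiveFactorization (chartSyzygy g a r r') H w)
    {φ : Matrix (Fin 3) (Fin 2) (MvPolynomial (Fin 2) k)} {d₁ d₂ : ℕ}
    (hφ : φ.mulVecLin.range =
      LinearMap.ker (Matrix.mulVecLin (Matrix.of fun (_ : Fin 1) (i : Fin 3) => g i)))
    (hcol1 : ∀ l, (φ l 0).IsHomogeneous d₁) (hcol2 : ∀ l, (φ l 1).IsHomogeneous d₂)
    (hsum : d₁ + d₂ = d) : H.natDegree ≤ d₁ ∨ H.natDegree = d₂ := by
  refine (le_or_gt H.natDegree d₁).imp_right fun hlt => ?_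
  obtain ⟨W, hW, hWw, hWg⟩ := h.exists_syzygy_dehomogenize_eq hw
  obtain ⟨l, hl, hdeg⟩ := h.exists_natDegree_add_natDegree_eq hw
  have hmem : W ∈ φ.mulVecLin.range := by
    rw [hφ, LinearMap.mem_ker, Matrix.mulVecLin_apply]
    exact funext fun _ => (dotProduct_comm _ _).trans hWg
  obtain ⟨u, e, he, hu⟩ := exists_eq_mul_of_mem_range_of_lt hcol1 hcol2 hW
    (fun h0 => hl (by rw [← hWw, h0, Pi.zero_apply, map_zero])) (by omega) hmem
  have hwu (j : Fin 3) : w j = dehomogenize r r' (φ j 0) * dehomogenize r r' u := by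
    rw [← hWw, hu, map_mul]
  have hunit : IsUnit (dehomogenize r r' u) := by
    refine isUnit_of_dvd_one (Ideal.mem_span_singleton.1 (Ideal.span_le.2 ?_
      ((Ideal.eq_top_iff_one _).1 hw.span_eq_top)))
    rintro _ ⟨j, rfl⟩
    exact Ideal.mem_span_singleton.2 ⟨_, (hwu j).trans (mul_comm _ _)⟩
  have hwl : (w l).natDegree ≤ d₁ := by
    rw [hwu]
    refine Polynomial.natDegree_mul_le.trans ?_
    rw [Polynomial.natDegree_eq_zero_of_isUnit hunit, add_zero]
    exact natDegree_dehomogenize_le (hcol1 l)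
  omega

end IsAdaptedChart

end ColumnDegrees

/-- Let `C` be a rational plane curve of even degree `d = 2c` over an algebraically closed
field, parameterized birationally and without base points by three forms of degree `d`, with
homogeneous Hilbert–Burch matrix `φ` of column degrees `d₁ ≤ d₂` (`d₁ + d₂ = d`).  If `p` is a
point on `C` and `q` is a singularity of multiplicity `c` infinitely near to `p`, then the
multiplicity of `C` at `p` is also equal to `c`; moreover in this situation both column degrees
`d₁`, `d₂` equal `c`. -/
theorem stmt13 {k : Type*} [Field k] [IsAlgClosed k] (d c d₁ d₂ : ℕ) (hd : d = 2 * c)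
    (g : Fin 3 → MvPolynomial (Fin 2) k) (hg : ∀ i, (g i).IsHomogeneous d)
    (hmin : LinearIndependent k g)
    (hht : idealHeight (Ideal.span (Set.range g)) = 2)
    (hbir : ∀ v ∈ Algebra.adjoin k {f : MvPolynomial (Fin 2) k | f.IsHomogeneous d},
      ∃ x ∈ Algebra.adjoin k (Set.range g), ∃ y ∈ Algebra.adjoin k (Set.range g),
        y ≠ 0 ∧ y * v = x)
    (φ : Matrix (Fin 3) (Fin 2) (MvPolynomial (Fin 2) k))
    (hHBinj : Function.Injective φ.mulVecLin)
    (hHBexact : LinearMap.range φ.mulVecLin =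
      LinearMap.ker (Matrix.mulVecLin (Matrix.of fun (_ : Fin 1) (i : Fin 3) => g i)))
    (hcol1 : ∀ i, (φ i 0).IsHomogeneous d₁) (hcol2 : ∀ i, (φ i 1).IsHomogeneous d₂)
    (h12 : d₁ ≤ d₂) (hsum : d₁ + d₂ = d)
    (a : Fin 3 → k) (ha : a ≠ 0) (haC : onCurve g a)
    (O' : Subring (FractionRing (coneRing g)))
    (hnear : IsInfinitelyNearTo (curveLocalRing g a) O')
    (hmultc : IsHSMultOfDimOne O' (nuIdeal O') c) (hsing : 2 ≤ c) :
    IsHSMultOfDimOne (curveLocalRing g a) (nuIdeal (curveLocalRing g a)) c ∧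
      d₁ = c ∧ d₂ = c := by
  have hd0 : d ≠ 0 := by omega
  obtain ⟨i, hi⟩ := Function.ne_iff.1 ha
  obtain ⟨q, hq⟩ := exists_eval_eq_of_onCurve hd0 hg haC
  have hpoint : IsCurvePoint d g a i q := ⟨hd0, hg, hq, hi⟩
  obtain ⟨r, r', τ, hchart⟩ := hpoint.exists_isAdaptedChart hht hbir
  obtain ⟨H, w, hw⟩ := hchart.exists_isPrimitiveFactorization_chartSyzygy hmin
  have hle : c ≤ H.natDegree := hchart.le_natDegree hw hnear hmultc
  have hadd : c + H.natDegree ≤ d := hchart.add_natDegree_le hmin hw hnear hmultc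
  have hH : H.natDegree = c := by omega
  have hcol : H.natDegree ≤ d₁ ∨ H.natDegree = d₂ :=
    hchart.natDegree_le_or_eq hw hHBexact hcol1 hcol2 hsum
  exact ⟨hH ▸ hchart.isHSMultOfDimOne hw hnear, by omega, by omega⟩
end

section
/- Let S be a standard graded Noetherian algebra over S₀ = R with R Noetherian. For a nonnegative integer d, the set X(S; ≥ d) = { p ∈ Spec R : dim(S ⊗_R κ(p)) ≥ d } is a closed subset of Spec R. Moreover, for nonnegative integers d and e, the set X(S; =d, ≥e) = { p ∈ Spec R : dim(S ⊗_R κ(p)) = d and e(S ⊗_R κ(p)) ≥ e } is a closed subset of X(S; =d). -/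
open Filter

/-!
Write `κ(p)` for the residue field, `H_p` for the Hilbert function of the fibre `κ(p) ⊗ S`, and
compare Hilbert functions pointwise. By Nakayama `H_p ≤ H_q` whenever `q` specializes `p`. In the
other direction, fix generators of `𝒜 1`. The exponents whose monomial is, in the fibre over `q`, a
combination of lexicographically smaller monomials of the same degree form an upper set of `ℕ ^ r`
that determines `H_q`. By Dickson's lemma this upper set is generated by finitely many exponents,
and each of the finitely many corresponding relations persists in the fibres over a neighbourhood
of `q` in `closure {q}`; there `H_p ≤ H_q`. By Noetherian induction on closed sets,
`{p | H_p ∈ T}` is closed for every upper set `T` of functions, and this covers both assertions: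

* by Noether normalization, the fibre has dimension `≥ d` iff `∑ i ≤ n, H_p i` is not `o(n ^ d)`;
* the generating function of `H_p`, which counts the complement of an upper set of `ℕ ^ r`, is
  rational with denominator `(1 - X) ^ r`, so the sums of `H_p` are eventually polynomial. Hence
  the multiplicity exists as a limit when the dimension is `d`, and it is `≥ e` iff every `c < e`
  is eventually exceeded by the normalized sums.
-/

open Asymptotics Module Polynomial TensorProduct TopologicalSpace Topology

section Topology

variable {X : Type*} [TopologicalSpace X]

theorem isClosed_of_stableUnderSpecialization_of_eventually [NoetherianSpace X] [QuasiSober X]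
    {T : Set X} (hT : StableUnderSpecialization T)
    (hgen : ∀ x, ∀ᶠ y in 𝓝[closure {x}] x, y ∈ T → x ∈ T) : IsClosed T := by
  suffices ∀ Z : Closeds X, IsClosed ((Z : Set X) ∩ T) by simpa using this ⊤
  intro Z
  induction Z using (wellFounded_lt (α := Closeds X)).induction with | _ Z ih
  rcases (Z : Set X).eq_empty_or_nonempty with hZ | hne
  · simp [hZ]
  by_cases hirr : IsPreirreducible (Z : Set X)
  · obtain ⟨x, hx⟩ := QuasiSober.sober ⟨hne, hirr⟩ Z.isClosed
    by_cases hxT : x ∈ T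
    · have hZT : (Z : Set X) ⊆ T := fun y hy => hT (hx.specializes hy) hxT
      rw [Set.inter_eq_left.2 hZT]
      exact Z.isClosed
    · obtain ⟨U, hU, hxU, hUT⟩ := mem_nhdsWithin.1 (hgen x)
      have hdiff : (Z : Set X) ∩ T = (Z \ U : Set X) ∩ T := by
        ext y
        refine ⟨fun hy => ⟨⟨hy.1, fun hyU => ?_⟩, hy.2⟩, fun hy => ⟨hy.1.1, hy.2⟩⟩
        exact hxT (hUT ⟨hyU, hx.symm ▸ hy.1⟩ hy.2)
      rw [hdiff]
      refine ih ⟨Z \ U, Z.isClosed.sdiff hU⟩ (SetLike.coe_ssubset_coe.1 ⟨Set.sdiff_subset, ?_⟩)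
      exact fun h => (h hx.mem).2 hxU
  · simp only [isPreirreducible_iff_isClosed_union_isClosed, not_forall, not_or] at hirr
    obtain ⟨Z₁, Z₂, hZ₁, hZ₂, hcover, h₁, h₂⟩ := hirr
    lift Z₁ to Closeds X using hZ₁
    lift Z₂ to Closeds X using hZ₂
    have hunion : (Z : Set X) ∩ T =
        ((Z ⊓ Z₁ : Closeds X) : Set X) ∩ T ∪ ((Z ⊓ Z₂ : Closeds X) : Set X) ∩ T := by
      rw [← Set.union_inter_distrib_right, Closeds.coe_inf, Closeds.coe_inf,
        ← Set.inter_union_distrib_left, Set.inter_eq_left.2 hcover]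
    rw [hunion]
    exact (ih _ (inf_lt_left.2 h₁)).union (ih _ (inf_lt_left.2 h₂))

end Topology

section Fiber

variable {R M : Type*} [CommRing R] [AddCommGroup M] [Module R M]

theorem one_tmul_mem_baseChange_iff {A : Type*} [CommRing A] [Algebra R A] (N : Submodule R M)
    (y : M) : (1 : A) ⊗ₜ[R] y ∈ N.baseChange A ↔ (1 : A) ⊗ₜ[R] N.mkQ y = 0 :=
  ((lTensor_exact A (LinearMap.exact_subtype_mkQ N) N.mkQ_surjective) (1 ⊗ₜ y)).symm

theorem baseChange_eq_top_iff_subsingleton_quotient {A : Type*} [CommRing A] [Algebra R A]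
    (N : Submodule R M) : N.baseChange A = ⊤ ↔ Subsingleton (A ⊗[R] (M ⧸ N)) := by
  have hexact : Function.Exact (N.subtype.baseChange A) (N.mkQ.baseChange A) :=
    lTensor_exact A (LinearMap.exact_subtype_mkQ N) N.mkQ_surjective
  have hsurj : Function.Surjective (N.mkQ.baseChange A) :=
    LinearMap.lTensor_surjective A N.mkQ_surjective
  rw [show N.baseChange A = LinearMap.range (N.subtype.baseChange A) from rfl,
    ← hexact.linearMap_ker_eq, LinearMap.ker_eq_top, ← LinearMap.range_eq_bot,
    LinearMap.range_eq_top.2 hsurj, eq_comm, subsingleton_iff_bot_eq_top,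
    Submodule.subsingleton_iff]

theorem finrank_residueField_tensorProduct_mono [Module.Finite R M] {p q : PrimeSpectrum R}
    (h : p ≤ q) : finrank p.asIdeal.ResidueField (p.asIdeal.ResidueField ⊗[R] M) ≤
      finrank q.asIdeal.ResidueField (q.asIdeal.ResidueField ⊗[R] M) := by
  let K := q.asIdeal.ResidueField
  have htop : Submodule.span K (Set.range (TensorProduct.mk R K M 1)) = ⊤ := by
    rw [← Submodule.baseChange_top, Submodule.baseChange_eq_span, Submodule.map_top,
      LinearMap.coe_range]
  have hbasis := Submodule.exists_fun_fin_finrank_span_eq K (Set.range (TensorProduct.mk R K M 1))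
  rw [htop, finrank_top] at hbasis
  obtain ⟨f, hf, hspan, -⟩ := hbasis
  choose w hw using hf
  have hspan_iff (P : PrimeSpectrum R) :
      P ∉ Module.support R (M ⧸ Submodule.span R (Set.range w)) ↔
        Submodule.span P.asIdeal.ResidueField
          (Set.range fun i => TensorProduct.mk R P.asIdeal.ResidueField M 1 (w i)) = ⊤ := by
    rw [Module.mem_support_iff_nontrivial_residueField_tensorProduct,
      not_nontrivial_iff_subsingleton, ← baseChange_eq_top_iff_subsingleton_quotient,
      Submodule.baseChange_span, ← Set.range_comp]
    rfl
  have hq : q ∉ Module.support R (M ⧸ Submodule.span R (Set.range w)) :=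
    (hspan_iff q).2 ((funext hw).symm ▸ hspan)
  have hp := (hspan_iff p).1 fun hp => hq (Module.mem_support_mono h hp)
  calc finrank p.asIdeal.ResidueField (p.asIdeal.ResidueField ⊗[R] M)
    _ = finrank p.asIdeal.ResidueField (⊤ : Submodule p.asIdeal.ResidueField
          (p.asIdeal.ResidueField ⊗[R] M)) := (finrank_top _ _).symm
    _ ≤ finrank K (K ⊗[R] M) := by
      rw [← hp]
      exact (finrank_range_le_card _).trans_eq (Fintype.card_fin _)

theorem one_tmul_residueField_eq_zero_iff (p : PrimeSpectrum R) (y : M) :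
    (1 : p.asIdeal.ResidueField) ⊗ₜ[R] y = 0 ↔
      ∃ t ∉ p.asIdeal, t • y ∈ p.asIdeal • (⊤ : Submodule R M) := by
  let D := R ⧸ p.asIdeal
  let K := p.asIdeal.ResidueField
  have hloc : IsLocalizedModule (nonZeroDivisors D) (TensorProduct.mk D K (D ⊗[R] M) 1) :=
    (isLocalizedModule_iff_isBaseChange (nonZeroDivisors D) K _).2
      (TensorProduct.isBaseChange _ _ _)
  have hsmul (t : R) : Ideal.Quotient.mk p.asIdeal t • ((1 : D) ⊗ₜ[R] y) = 0 ↔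
      t • y ∈ p.asIdeal • (⊤ : Submodule R M) := by
    rw [← (TensorProduct.quotTensorEquivQuotSMul M p.asIdeal).map_eq_zero_iff,
      TensorProduct.smul_tmul', smul_eq_mul, mul_one,
      TensorProduct.quotTensorEquivQuotSMul_mk_tmul, Submodule.Quotient.mk_eq_zero]
  calc (1 : K) ⊗ₜ[R] y = 0
    _ ↔ (1 : K) ⊗ₜ[D] ((1 : D) ⊗ₜ[R] y) = 0 := by
      rw [← (TensorProduct.AlgebraTensorModule.cancelBaseChange R D K K M).map_eq_zero_iff]
      simp
    _ ↔ ∃ s : nonZeroDivisors D, s • ((1 : D) ⊗ₜ[R] y) = 0 :=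
      IsLocalizedModule.eq_zero_iff (nonZeroDivisors D) (TensorProduct.mk D K (D ⊗[R] M) 1)
    _ ↔ ∃ t ∉ p.asIdeal, t • y ∈ p.asIdeal • (⊤ : Submodule R M) := by
      simp only [← hsmul, ← Ideal.Quotient.eq_zero_iff_mem, Subtype.exists,
        mem_nonZeroDivisors_iff_ne_zero, Submonoid.mk_smul, exists_prop]
      exact Ideal.Quotient.mk_surjective.exists

theorem eventually_one_tmul_residueField_eq_zero {q : PrimeSpectrum R} {y : M}
    (hy : (1 : q.asIdeal.ResidueField) ⊗ₜ[R] y = 0) :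
    ∀ᶠ p in 𝓝[closure {q}] q, (1 : p.asIdeal.ResidueField) ⊗ₜ[R] y = 0 := by
  obtain ⟨t, htq, hty⟩ := (one_tmul_residueField_eq_zero_iff q y).1 hy
  refine mem_nhdsWithin.2 ⟨PrimeSpectrum.basicOpen t, (PrimeSpectrum.basicOpen t).isOpen, htq, ?_⟩
  rintro p ⟨htp, hqp⟩
  have hle : q ≤ p := (PrimeSpectrum.le_iff_mem_closure q p).2 hqp
  exact (one_tmul_residueField_eq_zero_iff p y).2 ⟨t, htp, Submodule.smul_mono_left hle hty⟩

end Fiber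

section StandardMonomials

variable {k A : Type*} {r : ℕ}

/-- The value `∏ Xᵢ ^ mᵢ` at the tuple `X` of the monomial with exponent `m`. Exponents are plain
functions, so that they carry Mathlib's product and lexicographic orders. -/
def evalMonomial [CommMonoid A] (X : Fin r → A) (m : Fin r → ℕ) : A := ∏ i, X i ^ m i

theorem evalMonomial_add [CommMonoid A] (X : Fin r → A) (m m' : Fin r → ℕ) :
    evalMonomial X (m + m') = evalMonomial X m * evalMonomial X m' := by
  simp only [evalMonomial, Pi.add_apply, pow_add, Finset.prod_mul_distrib]

theorem evalMonomial_single [CommMonoid A] (X : Fin r → A) (i : Fin r) :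
    evalMonomial X (Pi.single i 1) = X i := by
  simp [evalMonomial, Pi.single_apply, pow_ite]

theorem map_evalMonomial {F B : Type*} [CommMonoid A] [CommMonoid B] [FunLike F A B]
    [MonoidHomClass F A B] (f : F) (X : Fin r → A) (m : Fin r → ℕ) :
    f (evalMonomial X m) = evalMonomial (fun i => f (X i)) m := by
  simp only [evalMonomial, map_prod, map_pow]

theorem exists_eq_add_single_of_ne_zero {m : Fin r → ℕ} {i : Fin r} (hi : m i ≠ 0) :
    ∃ c : Fin r → ℕ, m = c + Pi.single i 1 := by
  have hle : Pi.single i 1 ≤ m :=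
    update_le_iff.2 ⟨Nat.one_le_iff_ne_zero.2 hi, fun j _ => Nat.zero_le (m j)⟩
  exact ⟨m - Pi.single i 1, (tsub_add_cancel_of_le hle).symm⟩

open scoped Pointwise in
theorem span_range_pow_eq_span_evalMonomial [CommSemiring k] [CommSemiring A] [Algebra k A]
    (X : Fin r → A) (n : ℕ) :
    Submodule.span k (Set.range X) ^ n =
      Submodule.span k (evalMonomial X '' {m | ∑ i, m i = n}) := by
  rw [Submodule.span_pow]
  congr 1
  induction n with
  | zero =>
    have hzero : {m : Fin r → ℕ | ∑ i, m i = 0} = {0} := by ext; simp [funext_iff]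
    rw [pow_zero, hzero, Set.image_singleton, ← Set.singleton_one]
    simp [evalMonomial]
  | succ n ih =>
    rw [pow_succ, ih]
    ext a
    constructor
    · rintro ⟨_, ⟨m, hm, rfl⟩, _, ⟨i, rfl⟩, rfl⟩
      refine ⟨m + Pi.single i 1, ?_, ?_⟩
      · simpa [Finset.sum_add_distrib] using hm
      · rw [evalMonomial_add, evalMonomial_single]
    · rintro ⟨m, hm, rfl⟩
      obtain ⟨i, -, hi⟩ := Finset.exists_ne_zero_of_sum_ne_zero (hm.trans_ne n.succ_ne_zero)
      obtain ⟨c, rfl⟩ := exists_eq_add_single_of_ne_zero hi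
      rw [evalMonomial_add, evalMonomial_single]
      exact Set.mul_mem_mul ⟨c, by simpa [Finset.sum_add_distrib] using hm, rfl⟩ ⟨i, rfl⟩

variable (k) in
/-- The exponents whose monomial is, at `X`, a `k`-linear combination of lexicographically smaller
monomials of the same degree: the exponents of the initial ideal of the homogeneous relations
among the `X i`. -/
def leadingExponents [CommRing k] [CommRing A] [Algebra k A] (X : Fin r → A) :
    Set (Fin r → ℕ) :=
  {m | evalMonomial X m ∈
    Submodule.span k (evalMonomial X '' {m' | ∑ i, m' i = ∑ i, m i ∧ toLex m' < toLex m})}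

theorem isUpperSet_leadingExponents [CommRing k] [CommRing A] [Algebra k A] (X : Fin r → A) :
    IsUpperSet (leadingExponents k X) := by
  intro a b hab ha
  obtain ⟨c, rfl⟩ := exists_add_of_le hab
  have hmul := Submodule.mem_map_of_mem (f := LinearMap.mulRight k (evalMonomial X c))
    (show evalMonomial X a ∈ Submodule.span k _ from ha)
  rw [Submodule.map_span, ← Set.image_comp, LinearMap.mulRight_apply, ← evalMonomial_add] at hmul
  refine Submodule.span_mono ?_ hmul
  rintro _ ⟨m, ⟨hdeg, hlt⟩, rfl⟩
  refine ⟨m + c, ⟨?_, ?_⟩, ?_⟩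
  · simp only [Pi.add_apply, Finset.sum_add_distrib, hdeg]
  · exact add_lt_add_left hlt (toLex c)
  · exact evalMonomial_add X m c

open Classical in
/-- The number of exponents of degree `n` outside `U`. If `U` consists of leading exponents, the
corresponding monomials form a basis of the degree `n` part. -/
noncomputable def standardCount (U : Set (Fin r → ℕ)) (n : ℕ) : ℕ :=
  (Finset.univ.piAntidiag n |>.filter (· ∉ U)).card

theorem standardCount_anti {U U' : Set (Fin r → ℕ)} (h : U ⊆ U') (n : ℕ) :
    standardCount U' n ≤ standardCount U n := by
  classical
  exact Finset.card_le_card (Finset.monotone_filter_right _ fun _ _ hm hmU => hm (h hmU))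

theorem finrank_span_insert_of_notMem {V : Type*} [Field k] [AddCommGroup V] [Module k V]
    {s : Set V} (hs : s.Finite) {x : V} (hx : x ∉ Submodule.span k s) :
    finrank k (Submodule.span k (insert x s)) = finrank k (Submodule.span k s) + 1 := by
  have := FiniteDimensional.span_of_finite k hs
  have hx0 : x ≠ 0 := fun h => hx (h ▸ Submodule.zero_mem _)
  have hdisj : Submodule.span k {x} ⊓ Submodule.span k s = ⊥ :=
    ((Submodule.disjoint_span_singleton' hx0).2 hx).symm.eq_bot
  have hsum := Submodule.finrank_sup_add_finrank_inf_eq (Submodule.span k {x}) (Submodule.span k s)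
  rw [hdisj, finrank_bot, add_zero, finrank_span_singleton hx0] at hsum
  rw [Submodule.span_insert, hsum, add_comm]

open Classical in
theorem finrank_span_image_eq_card_filter_notMem_span {V ι : Type*} [Field k] [AddCommGroup V]
    [Module k V] [LinearOrder ι] (v : ι → V) (s : Finset ι) :
    finrank k (Submodule.span k (v '' s)) =
      (s.filter fun i => v i ∉ Submodule.span k (v '' {j | j ∈ s ∧ j < i})).card := by
  induction s using Finset.induction_on_max with
  | empty =>
    rw [Finset.coe_empty, Set.image_empty, Submodule.span_empty, finrank_bot]
    simp
  | insert a s ha ih =>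
    have hbelow : ∀ i ∈ s, {j | j ∈ insert a s ∧ j < i} = {j | j ∈ s ∧ j < i} := by
      intro i hi
      ext j
      have := ha i hi
      grind
    have hbelow_max : {j | j ∈ insert a s ∧ j < a} = (s : Set ι) := by ext; grind
    have hfilter : (s.filter fun i => v i ∉ Submodule.span k (v '' {j | j ∈ insert a s ∧ j < i})) =
        s.filter fun i => v i ∉ Submodule.span k (v '' {j | j ∈ s ∧ j < i}) :=
      Finset.filter_congr fun i hi => by rw [hbelow i hi]
    rw [Finset.filter_insert, hfilter, hbelow_max, Finset.coe_insert, Set.image_insert_eq]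
    split_ifs with hva
    · rw [Submodule.span_insert_eq_span hva, ih]
    · have has : a ∉ s := fun h => lt_irrefl _ (ha a h)
      rw [finrank_span_insert_of_notMem (s.finite_toSet.image v) hva, ih,
        Finset.card_insert_of_notMem (by simp [has])]

theorem finrank_span_evalMonomial_eq_standardCount [Field k] [CommRing A] [Algebra k A]
    (X : Fin r → A) (n : ℕ) :
    finrank k (Submodule.span k (evalMonomial X '' {m | ∑ i, m i = n})) =
      standardCount (leadingExponents k X) n := by
  classical
  let D : Finset (Lex (Fin r → ℕ)) := (Finset.univ.piAntidiag n).map toLex.toEmbedding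
  let v : Lex (Fin r → ℕ) → A := evalMonomial X ∘ ofLex
  have himage : v '' D = evalMonomial X '' {m | ∑ i, m i = n} := by ext; simp [v, D]
  have hbelow : ∀ m : Fin r → ℕ, ∑ i, m i = n → v '' {j | j ∈ D ∧ j < toLex m} =
      evalMonomial X '' {m' | ∑ i, m' i = ∑ i, m i ∧ toLex m' < toLex m} := by
    intro m hm
    ext
    simp [v, D, hm, and_assoc]
  rw [← himage, finrank_span_image_eq_card_filter_notMem_span, Finset.filter_map, Finset.card_map,
    standardCount]
  congr 1
  refine Finset.filter_congr fun m hm => not_congr ?_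
  rw [leadingExponents, Set.mem_ofPred_eq, ← hbelow m (by simpa using hm)]
  rfl

end StandardMonomials

theorem exists_finset_upperClosure_eq {α : Type*} [PartialOrder α] [WellQuasiOrderedLE α]
    {U : Set α} (hU : IsUpperSet U) : ∃ G : Finset α, (upperClosure (G : Set α) : Set α) = U := by
  have hfin : {m | Minimal (· ∈ U) m}.Finite :=
    WellQuasiOrderedLE.finite_of_isAntichain (setOfPred_minimal_antichain _)
  refine ⟨hfin.toFinset, Set.Subset.antisymm ?_ fun m hm => ?_⟩
  · refine upperClosure_min (fun g hg => ?_) hU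
    exact (hfin.mem_toFinset.1 hg).prop
  · obtain ⟨g, hgm, hg⟩ := (Set.isPWO_of_wellQuasiOrderedLE U).exists_le_minimal hm
    exact ⟨g, hfin.mem_toFinset.2 hg, hgm⟩

section Semicontinuity

variable {R S : Type*} [CommRing R] [CommRing S] [Algebra R S] {r : ℕ}

theorem span_evalMonomial_one_tmul {K : Type*} [CommRing K] [Algebra R K] (x : Fin r → S)
    (D : Set (Fin r → ℕ)) :
    Submodule.span K (evalMonomial (fun i => (1 : K) ⊗ₜ[R] x i) '' D) =
      (Submodule.span R (evalMonomial x '' D)).baseChange K := by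
  rw [Submodule.baseChange_span, ← Set.image_comp]
  exact congrArg _ (Set.image_congr fun m _ =>
    (map_evalMonomial (Algebra.TensorProduct.includeRight : S →ₐ[R] K ⊗[R] S) x m).symm)

theorem mem_leadingExponents_one_tmul_iff {K : Type*} [CommRing K] [Algebra R K] (x : Fin r → S)
    (m : Fin r → ℕ) :
    m ∈ leadingExponents K (fun i => (1 : K) ⊗ₜ[R] x i) ↔
      (1 : K) ⊗ₜ[R] (Submodule.span R (evalMonomial x ''
        {m' | ∑ i, m' i = ∑ i, m i ∧ toLex m' < toLex m})).mkQ (evalMonomial x m) = 0 := by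
  rw [← one_tmul_mem_baseChange_iff, ← span_evalMonomial_one_tmul]
  exact iff_of_eq (congrArg (· ∈ Submodule.span K _)
    (map_evalMonomial (Algebra.TensorProduct.includeRight : S →ₐ[R] K ⊗[R] S) x m).symm)

/-- The leading exponents of the image of the tuple `x` in the fibre over `p`. -/
def fiberLeadingExponents (x : Fin r → S) (p : PrimeSpectrum R) : Set (Fin r → ℕ) :=
  leadingExponents p.asIdeal.ResidueField fun i => (1 : p.asIdeal.ResidueField) ⊗ₜ[R] x i

theorem eventually_fiberLeadingExponents_subset (x : Fin r → S) (q : PrimeSpectrum R) :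
    ∀ᶠ p in 𝓝[closure {q}] q, fiberLeadingExponents x q ⊆ fiberLeadingExponents x p := by
  have hupper : IsUpperSet (fiberLeadingExponents x q) := isUpperSet_leadingExponents _
  obtain ⟨G, hG⟩ := exists_finset_upperClosure_eq hupper
  have hgen : ∀ᶠ p in 𝓝[closure {q}] q, ∀ g ∈ G, g ∈ fiberLeadingExponents x p := by
    refine (eventually_all_finset G).2 fun g hg => ?_
    have hgq := (mem_leadingExponents_one_tmul_iff x g).1 (hG.subset (subset_upperClosure hg))
    filter_upwards [eventually_one_tmul_residueField_eq_zero hgq] with p hp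
    exact (mem_leadingExponents_one_tmul_iff x g).2 hp
  filter_upwards [hgen] with p hp
  rw [← hG]
  exact upperClosure_min hp (isUpperSet_leadingExponents _)

variable (𝒜 : ℕ → Submodule R S)

/-- The Hilbert function `n ↦ dim_κ(p) (κ(p) ⊗ 𝒜 n)` of the fibre over `p` of the graded family
`𝒜`. -/
noncomputable def fiberHilbertFunction (p : PrimeSpectrum R) (n : ℕ) : ℕ :=
  finrank p.asIdeal.ResidueField (p.asIdeal.ResidueField ⊗[R] 𝒜 n)

theorem finrank_tensorProduct_eq_finrank_baseChange (K : Type*) [CommRing K] [Algebra R K]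
    [DirectSum.Decomposition 𝒜] (n : ℕ) :
    finrank K (K ⊗[R] 𝒜 n) = finrank K ((𝒜 n).baseChange K) :=
  (LinearEquiv.ofBijective _ (DirectSum.toBaseChange_bijective 𝒜 n)).finrank_eq

theorem exists_fiberHilbertFunction_eq_standardCount [DirectSum.Decomposition 𝒜]
    (hfg : (𝒜 1).FG) (hpow : ∀ n, 𝒜 n = 𝒜 1 ^ n) :
    ∃ (r : ℕ) (x : Fin r → S), ∀ p : PrimeSpectrum R,
      fiberHilbertFunction 𝒜 p = standardCount (fiberLeadingExponents x p) := by
  obtain ⟨r, x, hx⟩ := Submodule.fg_iff_exists_fin_generating_family.1 hfg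
  refine ⟨r, x, fun p => funext fun n => ?_⟩
  rw [fiberHilbertFunction, finrank_tensorProduct_eq_finrank_baseChange, hpow, ← hx,
    span_range_pow_eq_span_evalMonomial, ← span_evalMonomial_one_tmul,
    finrank_span_evalMonomial_eq_standardCount, fiberLeadingExponents]

theorem isClosed_preimage_fiberHilbertFunction [NoetherianSpace (PrimeSpectrum R)]
    [DirectSum.Decomposition 𝒜] (hfg : (𝒜 1).FG) (hpow : ∀ n, 𝒜 n = 𝒜 1 ^ n)
    {T : Set (ℕ → ℕ)} (hT : IsUpperSet T) : IsClosed (fiberHilbertFunction 𝒜 ⁻¹' T) := by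
  refine isClosed_of_stableUnderSpecialization_of_eventually (fun p q hpq => hT fun n => ?_)
    fun q => ?_
  · have : Module.Finite R (𝒜 n) := Module.Finite.iff_fg.2 (hpow n ▸ hfg.pow n)
    exact finrank_residueField_tensorProduct_mono ((PrimeSpectrum.le_iff_specializes p q).2 hpq)
  · obtain ⟨r, x, hx⟩ := exists_fiberHilbertFunction_eq_standardCount 𝒜 hfg hpow
    filter_upwards [eventually_fiberLeadingExponents_subset x q] with p hp
    refine hT fun n => ?_
    rw [hx, hx]
    exact standardCount_anti hp n

end Semicontinuity

section HilbertSeries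

variable {r : ℕ}

/-- The slice `{m | (j, m) ∈ U}`, for decomposing an upper set by the first exponent. -/
def slice (U : Set (Fin (r + 1) → ℕ)) (j : ℕ) : Set (Fin r → ℕ) := {m | Fin.cons j m ∈ U}

/-- The exponents `m` with `m + e₀ ∈ U`: the colon ideal by the first variable, on exponents. -/
def colonFirst (U : Set (Fin (r + 1) → ℕ)) : Set (Fin (r + 1) → ℕ) :=
  {m | m + Pi.single 0 1 ∈ U}

theorem isUpperSet_slice {U : Set (Fin (r + 1) → ℕ)} (hU : IsUpperSet U) (j : ℕ) :
    IsUpperSet (slice U j) :=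
  fun _ _ hab ha => hU (Fin.cons_le_cons.2 ⟨le_rfl, hab⟩) ha

theorem slice_mono {U : Set (Fin (r + 1) → ℕ)} (hU : IsUpperSet U) : Monotone (slice U) :=
  fun _ _ hij _ hm => hU (Fin.cons_le_cons.2 ⟨hij, le_rfl⟩) hm

theorem isUpperSet_colonFirst {U : Set (Fin (r + 1) → ℕ)} (hU : IsUpperSet U) :
    IsUpperSet (colonFirst U) :=
  fun _ _ hab ha => hU (add_le_add_left hab _) ha

theorem cons_add_single_zero (j : ℕ) (m : Fin r → ℕ) :
    (Fin.cons j m + Pi.single 0 1 : Fin (r + 1) → ℕ) = Fin.cons (j + 1) m := by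
  ext i
  cases i using Fin.cases <;> simp

theorem slice_colonFirst (U : Set (Fin (r + 1) → ℕ)) (j : ℕ) :
    slice (colonFirst U) j = slice U (j + 1) := by
  ext m
  simp only [slice, colonFirst, Set.mem_ofPred_eq, cons_add_single_zero]

theorem eventuallyConst_slice {U : Set (Fin (r + 1) → ℕ)} (hU : IsUpperSet U) :
    EventuallyConst (slice U) atTop := by
  have hupper : IsUpperSet (⋃ j, slice U j) := isUpperSet_iUnion fun j => isUpperSet_slice hU j
  obtain ⟨G, hG⟩ := exists_finset_upperClosure_eq hupper
  have hmem : ∀ g ∈ G, ∀ᶠ j in atTop, g ∈ slice U j := fun g hg => by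
    obtain ⟨i, hi⟩ := Set.mem_iUnion.1 (hG.subset (subset_upperClosure hg))
    filter_upwards [eventually_ge_atTop i] with j hj
    exact slice_mono hU hj hi
  refine eventuallyConst_iff_exists_eventuallyEq.2 ⟨⋃ j, slice U j, ?_⟩
  filter_upwards [(eventually_all_finset G).2 hmem] with j hj
  refine (Set.subset_iUnion _ j).antisymm ?_
  rw [← hG]
  exact upperClosure_min hj (isUpperSet_slice hU j)

theorem standardCount_zero_eq_standardCount_slice (U : Set (Fin (r + 1) → ℕ)) :
    standardCount U 0 = standardCount (slice U 0) 0 := by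
  classical
  have hcons : (Fin.cons 0 0 : Fin (r + 1) → ℕ) = 0 := Fin.cons_self_tail 0
  simp only [standardCount, Finset.piAntidiag_zero, Finset.filter_singleton, slice,
    Set.mem_ofPred_eq, hcons]
  split_ifs <;> simp

theorem standardCount_succ_eq_standardCount_slice_add (U : Set (Fin (r + 1) → ℕ)) (n : ℕ) :
    standardCount U (n + 1) =
      standardCount (slice U 0) (n + 1) + standardCount (colonFirst U) n := by
  classical
  have hmem {s} (V : Set (Fin s → ℕ)) (i : ℕ) (m : Fin s → ℕ) :
      m ∈ ((Finset.univ.piAntidiag i |>.filter (· ∉ V) : Finset _) : Set _) ↔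
        (∑ j, m j) = i ∧ m ∉ V := by simp
  rw [standardCount, ← Finset.card_filter_add_card_filter_not (· 0 = 0)]
  congr 1
  · refine (Finset.card_nbij (fun m => (Fin.cons 0 m : Fin (r + 1) → ℕ)) (fun m hm => ?_)
      (Fin.cons_right_injective (α := fun _ => ℕ) 0).injOn
      fun m hm => ⟨Fin.tail m, ?_, ?_⟩).symm
    · have := (hmem _ _ _).1 hm
      simpa [slice, Fin.sum_univ_succ] using this
    · have hm' : ((∑ i, m i) = n + 1 ∧ m ∉ U) ∧ m 0 = 0 := by simpa using hm
      rw [hmem, slice, Set.mem_ofPred_eq, ← hm'.2, Fin.cons_self_tail]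
      simpa [Fin.sum_univ_succ, hm'.2, Fin.tail] using hm'.1
    · rw [← Fin.cons_self_tail m] at hm ⊢
      simp_all
  · refine (Finset.card_nbij (· + Pi.single 0 1) (fun m hm => ?_)
      (add_left_injective _).injOn fun m hm => ?_).symm
    · have := (hmem _ _ _).1 hm
      simpa [colonFirst, Finset.sum_add_distrib] using this
    · have hm' : ((∑ i, m i) = n + 1 ∧ m ∉ U) ∧ m 0 ≠ 0 := by simpa using hm
      obtain ⟨c, rfl⟩ := exists_eq_add_single_of_ne_zero hm'.2
      refine ⟨c, ?_, rfl⟩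
      rw [hmem]
      simpa [Finset.sum_add_distrib, colonFirst] using hm'.1

/-- The generating function of `standardCount U`. -/
noncomputable def standardSeries (U : Set (Fin r → ℕ)) : PowerSeries ℝ :=
  PowerSeries.mk fun n => (standardCount U n : ℝ)

theorem standardSeries_eq_slice_add (U : Set (Fin (r + 1) → ℕ)) :
    standardSeries U =
      standardSeries (slice U 0) + PowerSeries.X * standardSeries (colonFirst U) := by
  ext (_ | n)
  · simp [standardSeries, standardCount_zero_eq_standardCount_slice U]
  · simp [standardSeries, standardCount_succ_eq_standardCount_slice_add U,
      PowerSeries.coeff_succ_X_mul]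

theorem exists_standardSeries_mul_one_sub_pow_eq {U : Set (Fin r → ℕ)} (hU : IsUpperSet U) :
    ∃ p : ℝ[X], standardSeries U * (1 - PowerSeries.X) ^ r = (p : PowerSeries ℝ) := by
  induction r with
  | zero =>
    refine ⟨C (standardCount U 0 : ℝ), ?_⟩
    ext (_ | n)
    · simp [standardSeries]
    · simp [standardSeries, standardCount]
  | succ r ih =>
    obtain ⟨J, hJ⟩ := eventuallyConst_atTop.1 (eventuallyConst_slice hU)
    induction J generalizing U with
    | zero =>
      have hcolon : colonFirst U = U := by
        ext m
        rw [← Fin.cons_self_tail m]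
        change Fin.tail m ∈ slice (colonFirst U) (m 0) ↔ Fin.tail m ∈ slice U (m 0)
        rw [slice_colonFirst, hJ _ (Nat.zero_le _), hJ (m 0) (Nat.zero_le _)]
      obtain ⟨p, hp⟩ := ih (isUpperSet_slice hU 0)
      have hU := standardSeries_eq_slice_add U
      rw [hcolon] at hU
      refine ⟨p, ?_⟩
      rw [← hp]
      linear_combination (1 - PowerSeries.X) ^ r * hU
    | succ J ihJ =>
      obtain ⟨p, hp⟩ := ih (isUpperSet_slice hU 0)
      obtain ⟨q, hq⟩ := ihJ (isUpperSet_colonFirst hU) fun j hj => by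
        rw [slice_colonFirst, slice_colonFirst, hJ (j + 1) (Nat.succ_le_succ hj)]
      refine ⟨p * (1 - X) + X * q, ?_⟩
      rw [standardSeries_eq_slice_add]
      push_cast
      rw [← hp, ← hq]
      ring

end HilbertSeries

section EventuallyPolynomial

theorem exists_eventually_sum_range_eq_eval {f : ℕ → ℝ} {r : ℕ} {p : ℝ[X]}
    (hp : PowerSeries.mk f * (1 - PowerSeries.X) ^ r = (p : PowerSeries ℝ)) :
    ∃ P : ℝ[X], ∀ᶠ N : ℕ in atTop, ∑ i ∈ Finset.range N, f i = P.eval (N : ℝ) := by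
  refine ⟨(p.hilbertPoly (1 + r)).comp (X - 1), ?_⟩
  have hsum (n : ℕ) : ∑ i ∈ Finset.range (n + 1), f i =
      PowerSeries.coeff n ((p : PowerSeries ℝ) * (PowerSeries.invOneSubPow ℝ (1 + r)).val) := by
    rw [← hp, mul_assoc,
      PowerSeries.one_sub_pow_mul_invOneSubPow_val_add_eq_invOneSubPow_val ℝ 1 r,
      PowerSeries.invOneSubPow_val_one_eq_invUnitSub_one, PowerSeries.coeff_mul,
      Finset.Nat.sum_antidiagonal_eq_sum_range_succ_mk]
    simp
  filter_upwards [eventually_gt_atTop (p.natDegree + 1)] with N hN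
  obtain ⟨n, rfl⟩ := Nat.exists_eq_add_of_le' (Nat.one_le_of_lt hN)
  rw [hsum, coeff_mul_invOneSubPow_eq_hilbertPoly_eval _ (by omega)]
  simp

theorem exists_tendsto_div_pow_of_isLittleO {f : ℕ → ℝ} {P : ℝ[X]}
    (hP : ∀ᶠ N : ℕ in atTop, f N = P.eval (N : ℝ)) {d : ℕ}
    (hf : f =o[atTop] fun N : ℕ => (N : ℝ) ^ (d + 1)) :
    ∃ E, Tendsto (fun N : ℕ => f N / (N : ℝ) ^ d) atTop (𝓝 E) := by
  have hdeg : P.degree ≤ (X ^ d : ℝ[X]).degree := by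
    by_contra! hlt
    have hle : (X ^ (d + 1) : ℝ[X]).degree ≤ P.degree := by
      rw [degree_X_pow] at hlt ⊢
      exact Nat.WithBot.add_one_le_of_lt hlt
    have hbig : (fun N : ℕ => (N : ℝ) ^ (d + 1)) =O[atTop] f := by
      refine ((isBigO_atTop_of_degree_le _ _ hle).comp_tendsto
        (tendsto_natCast_atTop_atTop (R := ℝ))).congr' (.of_forall fun N => ?_)
        (hP.mono fun N h => h.symm)
      simp
    refine isLittleO_irrefl ?_ (hbig.trans_isLittleO hf)
    exact (eventually_gt_atTop 0).frequently.mono fun N hN => by positivity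
  have hlim : ∃ E, Tendsto (fun x => P.eval x / (X ^ d : ℝ[X]).eval x) atTop (𝓝 E) :=
    hdeg.lt_or_eq.elim (fun h => ⟨_, div_tendsto_atTop_zero_of_degree_lt _ _ h⟩)
      fun h => ⟨_, div_tendsto_atTop_leadingCoeff_div_of_degree_eq _ _ h⟩
  obtain ⟨E, hE⟩ := hlim
  refine ⟨E, (hE.comp tendsto_natCast_atTop_atTop).congr' ?_⟩
  filter_upwards [hP] with N hN
  simp [hN]

end EventuallyPolynomial

section Growth

theorem exists_le_of_fg_of_iSup_eq_top {k M : Type*} [Semiring k] [AddCommMonoid M] [Module k M]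
    {F : ℕ → Submodule k M} (hF : Monotone F) (htop : ⨆ n, F n = ⊤) {W : Submodule k M}
    (hW : W.FG) : ∃ n, W ≤ F n := by
  obtain ⟨_, ⟨n, rfl⟩, hn⟩ := (CompleteLattice.isCompactElement_iff_le_of_directed_sSup_le _ W).1
    ((Submodule.fg_iff_compact W).1 hW) (Set.range F) (Set.range_nonempty F)
    hF.directed_le.directedOn_range (le_top.trans_eq htop.symm)
  exact ⟨n, hn⟩

theorem finrank_mul_le_finrank_mul_finrank {k A : Type*} [Field k] [Ring A] [Algebra k A]
    (V W : Submodule k A) [Module.Finite k V] [Module.Finite k W] :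
    finrank k ↥(V * W) ≤ finrank k V * finrank k W := by
  rw [← finrank_tensorProduct, ← Submodule.mulMap_range]
  exact LinearMap.finrank_range_le _

theorem ringKrullDim_eq_of_isIntegral_of_faithfulSMul (P A : Type*) [CommRing P] [CommRing A]
    [Algebra P A] [Algebra.IsIntegral P A] [FaithfulSMul P A] :
    ringKrullDim A = ringKrullDim P := by
  apply le_antisymm
  · exact Order.krullDim_le_of_strictMono (PrimeSpectrum.comap (algebraMap P A))
      fun _ _ => Ideal.IsIntegral.comap_lt_comap (R := P)
  · refine iSup_le fun l => ?_
    obtain ⟨Q, hprime, hover⟩ := (Ideal.nonempty_primesOver (R := P) (S := A) l.head.asIdeal).some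
    obtain ⟨L, hL, -⟩ := Ideal.exists_ltSeries_of_hasGoingUp (S := A) l Q
    exact hL ▸ Order.LTSeries.length_le_krullDim L

open scoped Pointwise in
theorem nsmul_setOf_forall_le_one (s n : ℕ) :
    n • {m : Fin s →₀ ℕ | ∀ i, m i ≤ 1} = {m | ∀ i, m i ≤ n} := by
  induction n with
  | zero =>
    ext m
    simp [Finsupp.ext_iff, Set.mem_zero]
  | succ n ih =>
    rw [succ_nsmul, ih]
    ext m
    constructor
    · rintro ⟨a, ha, b, hb, rfl⟩ i
      exact add_le_add (ha i) (hb i)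
    · intro hm
      refine ⟨m.mapRange (· - 1) (by simp), fun i => ?_, m.mapRange (min · 1) (by simp),
        fun i => ?_, ?_⟩
      · exact Nat.sub_le_of_le_add (hm i)
      · exact min_le_right _ _
      · ext i
        exact Nat.sub_add_min_cancel (m i) 1

section MvPolynomial

variable (k : Type*) [CommSemiring k] (s : ℕ)

theorem restrictDegree_one_pow (n : ℕ) :
    MvPolynomial.restrictDegree (Fin s) k 1 ^ n = MvPolynomial.restrictDegree (Fin s) k n := by
  rw [MvPolynomial.restrictDegree, ← MvPolynomial.restrictSupport_nsmul,
    nsmul_setOf_forall_le_one, MvPolynomial.restrictDegree]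

theorem iSup_restrictDegree_eq_top : ⨆ n, MvPolynomial.restrictDegree (Fin s) k n = ⊤ :=
  eq_top_iff.2 fun p _ => Submodule.mem_iSup_of_mem p.totalDegree
    (MvPolynomial.restrictTotalDegree_le_restrictDegree _ _ _
      ((MvPolynomial.mem_restrictTotalDegree _ _ _).2 le_rfl))

end MvPolynomial

theorem finrank_restrictDegree (k : Type*) [CommRing k] [Nontrivial k] (s n : ℕ) :
    finrank k (MvPolynomial.restrictDegree (Fin s) k n) = (n + 1) ^ s := by
  let box : {m : Fin s →₀ ℕ | ∀ i, m i ≤ n} ≃ (Fin s → Set.Iic n) :=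
    (Finsupp.equivFunOnFinite.subtypeEquiv (q := fun f => ∀ i, f i ∈ Set.Iic n)
      fun f => Iff.rfl).trans Equiv.subtypePiEquivPi
  rw [MvPolynomial.restrictDegree,
    finrank_eq_nat_card_basis (MvPolynomial.basisRestrictSupport k _), Nat.card_congr box]
  simp

section CommRing

variable {k A : Type*} [CommRing k] [CommRing A] [Algebra k A] {V : Submodule k A}

theorem finiteType_of_iSup_pow_eq_top (hV : V.FG) (htop : ⨆ n, V ^ n = ⊤) :
    Algebra.FiniteType k A := by
  obtain ⟨t, rfl⟩ := hV
  refine ⟨⟨t, ?_⟩⟩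
  have hle (n : ℕ) :
      Submodule.span k t ^ n ≤ Subalgebra.toSubmodule (Algebra.adjoin k (t : Set A)) := by
    induction n with
    | zero =>
      rw [pow_zero, Submodule.one_le]
      exact one_mem (Algebra.adjoin k (t : Set A))
    | succ n ih =>
      rw [pow_succ]
      exact Submodule.mul_le.2 fun a ha b hb =>
        mul_mem (S := Subalgebra k A) (ih ha) (Algebra.span_le_adjoin k (t : Set A) hb)
  rw [← Algebra.toSubmodule_eq_top, eq_top_iff, ← htop]
  exact iSup_le hle

theorem exists_range_mul_span_eq_top_of_finite {P : Type*} [CommRing P] [Algebra k P]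
    (g : P →ₐ[k] A) (hg : g.Finite) :
    ∃ t : Finset A, LinearMap.range g.toLinearMap * Submodule.span k (t : Set A) = ⊤ := by
  algebraize [g.toRingHom]
  have : Module.Finite P A := hg
  obtain ⟨t, ht⟩ := Module.Finite.fg_top (R := P) (M := A)
  refine ⟨t, eq_top_iff.2 fun a _ => ?_⟩
  have ha : a ∈ Submodule.span P (t : Set A) := ht ▸ Submodule.mem_top
  obtain ⟨c, -, rfl⟩ := Submodule.mem_span_finset.1 ha
  refine Submodule.sum_mem _ fun b hb => ?_
  rw [Algebra.smul_def]
  exact Submodule.mul_mem_mul ⟨c b, rfl⟩ (Submodule.subset_span hb)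

theorem exists_pow_mul_le_pow_mul {Q W : Submodule k A} (hQ : 1 ≤ Q)
    (htop : ⨆ n, Q ^ n * W = ⊤) (hVW : (V * W).FG) :
    ∃ m, ∀ n, V ^ n * W ≤ Q ^ (m * n) * W := by
  obtain ⟨m, hm⟩ := exists_le_of_fg_of_iSup_eq_top
    (fun _ _ h => mul_le_mul_left (pow_right_monotone hQ h) W) htop hVW
  refine ⟨m, fun n => ?_⟩
  induction n with
  | zero => simp
  | succ n ih =>
    calc V ^ (n + 1) * W = V ^ n * W * V := by ring
      _ ≤ Q ^ (m * n) * W * V := by gcongr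
      _ = Q ^ (m * n) * (V * W) := by ring
      _ ≤ Q ^ (m * n) * (Q ^ m * W) := by gcongr
      _ = Q ^ (m * (n + 1)) * W := by ring

end CommRing

variable {k A : Type*} [Field k] [CommRing A] [Algebra k A] {V : Submodule k A} {s : ℕ}

theorem exists_pow_le_finrank_pow_of_injective (h1 : 1 ≤ V) (hV : V.FG) (htop : ⨆ n, V ^ n = ⊤)
    (g : MvPolynomial (Fin s) k →ₐ[k] A) (hg : Function.Injective g) :
    ∃ m, ∀ n, (n + 1) ^ s ≤ finrank k ↥(V ^ (m * n)) := by
  have hfg : (MvPolynomial.restrictDegree (Fin s) k 1).FG := Module.Finite.iff_fg.1 inferInstance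
  obtain ⟨m, hm⟩ := exists_le_of_fg_of_iSup_eq_top (pow_right_monotone h1) htop
    (hfg.map g.toLinearMap)
  refine ⟨m, fun n => ?_⟩
  have hle : (MvPolynomial.restrictDegree (Fin s) k n).map g.toLinearMap ≤ V ^ (m * n) := by
    rw [← restrictDegree_one_pow, Submodule.map_pow, pow_mul]
    exact pow_le_pow_left' hm n
  have : Module.Finite k ↥(V ^ (m * n)) := Module.Finite.iff_fg.2 (hV.pow _)
  rw [← finrank_restrictDegree k s n, (Submodule.equivMapOfInjective g.toLinearMap hg _).finrank_eq]
  exact Submodule.finrank_mono hle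

theorem exists_finrank_pow_le_of_finite (hV : V.FG) (g : MvPolynomial (Fin s) k →ₐ[k] A)
    (hg : g.Finite) : ∃ m C, ∀ n, finrank k ↥(V ^ n) ≤ (m * n + 1) ^ s * C := by
  obtain ⟨t, ht⟩ := exists_range_mul_span_eq_top_of_finite g hg
  let Q := (MvPolynomial.restrictDegree (Fin s) k 1).map g.toLinearMap
  let W := Submodule.span k (insert (1 : A) (t : Set A))
  have hQ (n : ℕ) : Q ^ n = (MvPolynomial.restrictDegree (Fin s) k n).map g.toLinearMap := by
    rw [← restrictDegree_one_pow, Submodule.map_pow]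
  have hQ1 : 1 ≤ Q :=
    Submodule.one_le.2 ⟨1, by simp [MvPolynomial.mem_restrictDegree], map_one g⟩
  have hW1 : 1 ≤ W := Submodule.one_le.2 (Submodule.subset_span (Set.mem_insert _ _))
  have hWfg : W.FG := Submodule.fg_span (t.finite_toSet.insert 1)
  have htop : ⨆ n, Q ^ n * W = ⊤ := by
    simp_rw [hQ]
    rw [← Submodule.iSup_mul, ← Submodule.map_iSup, iSup_restrictDegree_eq_top, Submodule.map_top,
      eq_top_iff, ← ht]
    exact mul_le_mul_right (Submodule.span_mono (Set.subset_insert _ _)) _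
  obtain ⟨m, hle⟩ := exists_pow_mul_le_pow_mul hQ1 htop (hV.mul hWfg)
  have hWfin : Module.Finite k W := Module.Finite.iff_fg.2 hWfg
  refine ⟨m, finrank k W, fun n => ?_⟩
  have hQfin : Module.Finite k ↥(Q ^ (m * n)) := by
    rw [hQ]
    infer_instance
  have hQWfin : Module.Finite k ↥(Q ^ (m * n) * W) :=
    Module.Finite.iff_fg.2 ((Module.Finite.iff_fg.1 hQfin).mul hWfg)
  calc finrank k ↥(V ^ n) ≤ finrank k ↥(Q ^ (m * n) * W) :=
        Submodule.finrank_mono ((le_mul_of_one_le_right' hW1).trans (hle n))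
    _ ≤ finrank k ↥(Q ^ (m * n)) * finrank k W := finrank_mul_le_finrank_mul_finrank _ _
    _ ≤ (m * n + 1) ^ s * finrank k W := by
      gcongr
      rw [hQ, ← finrank_restrictDegree k s]
      exact Submodule.finrank_map_le _ _

theorem ringKrullDim_eq_of_finite_of_injective (g : MvPolynomial (Fin s) k →ₐ[k] A)
    (hfin : g.Finite) (hinj : Function.Injective g) : ringKrullDim A = s := by
  algebraize [g.toRingHom]
  have : Module.Finite (MvPolynomial (Fin s) k) A := hfin
  have : FaithfulSMul (MvPolynomial (Fin s) k) A :=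
    (faithfulSMul_iff_algebraMap_injective _ _).2 hinj
  rw [ringKrullDim_eq_of_isIntegral_of_faithfulSMul (MvPolynomial (Fin s) k) A,
    MvPolynomial.ringKrullDim_of_isNoetherianRing]
  simp

theorem exists_ringKrullDim_eq_and_isTheta_finrank_pow [Nontrivial A] (h1 : 1 ≤ V) (hV : V.FG)
    (htop : ⨆ n, V ^ n = ⊤) :
    ∃ s : ℕ, ringKrullDim A = s ∧
      (fun n : ℕ => (finrank k ↥(V ^ n) : ℝ)) =Θ[atTop] fun n => (n : ℝ) ^ s := by
  have hft := finiteType_of_iSup_pow_eq_top hV htop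
  obtain ⟨s, g, hinj, hfin⟩ := exists_finite_inj_algHom_of_fg k A
  obtain ⟨m, C, hupper⟩ := exists_finrank_pow_le_of_finite hV g hfin
  obtain ⟨l, hlower⟩ := exists_pow_le_finrank_pow_of_injective h1 hV htop g hinj
  refine ⟨s, ringKrullDim_eq_of_finite_of_injective g hfin hinj,
    IsBigO.of_bound ((m + 1) ^ s * C : ℕ) ?_, IsBigO.of_bound ((l + 1) ^ s : ℕ) ?_⟩
  · filter_upwards [eventually_ge_atTop 1] with n hn
    simp only [norm_pow, Real.norm_natCast]
    norm_cast
    calc finrank k ↥(V ^ n) ≤ (m * n + 1) ^ s * C := hupper n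
      _ ≤ ((m + 1) * n) ^ s * C := by gcongr; linarith
      _ = (m + 1) ^ s * C * n ^ s := by rw [mul_pow]; ring
  · refine .of_forall fun n => ?_
    simp only [norm_pow, Real.norm_natCast]
    norm_cast
    have hfinV : Module.Finite k ↥(V ^ n) := Module.Finite.iff_fg.2 (hV.pow n)
    have hmono : V ^ (l * (n / (l + 1))) ≤ V ^ n := pow_right_monotone h1 <|
      (Nat.mul_le_mul_right _ l.le_succ).trans (Nat.mul_div_le n (l + 1))
    calc n ^ s ≤ ((l + 1) * (n / (l + 1) + 1)) ^ s := by
          gcongr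
          exact (Nat.lt_mul_div_succ n l.succ_pos).le
      _ = (l + 1) ^ s * (n / (l + 1) + 1) ^ s := mul_pow _ _ _
      _ ≤ (l + 1) ^ s * finrank k ↥(V ^ n) := by
          gcongr
          exact (hlower _).trans (Submodule.finrank_mono hmono)

theorem isLittleO_natCast_pow_iff {s d : ℕ} :
    (fun n : ℕ => (n : ℝ) ^ s) =o[atTop] (fun n => (n : ℝ) ^ d) ↔ s < d := by
  refine ⟨fun h => ?_, fun h => (isLittleO_pow_pow_atTop_of_lt h).comp_tendsto
    (tendsto_natCast_atTop_atTop (R := ℝ))⟩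
  by_contra! hle
  have hO : (fun n : ℕ => (n : ℝ) ^ d) =O[atTop] fun n => (n : ℝ) ^ s := by
    refine IsBigO.of_bound' ((eventually_ge_atTop 1).mono fun n hn => ?_)
    simp only [norm_pow, Real.norm_natCast]
    exact pow_le_pow_right₀ (mod_cast hn) hle
  refine isLittleO_irrefl ?_ (hO.trans_isLittleO h)
  exact (eventually_gt_atTop 0).frequently.mono fun n hn => by positivity

theorem ringKrullDim_lt_iff_isLittleO_finrank_pow (h1 : 1 ≤ V) (hV : V.FG)
    (htop : ⨆ n, V ^ n = ⊤) (d : ℕ) :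
    ringKrullDim A < d ↔
      (fun n : ℕ => (finrank k ↥(V ^ n) : ℝ)) =o[atTop] fun n => (n : ℝ) ^ d := by
  cases subsingleton_or_nontrivial A
  · have hzero (n : ℕ) : finrank k ↥(V ^ n) = 0 := finrank_zero_of_subsingleton
    simp [ringKrullDim_eq_bot_of_subsingleton, hzero]
  · obtain ⟨s, hdim, hgrowth⟩ := exists_ringKrullDim_eq_and_isTheta_finrank_pow h1 hV htop
    rw [hdim, hgrowth.isLittleO_congr_left, isLittleO_natCast_pow_iff, Nat.cast_lt]

end Growth

section Graded

theorem one_sup_pow_succ {k A : Type*} [CommSemiring k] [CommSemiring A] [Algebra k A]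
    (V : Submodule k A) (n : ℕ) : (1 ⊔ V) ^ (n + 1) = (1 ⊔ V) ^ n ⊔ V ^ (n + 1) := by
  refine le_antisymm ?_ (sup_le (pow_right_monotone le_sup_left n.le_succ)
    (pow_le_pow_left' le_sup_right _))
  induction n with
  | zero => simp
  | succ n ih =>
    calc (1 ⊔ V) ^ (n + 2) = (1 ⊔ V) ^ (n + 1) * (1 ⊔ V) := pow_succ _ _
      _ ≤ ((1 ⊔ V) ^ n ⊔ V ^ (n + 1)) * (1 ⊔ V) := mul_le_mul_left ih _
      _ = (1 ⊔ V) ^ (n + 1) ⊔ (V ^ (n + 1) ⊔ V ^ (n + 2)) := by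
        rw [Submodule.sup_mul, ← pow_succ, Submodule.mul_sup, mul_one, ← pow_succ]
      _ ≤ (1 ⊔ V) ^ (n + 1) ⊔ V ^ (n + 2) :=
        sup_le le_sup_left (sup_le_sup_right (pow_le_pow_left' le_sup_right _) _)

variable {k A : Type*} [Field k] [CommRing A] [Algebra k A] {V : Submodule k A}

theorem fg_one_sup (hV : V.FG) : (1 ⊔ V).FG :=
  Submodule.FG.sup (pow_zero V ▸ hV.pow 0) hV

theorem finrank_one_sup_pow (hV : V.FG) (hind : iSupIndep (V ^ ·)) (n : ℕ) :
    finrank k ↥((1 ⊔ V) ^ n) = ∑ i ∈ Finset.range (n + 1), finrank k ↥(V ^ i) := by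
  induction n with
  | zero => rw [zero_add, Finset.sum_range_one, pow_zero, pow_zero]
  | succ n ih =>
    have hle (m : ℕ) (hm : m ≤ n) : (1 ⊔ V) ^ m ≤ ⨆ (i) (_ : i ≠ n + 1), V ^ i := by
      induction m with
      | zero => exact le_iSup₂_of_le 0 (Nat.succ_ne_zero n).symm (by simp)
      | succ m ihm =>
        rw [one_sup_pow_succ]
        exact sup_le (ihm (by omega)) (le_iSup₂_of_le (m + 1) (by omega) le_rfl)
    have hdisj := (hind (n + 1)).symm.mono_left (hle n le_rfl)
    have hfin (m : ℕ) : Module.Finite k ↥(V ^ m) := Module.Finite.iff_fg.2 (hV.pow m)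
    have hfin' : Module.Finite k ↥((1 ⊔ V) ^ n) :=
      Module.Finite.iff_fg.2 ((fg_one_sup hV).pow n)
    rw [Finset.sum_range_succ, ← ih, one_sup_pow_succ, ← Submodule.finrank_sup_add_finrank_inf_eq,
      hdisj.eq_bot, finrank_bot, add_zero]

theorem ringKrullDim_lt_iff_isLittleO_sum_finrank_pow (hV : V.FG)
    (hint : DirectSum.IsInternal (V ^ ·)) (d : ℕ) :
    ringKrullDim A < d ↔
      (fun n : ℕ => ∑ i ∈ Finset.range (n + 1), (finrank k ↥(V ^ i) : ℝ)) =o[atTop]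
        fun n => (n : ℝ) ^ d := by
  have htop : ⨆ n, (1 ⊔ V) ^ n = ⊤ :=
    eq_top_iff.2 (hint.submodule_iSup_eq_top.symm.trans_le
      (iSup_mono fun n => pow_le_pow_left' le_sup_right n))
  rw [ringKrullDim_lt_iff_isLittleO_finrank_pow le_sup_left (fg_one_sup hV) htop]
  simp only [finrank_one_sup_pow hV hint.submodule_iSupIndep, Nat.cast_sum]

end Graded

section FiberDimension

variable {R S : Type*} [CommRing R] [CommRing S] [Algebra R S]

theorem fg_baseChange {M : Type*} [AddCommGroup M] [Module R M] (K : Type*) [CommRing K]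
    [Algebra R K] {N : Submodule R M} (hN : N.FG) : (N.baseChange K).FG := by
  obtain ⟨t, ht, rfl⟩ := Submodule.fg_def.1 hN
  rw [Submodule.baseChange_span]
  exact Submodule.fg_span (ht.image _)

theorem baseChange_pow (K : Type*) [CommRing K] [Algebra R K] {N : Submodule R S} (hN : N.FG)
    (n : ℕ) : (N ^ n).baseChange K = N.baseChange K ^ n := by
  obtain ⟨r, x, rfl⟩ := Submodule.fg_iff_exists_fin_generating_family.1 hN
  rw [span_range_pow_eq_span_evalMonomial, ← span_evalMonomial_one_tmul,
    ← span_range_pow_eq_span_evalMonomial, Submodule.baseChange_span, ← Set.range_comp]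
  rfl

variable (𝒜 : ℕ → Submodule R S) [DirectSum.Decomposition 𝒜]

theorem ringKrullDim_fiber_lt_iff (hfg : (𝒜 1).FG) (hpow : ∀ n, 𝒜 n = 𝒜 1 ^ n)
    (p : PrimeSpectrum R) (d : ℕ) :
    ringKrullDim (p.asIdeal.ResidueField ⊗[R] S) < d ↔
      (fun n : ℕ => ∑ i ∈ Finset.range (n + 1), (fiberHilbertFunction 𝒜 p i : ℝ)) =o[atTop]
        fun n => (n : ℝ) ^ d := by
  let κ := p.asIdeal.ResidueField
  have hbase (n : ℕ) : (𝒜 n).baseChange κ = (𝒜 1).baseChange κ ^ n := by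
    rw [hpow, baseChange_pow κ hfg]
  have hint : DirectSum.IsInternal ((𝒜 1).baseChange κ ^ ·) := by
    simp_rw [← hbase]
    exact DirectSum.Decomposition.isInternal _
  have hH (n : ℕ) : fiberHilbertFunction 𝒜 p n = finrank κ ↥((𝒜 1).baseChange κ ^ n) := by
    rw [← hbase]
    exact finrank_tensorProduct_eq_finrank_baseChange 𝒜 κ n
  rw [ringKrullDim_lt_iff_isLittleO_sum_finrank_pow (fg_baseChange κ hfg) hint]
  simp only [hH]

end FiberDimension

section Multiplicity

/-- The sum of the first `N` values of `h` normalized by `d! / N ^ d`, whose limit is the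
multiplicity in dimension `d`. -/
noncomputable def normalizedSum (d : ℕ) (h : ℕ → ℕ) (N : ℕ) : ℝ :=
  (d.factorial : ℝ) * (∑ i ∈ Finset.range N, (h i : ℝ)) / (N : ℝ) ^ d

/-- `E` is the multiplicity of a `d`-dimensional standard graded algebra with Hilbert function
`h`, expressed as a limit so that no Hilbert polynomial has to be mentioned. -/
def HasMultiplicity (d : ℕ) (h : ℕ → ℕ) (E : ℝ) : Prop :=
  Tendsto (normalizedSum d h) atTop (𝓝 E)

theorem normalizedSum_mono {d : ℕ} {h h' : ℕ → ℕ} (hle : h ≤ h') (N : ℕ) :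
    normalizedSum d h N ≤ normalizedSum d h' N := by
  unfold normalizedSum
  gcongr with i
  exact hle i

theorem HasMultiplicity.le_iff {d : ℕ} {h : ℕ → ℕ} {E e : ℝ} (hE : HasMultiplicity d h E) :
    e ≤ E ↔ ∀ c < e, ∀ᶠ N in atTop, c < normalizedSum d h N := by
  refine ⟨fun he c hc => hE.eventually_const_lt (hc.trans_le he), fun hc => ?_⟩
  exact le_of_forall_lt_imp_le_of_dense fun c hce =>
    ge_of_tendsto hE ((hc c hce).mono fun N hN => hN.le)

variable {R S : Type*} [CommRing R] [CommRing S] [Algebra R S] (𝒜 : ℕ → Submodule R S)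
  [DirectSum.Decomposition 𝒜]

theorem exists_hasMultiplicity_fiberHilbertFunction (hfg : (𝒜 1).FG)
    (hpow : ∀ n, 𝒜 n = 𝒜 1 ^ n) {p : PrimeSpectrum R} {d : ℕ}
    (hp : ringKrullDim (p.asIdeal.ResidueField ⊗[R] S) = d) :
    ∃ E, HasMultiplicity d (fiberHilbertFunction 𝒜 p) E := by
  obtain ⟨r, x, hx⟩ := exists_fiberHilbertFunction_eq_standardCount 𝒜 hfg hpow
  have hupper : IsUpperSet (fiberLeadingExponents x p) := isUpperSet_leadingExponents _
  obtain ⟨q, hq⟩ := exists_standardSeries_mul_one_sub_pow_eq hupper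
  obtain ⟨P, hP⟩ := exists_eventually_sum_range_eq_eval hq
  rw [← hx p] at hP
  have hgrowth := (ringKrullDim_fiber_lt_iff 𝒜 hfg hpow p (d + 1)).1 (hp ▸ mod_cast d.lt_succ_self)
  have hsmall : (fun N : ℕ => ∑ i ∈ Finset.range N, (fiberHilbertFunction 𝒜 p i : ℝ)) =o[atTop]
      fun N => (N : ℝ) ^ (d + 1) := by
    refine IsBigO.trans_isLittleO (.of_norm_le fun N => ?_) hgrowth
    rw [Real.norm_of_nonneg (by positivity)]
    exact Finset.sum_le_sum_of_subset_of_nonneg (Finset.range_mono N.le_succ)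
      fun _ _ _ => Nat.cast_nonneg _
  obtain ⟨E, hE⟩ := exists_tendsto_div_pow_of_isLittleO hP hsmall
  exact ⟨d.factorial * E, (hE.const_mul _).congr fun N => (mul_div_assoc _ _ _).symm⟩

variable [NoetherianSpace (PrimeSpectrum R)]

theorem isClosed_setOf_le_ringKrullDim_fiber (hfg : (𝒜 1).FG) (hpow : ∀ n, 𝒜 n = 𝒜 1 ^ n)
    (d : ℕ) :
    IsClosed {p : PrimeSpectrum R | d ≤ ringKrullDim (p.asIdeal.ResidueField ⊗[R] S)} := by
  let T : Set (ℕ → ℕ) := {h | ¬ (fun n : ℕ => ∑ i ∈ Finset.range (n + 1), (h i : ℝ)) =o[atTop]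
    fun n => (n : ℝ) ^ d}
  have hT : IsUpperSet T := by
    refine fun h h' hle hh hh' => hh (IsBigO.trans_isLittleO (.of_norm_le fun n => ?_) hh')
    rw [Real.norm_of_nonneg (by positivity)]
    exact Finset.sum_le_sum fun i _ => Nat.cast_le.2 (hle i)
  convert isClosed_preimage_fiberHilbertFunction 𝒜 hfg hpow hT using 1
  ext p
  exact not_lt.symm.trans (ringKrullDim_fiber_lt_iff 𝒜 hfg hpow p d).not

theorem isClosed_setOf_le_multiplicity_fiber (hfg : (𝒜 1).FG) (hpow : ∀ n, 𝒜 n = 𝒜 1 ^ n)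
    (d : ℕ) (e : ℝ) :
    IsClosed {p : {q : PrimeSpectrum R // ringKrullDim (q.asIdeal.ResidueField ⊗[R] S) = d} |
      ∃ E, HasMultiplicity d (fiberHilbertFunction 𝒜 p) E ∧ e ≤ E} := by
  let T : Set (ℕ → ℕ) := {h | ∀ c < e, ∀ᶠ N in atTop, c < normalizedSum d h N}
  have hT : IsUpperSet T := fun h h' hle hh c hc =>
    (hh c hc).mono fun N hN => hN.trans_le (normalizedSum_mono hle N)
  convert (isClosed_preimage_fiberHilbertFunction 𝒜 hfg hpow hT).preimage continuous_subtype_val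
    using 1
  ext p
  obtain ⟨E, hE⟩ := exists_hasMultiplicity_fiberHilbertFunction 𝒜 hfg hpow p.2
  exact ⟨fun ⟨_, hE', he⟩ => hE'.le_iff.1 he, fun h => ⟨E, hE, hE.le_iff.2 h⟩⟩

end Multiplicity

theorem eq_pow_of_succ_eq_mul {M : Type*} [Monoid M] {a : ℕ → M} (h0 : a 0 = 1)
    (hsucc : ∀ n, a (n + 1) = a 1 * a n) (n : ℕ) : a n = a 1 ^ n := by
  induction n with
  | zero => rw [h0, pow_zero]
  | succ n ih => rw [hsucc, ih, pow_succ']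

theorem stmt14_general {R S : Type*} [CommRing R] [NoetherianSpace (PrimeSpectrum R)] [CommRing S]
    [Algebra R S] (𝒜 : ℕ → Submodule R S) [DirectSum.Decomposition 𝒜] (hfg : (𝒜 1).FG)
    (hpow : ∀ n, 𝒜 n = 𝒜 1 ^ n) (d : ℕ) (e : ℝ) :
    IsClosed {p : PrimeSpectrum R | d ≤ ringKrullDim (p.asIdeal.ResidueField ⊗[R] S)} ∧
    IsClosed {p : {q : PrimeSpectrum R // ringKrullDim (q.asIdeal.ResidueField ⊗[R] S) = d} |
      ∃ E, HasMultiplicity d (fiberHilbertFunction 𝒜 p) E ∧ e ≤ E} :=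
  ⟨isClosed_setOf_le_ringKrullDim_fiber 𝒜 hfg hpow d,
    isClosed_setOf_le_multiplicity_fiber 𝒜 hfg hpow d e⟩

/-- Let `S` be a standard graded Noetherian algebra over `S₀ = R` with `R` Noetherian: `S` carries
a grading `𝒜` with `𝒜 0 = R·1`, `𝒜 1` a finitely generated `R`-module, and `𝒜 (n+1) = 𝒜 1 · 𝒜 n`.
For a prime `p` of `R` let `κ(p)` be the residue field.  Then, for nonnegative integers `d`, `e`:
(1) the set `X(S; ≥ d) = { p : dim (S ⊗_R κ(p)) ≥ d }` is a closed subset of `Spec R`; and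
(2) the set `X(S; = d, ≥ e) = { p : dim (S ⊗_R κ(p)) = d and e(S ⊗_R κ(p)) ≥ e }` is a closed
subset of `X(S; = d)` (with its subspace topology).  Here the multiplicity of the `d`-dimensional
standard graded algebra `S ⊗_R κ(p)` is read off from its Hilbert function
`H(n) = dim_{κ(p)} (κ(p) ⊗_R 𝒜 n)` as the limit of `d!·(∑_{i<N} H(i))/N^d`. -/
theorem stmt14 {R S : Type*} [CommRing R] [IsNoetherianRing R] [CommRing S] [Algebra R S]
    (𝒜 : ℕ → Submodule R S) [GradedAlgebra 𝒜]
    (h0 : 𝒜 0 = (1 : Submodule R S)) (hinj : Function.Injective (algebraMap R S))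
    (hfg1 : Module.Finite R (𝒜 1))
    (hstd : ∀ n : ℕ, 𝒜 (n + 1) = 𝒜 1 * 𝒜 n)
    (d e : ℕ) :
    -- the fiber dimension over `p`
    let fibdim : PrimeSpectrum R → WithBot ℕ∞ := fun p =>
      ringKrullDim (TensorProduct R
        (IsLocalRing.ResidueField (Localization.AtPrime p.asIdeal)) S)
    -- the Hilbert function of the fiber over `p`
    let H : PrimeSpectrum R → ℕ → ℕ := fun p n =>
      Module.finrank (IsLocalRing.ResidueField (Localization.AtPrime p.asIdeal))
        (TensorProduct R (IsLocalRing.ResidueField (Localization.AtPrime p.asIdeal)) (𝒜 n))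
    -- `e(S ⊗ κ(p)) ≥ e`, via the Hilbert–Samuel limit in dimension `d`
    let multGE : PrimeSpectrum R → Prop := fun p =>
      ∃ E : ℝ, Tendsto (fun N : ℕ =>
          (Nat.factorial d : ℝ) * (∑ i ∈ Finset.range N, (H p i : ℝ)) / (N : ℝ) ^ d)
        atTop (nhds E) ∧ (e : ℝ) ≤ E
    IsClosed {p : PrimeSpectrum R | (d : WithBot ℕ∞) ≤ fibdim p} ∧
    IsClosed {p : {q : PrimeSpectrum R // fibdim q = (d : WithBot ℕ∞)} | multGE p.1} :=
  stmt14_general 𝒜 (Module.Finite.iff_fg.1 hfg1) (eq_pow_of_succ_eq_mul h0 hstd) d e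
end
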